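/- arXiv:2404.15613 — 5 statements merged into one kernel-verified Lean document; each statement's English description precedes it below -/
import Mathlib

section
/- Let X be a finite type with |X| = N ≥ 1, let δ be a real number with 0 < δ < 1, and let Z be a finite set of functions from X to X. Define K = {x ∈ X : |{g(x) : g ∈ Z}| ≤ (1−δ)·N}. Then, as real numbers, |Z| ≤ N^N · (1−δ)^{|K|}. -/
open Classical in
/-- if `K` is the set of "bad" points `x` where the image of the
evaluation map `g ↦ g x` on `Z` has size at most `(1-δ)·N`, then
`|Z| ≤ N^N · (1-δ)^{|K|}`. -/
theorem card_funset_le_of_bad_points {X : Type*} [Fintype X] [DecidableEq X]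
    (N : ℕ) (hN : Fintype.card X = N) (hN1 : 1 ≤ N)
    (δ : ℝ) (hδ0 : 0 < δ) (hδ1 : δ < 1)
    (Z : Finset (X → X))
    (K : Finset X)
    (hK : K = Finset.univ.filter
      (fun x : X => ((Z.image fun g => g x).card : ℝ) ≤ (1 - δ) * N)) :
    (Z.card : ℝ) ≤ (N : ℝ) ^ N * (1 - δ) ^ K.card := by
  have h1 : Z.card ≤ ∏ x : X, (Z.image fun g => g x).card := by
    rw [← Fintype.card_piFinset]
    apply Finset.card_le_card
    intro g hg
    rw [Fintype.mem_piFinset]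
    intro x
    exact Finset.mem_image_of_mem (fun g : X → X => g x) hg
  have h2 : (Z.card : ℝ) ≤ ∏ x : X, ((Z.image fun g => g x).card : ℝ) := by
    exact_mod_cast h1
  have h3 : ∏ x : X, ((Z.image fun g => g x).card : ℝ)
      ≤ ∏ x : X, ((N : ℝ) * (if x ∈ K then (1 - δ) else 1)) := by
    apply Finset.prod_le_prod
    · intro x _
      positivity
    · intro x _
      by_cases hx : x ∈ K
      · rw [if_pos hx, mul_comm]
        rw [hK] at hx
        exact (Finset.mem_filter.mp hx).2
      · rw [if_neg hx, mul_one]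
        have := Finset.card_le_univ (Z.image fun g => g x)
        rw [hN] at this
        exact_mod_cast this
  refine h2.trans (h3.trans (le_of_eq ?_))
  rw [Finset.prod_mul_distrib, Finset.prod_const, Finset.card_univ, hN, Finset.prod_ite_mem,
    Finset.univ_inter, Finset.prod_const]
end

section
/- Let n ≥ 1, N = 2^n, and X = {0,1}^n with bitwise XOR ⊕. Let δ be a real number with 0 < δ < 1, let f : X → Bool satisfy |f⁻¹(true)| ≥ δ·N, and let Z be a nonempty finite set of functions X → X. Define K = {x ∈ X : |{g(x) : g ∈ Z}| ≤ (1−δ)·N}. Then (1) as real numbers, (1−δ)^{|K|} ≥ |Z| / N^N, and (2) for every x ∈ X \ K and every y ∈ X there exists g ∈ Z with f(g(x) ⊕ y) = true. -/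
open Classical in
/-- Lemma 3.2: the collection of all functions `{0,1}^n → {0,1}^n`
is well-mixed for any `f` with `|f⁻¹(true)| ≥ δ·2^n`.  With
`K = {x : |Z(x)| ≤ (1-δ)·N}` we have (1) `(1-δ)^{|K|} ≥ |Z| / N^N` and
(2) for every `x ∉ K` and every `y` there is `g ∈ Z` with `f (g x ⊕ y) = true`. -/
theorem well_mixed_all_functions (n : ℕ) (hn : 1 ≤ n)
    (δ : ℝ) (hδ0 : 0 < δ) (hδ1 : δ < 1)
    (f : (Fin n → Bool) → Bool)
    (hf : δ * 2 ^ n ≤ ((Finset.univ.filter fun x : Fin n → Bool => f x = true).card : ℝ))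
    (Z : Finset ((Fin n → Bool) → (Fin n → Bool))) (hZ : Z.Nonempty)
    (K : Finset (Fin n → Bool))
    (hK : K = Finset.univ.filter
      (fun x : Fin n → Bool => ((Z.image fun g => g x).card : ℝ) ≤ (1 - δ) * 2 ^ n)) :
    ((Z.card : ℝ) / ((2 : ℝ) ^ n) ^ (2 ^ n : ℕ) ≤ (1 - δ) ^ K.card) ∧
    (∀ x : Fin n → Bool, x ∉ K → ∀ y : Fin n → Bool,
      ∃ g ∈ Z, f (fun i => xor (g x i) (y i)) = true) := by
  have hN : Fintype.card (Fin n → Bool) = 2 ^ n := by simp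
  constructor
  · rw [div_le_iff₀ (by positivity)]
    have h1 : Z.card ≤ ∏ x : Fin n → Bool, (Z.image fun g => g x).card := by
      rw [← Fintype.card_piFinset]
      apply Finset.card_le_card
      intro g hg
      rw [Fintype.mem_piFinset]
      intro x
      exact Finset.mem_image_of_mem (fun g : (Fin n → Bool) → (Fin n → Bool) => g x) hg
    have h2 : (Z.card : ℝ) ≤ ∏ x : Fin n → Bool, ((Z.image fun g => g x).card : ℝ) := by
      exact_mod_cast h1
    refine h2.trans ?_
    have h3 : ∏ x : Fin n → Bool, ((Z.image fun g => g x).card : ℝ)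
        ≤ ∏ x : Fin n → Bool, ((if x ∈ K then (1 - δ) else 1) * (2 : ℝ) ^ n) := by
      apply Finset.prod_le_prod
      · intro x _
        positivity
      · intro x _
        by_cases hx : x ∈ K
        · rw [if_pos hx]
          rw [hK] at hx
          exact (Finset.mem_filter.mp hx).2
        · rw [if_neg hx, one_mul]
          have h4 := Finset.card_le_univ (Z.image fun g => g x)
          rw [hN] at h4
          exact_mod_cast h4
    refine h3.trans (le_of_eq ?_)
    rw [Finset.prod_mul_distrib, Finset.prod_const, Finset.card_univ, hN,
      Finset.prod_ite_mem, Finset.univ_inter, Finset.prod_const]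
  · intro x hx y
    by_contra hcon
    push Not at hcon
    apply hx
    rw [hK]
    refine Finset.mem_filter.mpr ⟨Finset.mem_univ _, ?_⟩
    have h1 : (Z.image fun g => g x).card
        ≤ (Finset.univ.filter fun x : Fin n → Bool => ¬ f x = true).card := by
      apply Finset.card_le_card_of_injOn (fun z i => xor (z i) (y i))
      · intro z hz
        obtain ⟨g, hg, rfl⟩ := Finset.mem_image.mp (Finset.mem_coe.mp hz)
        exact Finset.mem_coe.mpr (Finset.mem_filter.mpr ⟨Finset.mem_univ _, by simpa using hcon g hg⟩)
      · intro a _ b _ hab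
        funext i
        have := congrFun hab i
        simpa using this
    have h2 := Finset.card_filter_add_card_filter_not (s := (Finset.univ : Finset (Fin n → Bool)))
      (fun x => f x = true)
    rw [Finset.card_univ, hN] at h2
    have h3 : ((Finset.univ.filter fun x : Fin n → Bool => f x = true).card : ℝ)
      + ((Finset.univ.filter fun x : Fin n → Bool => ¬ f x = true).card : ℝ) = 2 ^ n := by
      exact_mod_cast h2
    have h4 : ((Z.image fun g => g x).card : ℝ)
        ≤ ((Finset.univ.filter fun x : Fin n → Bool => ¬ f x = true).card : ℝ) := by
      exact_mod_cast h1
    linarith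
end

section
/- There exists n₀ such that for all n ≥ n₀ the following holds. Let f : {0,1}^n → {0,1} be a non-constant function with |f⁻¹(1)| ≥ 2^n / 4. Then there exists a function g : {0,1}^n → {0,1}^n such that for every real number α with 0 < α < 1 + (log₂ L(f) − 2·log₂ log₂ n)/n, there do NOT exist k ≤ 2^{α·n} Boolean functions h_1, …, h_k : {0,1}^n × {0,1}^n → {0,1}, each with L(h_i) ≤ 2^{(n + log₂ L(f) − α·n − 2·log₂ log₂ n)/2}, whose pointwise AND equals f⊞g. -/
/-- A De Morgan formula over variables indexed by `ι`: leaves are literals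
(`b = true` for `x i`, `b = false` for `¬ x i`), internal gates are binary
AND/OR gates. -/
inductive DMF (ι : Type) : Type
  | leaf (i : ι) (b : Bool) : DMF ι
  | and (φ ψ : DMF ι) : DMF ι
  | or (φ ψ : DMF ι) : DMF ι

namespace DMF

/-- Evaluation of a De Morgan formula on an assignment. -/
def eval {ι : Type} : DMF ι → (ι → Bool) → Bool
  | leaf i b, x => if b then x i else !(x i)
  | and φ ψ, x => φ.eval x && ψ.eval x
  | or φ ψ, x => φ.eval x || ψ.eval x

/-- The size of a formula is its number of leaves. -/
def size {ι : Type} : DMF ι → ℕ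
  | leaf _ _ => 1
  | and φ ψ => φ.size + ψ.size
  | or φ ψ => φ.size + ψ.size

/-- The depth of a formula: maximum number of edges on a root-to-leaf path. -/
def depth {ι : Type} : DMF ι → ℕ
  | leaf _ _ => 0
  | and φ ψ => max φ.depth ψ.depth + 1
  | or φ ψ => max φ.depth ψ.depth + 1

/-- `topAnd φ r` holds iff every gate of `φ` at distance less than `r` from the
root is an AND gate. -/
def topAnd {ι : Type} : DMF ι → ℝ → Prop
  | leaf _ _, _ => True
  | and φ ψ, r => φ.topAnd (r - 1) ∧ ψ.topAnd (r - 1)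
  | or φ ψ, r => r ≤ 0 ∧ φ.topAnd (r - 1) ∧ ψ.topAnd (r - 1)

end DMF

open Classical in
/-- Formula complexity `L(h)`: the minimum number of leaves of a De Morgan
formula computing `h`, with the convention `L(h) = 0` for constant `h`. -/
noncomputable def Lc {ι : Type} (h : (ι → Bool) → Bool) : ℕ :=
  if ∃ c, ∀ x, h x = c then 0
  else sInf {s | ∃ φ : DMF ι, φ.size = s ∧ ∀ x, φ.eval x = h x}

/-- Formula complexity of a Boolean function of two `n`-bit arguments, viewing
the pair of arguments as a single assignment to `2n` variables. -/
noncomputable def Lc2 {n : ℕ} (h : (Fin n → Bool) → (Fin n → Bool) → Bool) : ℕ :=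
  Lc (fun z : (Fin n ⊕ Fin n) → Bool => h (z ∘ Sum.inl) (z ∘ Sum.inr))

/-- The measure `μ(h) = Σ_x L(h^x)` where `h^x = h(x,·)`. -/
noncomputable def mu {n : ℕ} (h : (Fin n → Bool) → (Fin n → Bool) → Bool) : ℕ :=
  ∑ x : Fin n → Bool, Lc (fun y => h x y)

namespace XC

open Finset

lemma Lc_le {ι : Type} {h : (ι → Bool) → Bool} (φ : DMF ι) (hφ : ∀ x, φ.eval x = h x) :
    Lc h ≤ φ.size := by
  unfold Lc
  split_ifs
  · exact Nat.zero_le _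
  · exact Nat.sInf_le ⟨φ, rfl, hφ⟩

def Comp {ι : Type} (h : (ι → Bool) → Bool) : Prop := ∃ φ : DMF ι, ∀ x, φ.eval x = h x

lemma comp_and {ι : Type} {a b : (ι → Bool) → Bool} (ha : Comp a) (hb : Comp b) :
    Comp (fun x => a x && b x) := by
  obtain ⟨φ, hφ⟩ := ha
  obtain ⟨ψ, hψ⟩ := hb
  exact ⟨φ.and ψ, fun x => by simp [DMF.eval, hφ, hψ]⟩

lemma comp_or {ι : Type} {a b : (ι → Bool) → Bool} (ha : Comp a) (hb : Comp b) :
    Comp (fun x => a x || b x) := by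
  obtain ⟨φ, hφ⟩ := ha
  obtain ⟨ψ, hψ⟩ := hb
  exact ⟨φ.or ψ, fun x => by simp [DMF.eval, hφ, hψ]⟩

lemma comp_const {ι : Type} (i : ι) (c : Bool) : Comp (fun _ : ι → Bool => c) := by
  cases c
  · exact ⟨(DMF.leaf i true).and (DMF.leaf i false), fun x => by simp [DMF.eval]⟩
  · exact ⟨(DMF.leaf i true).or (DMF.leaf i false), fun x => by simp [DMF.eval]⟩

open Classical in
lemma comp_point {ι : Type} (i : ι) (a : ι → Bool) (S : Finset ι) :
    Comp (fun x => decide (∀ j ∈ S, x j = a j)) := by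
  induction S using Finset.induction_on with
  | empty => simpa using comp_const i true
  | insert j S _ ih =>
    have : Comp (fun x : ι → Bool => decide (x j = a j)) := by
      refine ⟨DMF.leaf j (a j), fun x => ?_⟩
      cases h : a j <;> cases h' : x j <;> simp [DMF.eval, h']
    convert comp_and this ih using 2
    simp

open Classical in
lemma comp_set {ι : Type} [Fintype ι] (i : ι) (S : Finset (ι → Bool)) :
    Comp (fun x => decide (x ∈ S)) := by
  induction S using Finset.induction_on with
  | empty => simpa using comp_const i false
  | insert a S _ ih =>
    convert comp_or (comp_point i a univ) ih using 2
    simp [funext_iff]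

lemma comp_all {ι : Type} [Fintype ι] (i : ι) (h : (ι → Bool) → Bool) : Comp h := by
  classical
  convert comp_set i (univ.filter fun x => h x = true) using 2
  simp

lemma exists_formula {ι : Type} [Fintype ι] {h : (ι → Bool) → Bool}
    (hc : ¬ ∃ c, ∀ x, h x = c) : ∃ φ : DMF ι, φ.size = Lc h ∧ ∀ x, φ.eval x = h x := by
  have hne : Nonempty ι := by
    by_contra hne
    rw [not_nonempty_iff] at hne
    exact hc ⟨h (fun _ => true), fun x => congrArg h (Subsingleton.elim _ _)⟩
  obtain ⟨i⟩ := hne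
  obtain ⟨φ, hφ⟩ := comp_all i h
  unfold Lc
  rw [if_neg hc]
  exact Nat.sInf_mem (s := {s | ∃ φ : DMF ι, φ.size = s ∧ ∀ x, φ.eval x = h x}) ⟨_, φ, rfl, hφ⟩

lemma Lc_const {ι : Type} {h : (ι → Bool) → Bool} (hc : ∃ c, ∀ x, h x = c) : Lc h = 0 := by
  unfold Lc
  rw [if_pos hc]

lemma size_pos {ι : Type} (φ : DMF ι) : 0 < φ.size := by
  induction φ <;> simp [DMF.size] <;> omega

lemma Lc_and {ι : Type} [Fintype ι] (a b : (ι → Bool) → Bool) :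
    Lc (fun x => a x && b x) ≤ Lc a + Lc b := by
  by_cases ha : ∃ c, ∀ x, a x = c
  · obtain ⟨c, hc⟩ := ha
    cases c
    · simp [hc, Lc_const]
    · simp [hc]
  by_cases hb : ∃ c, ∀ x, b x = c
  · obtain ⟨c, hc⟩ := hb
    cases c
    · simp [hc, Lc_const]
    · simp [hc]
  obtain ⟨φ, h1, h2⟩ := exists_formula ha
  obtain ⟨ψ, h3, h4⟩ := exists_formula hb
  rw [← h1, ← h3]
  exact Lc_le (φ.and ψ) (fun x => by simp [DMF.eval, h2, h4])

lemma Lc_or {ι : Type} [Fintype ι] (a b : (ι → Bool) → Bool) :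
    Lc (fun x => a x || b x) ≤ Lc a + Lc b := by
  by_cases ha : ∃ c, ∀ x, a x = c
  · obtain ⟨c, hc⟩ := ha
    cases c
    · simp [hc]
    · simp [hc, Lc_const]
  by_cases hb : ∃ c, ∀ x, b x = c
  · obtain ⟨c, hc⟩ := hb
    cases c
    · simp [hc]
    · simp [hc, Lc_const]
  obtain ⟨φ, h1, h2⟩ := exists_formula ha
  obtain ⟨ψ, h3, h4⟩ := exists_formula hb
  rw [← h1, ← h3]
  exact Lc_le (φ.or ψ) (fun x => by simp [DMF.eval, h2, h4])

open Classical in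
lemma Lc_forall {ι κ : Type} [Fintype ι] (h : κ → (ι → Bool) → Bool) (S : Finset κ) :
    Lc (fun x => decide (∀ i ∈ S, h i x = true)) ≤ ∑ i ∈ S, Lc (h i) := by
  induction S using Finset.induction_on with
  | empty => simp [Lc_const]
  | insert j S hj ih =>
    rw [Finset.sum_insert hj]
    refine le_trans (le_of_eq ?_) ((Lc_and _ _).trans (Nat.add_le_add_left ih _))
    congr 1
    funext x
    simp

lemma Lc_subst {ι κ : Type} [Fintype ι] [Fintype κ] (σ : (κ → Bool) → (ι → Bool))
    (hσ : ∀ i b, Lc (fun y => (DMF.leaf i b).eval (σ y)) ≤ 1) (h : (ι → Bool) → Bool) :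
    Lc (fun y => h (σ y)) ≤ Lc h := by
  by_cases hc : ∃ c, ∀ x, h x = c
  · obtain ⟨c, hc⟩ := hc
    simp [hc, Lc_const]
  obtain ⟨φ, h1, h2⟩ := exists_formula hc
  rw [← h1]
  simp only [← h2]
  clear h1 h2
  induction φ with
  | leaf i b => exact hσ i b
  | and φ ψ h1 h2 =>
    simp only [DMF.eval, DMF.size]
    exact (Lc_and _ _).trans (Nat.add_le_add h1 h2)
  | or φ ψ h1 h2 =>
    simp only [DMF.eval, DMF.size]
    exact (Lc_or _ _).trans (Nat.add_le_add h1 h2)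

lemma Lc_shift {n : ℕ} (f : (Fin n → Bool) → Bool) (c : Fin n → Bool) :
    Lc f ≤ Lc (fun y => f (fun j => xor (c j) (y j))) := by
  have := Lc_subst (fun y : Fin n → Bool => fun j => xor (c j) (y j)) (fun i b => by
    refine Lc_le (DMF.leaf i (xor (c i) b)) (fun x => ?_)
    cases h : c i <;> cases b <;> cases h' : x i <;> simp [DMF.eval, h, h'])
    (fun y => f (fun j => xor (c j) (y j)))
  simpa using this

lemma Lc_row {n : ℕ} (h : (Fin n → Bool) → (Fin n → Bool) → Bool) (x : Fin n → Bool) :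
    Lc (h x) ≤ Lc2 h := by
  have := Lc_subst (fun y : Fin n → Bool => (Sum.elim x y : Fin n ⊕ Fin n → Bool)) (fun i b => by
    cases i with
    | inl i => exact (Lc_const ⟨if b then x i else !(x i), fun _ => rfl⟩).le.trans zero_le_one
    | inr i => exact Lc_le (DMF.leaf i b) (fun x => rfl))
    (fun z : (Fin n ⊕ Fin n) → Bool => h (z ∘ Sum.inl) (z ∘ Sum.inr))
  simpa [Lc2] using this

/-- Prefix encoding of formulas. -/
def enc {ι : Type} : DMF ι → List ((ι × Bool) ⊕ Bool)
  | DMF.leaf i b => [Sum.inl (i, b)]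
  | DMF.and φ ψ => Sum.inr true :: (enc φ ++ enc ψ)
  | DMF.or φ ψ => Sum.inr false :: (enc φ ++ enc ψ)

lemma enc_length {ι : Type} (φ : DMF ι) : (enc φ).length + 1 = 2 * φ.size := by
  induction φ <;> simp [enc, DMF.size] <;> omega

lemma enc_inj {ι : Type} (φ : DMF ι) : ∀ (ψ : DMF ι) (l l' : List ((ι × Bool) ⊕ Bool)),
    enc φ ++ l = enc ψ ++ l' → φ = ψ ∧ l = l' := by
  induction φ with
  | leaf i b =>
    intro ψ l l' h
    cases ψ <;> simp_all [enc]
  | and φ₁ φ₂ h1 h2 =>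
    intro ψ l l' h
    cases ψ with
    | leaf i b => simp [enc] at h
    | and ψ₁ ψ₂ =>
      simp only [enc, List.cons_append, List.append_assoc, List.cons.injEq, true_and] at h
      obtain ⟨e1, h3⟩ := h1 _ _ _ h
      obtain ⟨e2, h4⟩ := h2 _ _ _ h3
      exact ⟨by rw [e1, e2], h4⟩
    | or ψ₁ ψ₂ => simp [enc] at h
  | or φ₁ φ₂ h1 h2 =>
    intro ψ l l' h
    cases ψ with
    | leaf i b => simp [enc] at h
    | or ψ₁ ψ₂ =>
      simp only [enc, List.cons_append, List.append_assoc, List.cons.injEq, true_and] at h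
      obtain ⟨e1, h3⟩ := h1 _ _ _ h
      obtain ⟨e2, h4⟩ := h2 _ _ _ h3
      exact ⟨by rw [e1, e2], h4⟩
    | and ψ₁ ψ₂ => simp [enc] at h

lemma card_size {ι : Type} [Fintype ι] (S : Finset (DMF ι)) (t : ℕ)
    (hS : ∀ φ ∈ S, φ.size = t) : S.card ≤ (2 * Fintype.card ι + 2) ^ (2 * t - 1) := by
  classical
  have hl : ∀ φ : S, (enc φ.1).length = 2 * t - 1 := fun φ => by
    have := enc_length φ.1
    have := hS φ.1 φ.2
    omega
  let e : S → List.Vector ((ι × Bool) ⊕ Bool) (2 * t - 1) := fun φ => ⟨enc φ.1, hl φ⟩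
  have := Fintype.card_le_of_injective e (by
      intro φ ψ h
      have h' : enc φ.1 = enc ψ.1 := congrArg Subtype.val h
      exact Subtype.ext (enc_inj φ.1 ψ.1 [] [] (by simpa using h')).1)
  simpa only [Fintype.card_coe, card_vector, Fintype.card_sum, Fintype.card_prod,
    Fintype.card_bool, mul_comm] using this

lemma sum_lt_one {ι : Type} [Fintype ι] (S : Finset (DMF ι)) (q : ℝ) (hq : 0 ≤ q)
    (hA : (2 * (Fintype.card ι : ℝ) + 2) ^ 2 * q ≤ 1 / 4) : ∑ φ ∈ S, q ^ φ.size < 1 := by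
  classical
  set T := S.sup DMF.size
  have h1 : ∑ φ ∈ S, q ^ φ.size
      = ∑ t ∈ Finset.range (T + 1), ∑ φ ∈ S.filter (fun φ => φ.size = t), q ^ φ.size := by
    rw [Finset.sum_fiberwise_of_maps_to]
    intro φ hφ
    have : φ.size ≤ T := Finset.le_sup (f := DMF.size) hφ
    simp; omega
  have h2 : ∀ t ∈ Finset.range (T + 1),
      ∑ φ ∈ S.filter (fun φ => φ.size = t), q ^ φ.size ≤ (if t = 0 then 0 else (1 / 4 : ℝ) ^ t) := by
    intro t _
    split_ifs with ht
    · refine le_of_eq (Finset.sum_eq_zero fun φ hφ => ?_)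
      have := size_pos φ
      simp at hφ
      omega
    · have h3 : ∑ φ ∈ S.filter (fun φ => φ.size = t), q ^ φ.size
          = (S.filter (fun φ => φ.size = t)).card * q ^ t := by
        rw [Finset.sum_congr rfl (g := fun _ => q ^ t), Finset.sum_const, nsmul_eq_mul]
        intro φ hφ
        rw [(Finset.mem_filter.1 hφ).2]
      rw [h3]
      have h4 := card_size (S.filter (fun φ => φ.size = t)) t (fun φ hφ => (Finset.mem_filter.1 hφ).2)
      have h5 : ((S.filter (fun φ => φ.size = t)).card : ℝ) ≤ (2 * (Fintype.card ι : ℝ) + 2) ^ (2 * t) := by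
        have : (2 * Fintype.card ι + 2) ^ (2 * t - 1) ≤ (2 * Fintype.card ι + 2) ^ (2 * t) :=
          Nat.pow_le_pow_right (by omega) (by omega)
        exact_mod_cast h4.trans this
      calc _ ≤ (2 * (Fintype.card ι : ℝ) + 2) ^ (2 * t) * q ^ t := by gcongr
        _ = ((2 * (Fintype.card ι : ℝ) + 2) ^ 2 * q) ^ t := by rw [pow_mul, mul_pow]
        _ ≤ _ := by gcongr
  rw [h1]
  refine lt_of_le_of_lt (Finset.sum_le_sum h2) ?_
  rw [Finset.sum_range_succ']
  simp only [Nat.add_eq_zero_iff, one_ne_zero, and_false, if_false, if_true, add_zero]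
  have h6 : ∀ m : ℕ, ∑ t ∈ Finset.range m, (1 / 4 : ℝ) ^ (t + 1) = (1 - (1 / 4) ^ m) / 3 := by
    intro m
    induction m with
    | zero => simp
    | succ m ih => rw [Finset.sum_range_succ, ih]; ring
  rw [h6]
  have : (0 : ℝ) < (1 / 4) ^ T := by positivity
  linarith

lemma logb_ge (n : ℕ) (hn : n ≥ 1024) : 10 ≤ Real.logb 2 n := by
  rw [Real.le_logb_iff_rpow_le (by norm_num) (by positivity)]
  have : (1024 : ℝ) ≤ n := by exact_mod_cast hn
  norm_num
  exact hn

lemma numeric (n : ℕ) (hn : n ≥ 1024) :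
    (2 * ((n : ℝ) + n) + 2) ^ 2 * (3 / 4 : ℝ) ^ ((Real.logb 2 n) ^ 2) ≤ 1 / 4 := by
  have hl := logb_ge n hn
  have hn' : (1024 : ℝ) ≤ n := by exact_mod_cast hn
  set l := Real.logb 2 n with hldef
  have hnl : (n : ℝ) = 2 ^ l := by
    rw [hldef, Real.rpow_logb] <;> norm_num; omega
  have h1 : (3 / 4 : ℝ) ^ (l ^ 2) ≤ (2 : ℝ) ^ (-(2 * l + 8)) := by
    have h2 : (3 / 4 : ℝ) ≤ 2 ^ (-(1 / 3) : ℝ) := by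
      have h0 : (0 : ℝ) ≤ 2 ^ (-(1 / 3) : ℝ) := by positivity
      refine le_of_pow_le_pow_left₀ (n := 3) (by norm_num) h0 ?_
      rw [← Real.rpow_natCast (2 ^ (-(1 / 3) : ℝ)) 3, ← Real.rpow_mul (by norm_num)]
      norm_num
    calc (3 / 4 : ℝ) ^ (l ^ 2) ≤ (2 ^ (-(1 / 3) : ℝ)) ^ (l ^ 2) :=
          Real.rpow_le_rpow (by norm_num) h2 (by positivity)
      _ = 2 ^ (-(1 / 3) * l ^ 2) := by rw [← Real.rpow_mul (by norm_num)]
      _ ≤ _ := Real.rpow_le_rpow_of_exponent_le (by norm_num) (by nlinarith)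
  have h3 : (2 * ((n : ℝ) + n) + 2) ^ 2 ≤ 2 ^ (2 * l + 6) := by
    have : (2 : ℝ) ^ (2 * l + 6) = (8 * n) ^ 2 := by
      rw [Real.rpow_add (by norm_num), mul_comm 2 l, Real.rpow_mul (by norm_num), ← hnl]
      norm_num
      ring
    rw [this]
    gcongr
    linarith
  calc _ ≤ (2 : ℝ) ^ (2 * l + 6) * (2 : ℝ) ^ (-(2 * l + 8)) := by gcongr
    _ = 2 ^ (-2 : ℝ) := by rw [← Real.rpow_add (by norm_num)]; congr 1; ring
    _ ≤ _ := by rw [Real.rpow_neg (by norm_num)]; norm_num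

def Covers {n : ℕ} (f : (Fin n → Bool) → Bool) (g : (Fin n → Bool) → (Fin n → Bool))
    (φ : DMF (Fin n ⊕ Fin n)) : Prop :=
  ∀ x y : Fin n → Bool, f (fun j => xor (g x j) (y j)) = true → φ.eval (Sum.elim x y) = true

open Classical in
/-- number of rows that are not constantly true -/
noncomputable def rows {n : ℕ} (φ : DMF (Fin n ⊕ Fin n)) : ℕ :=
  (univ.filter fun x : Fin n → Bool => ∃ y : Fin n → Bool, φ.eval (Sum.elim x y) = false).card

open Classical in
lemma card_covers {n : ℕ} (f : (Fin n → Bool) → Bool)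
    (hcard : (2 : ℝ) ^ n / 4 ≤ ((Finset.univ.filter fun x : Fin n → Bool => f x = true).card : ℝ))
    (φ : DMF (Fin n ⊕ Fin n)) :
    ((univ.filter fun g : (Fin n → Bool) → (Fin n → Bool) => Covers f g φ).card : ℝ)
      ≤ ((2 : ℝ) ^ n) ^ (2 ^ n) * (3 / 4) ^ rows φ := by
  let A : (Fin n → Bool) → Finset (Fin n → Bool) := fun x => univ.filter fun v =>
    ∀ y : Fin n → Bool, f (fun j => xor (v j) (y j)) = true → φ.eval (Sum.elim x y) = true
  have h1 : (univ.filter fun g : (Fin n → Bool) → (Fin n → Bool) => Covers f g φ)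
      = Fintype.piFinset A := by
    ext g
    rw [mem_filter]
    simp [A, Covers]
  rw [h1, Fintype.card_piFinset]
  push_cast
  have h2 : ∀ x, ((A x).card : ℝ) ≤ 2 ^ n *
      (if ∃ y : Fin n → Bool, φ.eval (Sum.elim x y) = false then 3 / 4 else 1) := by
    intro x
    split_ifs with hx
    · obtain ⟨y, hy⟩ := hx
      have h3 : (A x).card ≤ (univ.filter fun v : Fin n → Bool => ¬ f v = true).card := by
        refine Finset.card_le_card_of_injOn (fun v j => xor (v j) (y j)) ?_ ?_
        · intro v hv
          simp only [A, coe_filter, mem_univ, true_and, Set.mem_ofPred_eq] at hv ⊢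
          intro h
          have := hv y h
          rw [hy] at this
          exact absurd this (by simp)
        · intro v _ w _ h
          funext j
          have := congrFun h j
          simpa using this
      have h4 := Finset.card_filter_add_card_filter_not (s := (univ : Finset (Fin n → Bool)))
        (fun v => f v = true)
      simp only [card_univ, Fintype.card_pi, Fintype.card_bool, prod_const, Fintype.card_fin] at h4
      have h5 : ((univ.filter fun v : Fin n → Bool => f v = true).card : ℝ)
        + ((univ.filter fun v : Fin n → Bool => ¬ f v = true).card : ℝ) = 2 ^ n := by
        exact_mod_cast h4
      have h6 : ((A x).card : ℝ) ≤ ((univ.filter fun v : Fin n → Bool => ¬ f v = true).card : ℝ) := by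
        exact_mod_cast h3
      linarith
    · have : (A x).card ≤ 2 ^ n := by
        simpa using Finset.card_le_univ (A x)
      rw [mul_one]
      exact_mod_cast this
  refine (Finset.prod_le_prod (fun _ _ => by positivity) (fun x _ => h2 x)).trans (le_of_eq ?_)
  rw [Finset.prod_mul_distrib, Finset.prod_ite]
  simp [rows, div_pow]

lemma exists_g (n : ℕ) (hn : n ≥ 1024) (f : (Fin n → Bool) → Bool)
    (hcard : (2 : ℝ) ^ n / 4 ≤ ((Finset.univ.filter fun x : Fin n → Bool => f x = true).card : ℝ)) :
    ∃ g : (Fin n → Bool) → (Fin n → Bool), ∀ φ : DMF (Fin n ⊕ Fin n), Covers f g φ →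
      (rows φ : ℝ) < (Real.logb 2 n) ^ 2 * φ.size := by
  classical
  by_contra! hbad
  choose F hF1 hF2 using hbad
  let S := univ.image F
  set q : ℝ := (3 / 4 : ℝ) ^ ((Real.logb 2 n) ^ 2) with hq
  have hlt := sum_lt_one S q (by positivity) (by simpa using numeric n hn)
  have hM : (0 : ℝ) < ((2 : ℝ) ^ n) ^ (2 ^ n) := by positivity
  have h1 : ((2 : ℝ) ^ n) ^ (2 ^ n) ≤
      ∑ φ ∈ S, ((2 : ℝ) ^ n) ^ (2 ^ n) * q ^ φ.size := by
    have h2 : (univ : Finset ((Fin n → Bool) → (Fin n → Bool))) ⊆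
        S.biUnion (fun φ => univ.filter fun g => Covers f g φ) := by
      intro g _
      simp only [mem_biUnion, mem_filter, mem_univ, true_and]
      exact ⟨F g, mem_image_of_mem _ (mem_univ _), hF1 g⟩
    have h3 := (Finset.card_le_card h2).trans Finset.card_biUnion_le
    have h4 : ((2 : ℝ) ^ n) ^ (2 ^ n) ≤
        ∑ φ ∈ S, ((univ.filter fun g => Covers f g φ).card : ℝ) := by
      have : Finset.card (univ : Finset ((Fin n → Bool) → (Fin n → Bool))) = (2 ^ n) ^ (2 ^ n) := by
        simp
      rw [this] at h3
      exact_mod_cast h3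
    refine h4.trans (Finset.sum_le_sum fun φ hφ => (card_covers f hcard φ).trans ?_)
    obtain ⟨g, _, rfl⟩ := Finset.mem_image.1 hφ
    gcongr
    rw [hq, ← Real.rpow_natCast, ← Real.rpow_natCast, ← Real.rpow_mul (by norm_num)]
    exact Real.rpow_le_rpow_of_exponent_ge (by norm_num) (by norm_num) (hF2 g)
  rw [← Finset.mul_sum] at h1
  nlinarith

lemma final (n : ℕ) (hn : n ≥ 1024) (f : (Fin n → Bool) → Bool)
    (hf : ¬ ∃ c, ∀ x, f x = c) (g : (Fin n → Bool) → (Fin n → Bool))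
    (hg : ∀ φ : DMF (Fin n ⊕ Fin n), Covers f g φ →
      (rows φ : ℝ) < (Real.logb 2 n) ^ 2 * φ.size)
    (α : ℝ) (k : ℕ) (h : Fin k → (Fin n → Bool) → (Fin n → Bool) → Bool)
    (hk : (k : ℝ) ≤ 2 ^ (α * n))
    (hs : ∀ i, (Lc2 (h i) : ℝ) ≤
      2 ^ ((n + Real.logb 2 (Lc f) - α * n - 2 * Real.logb 2 (Real.logb 2 n)) / 2))
    (hfg : ∀ x y : Fin n → Bool,
      (f (fun j => xor (g x j) (y j)) = true ↔ ∀ i, h i x y = true)) : False := by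
  classical
  have hl := logb_ge n hn
  set l := Real.logb 2 n with hldef
  have hL : 0 < Lc f := by
    obtain ⟨φ, h1, _⟩ := exists_formula hf
    rw [← h1]
    exact size_pos φ
  have hL' : (0 : ℝ) < Lc f := by exact_mod_cast hL
  set s : ℝ := 2 ^ ((n + Real.logb 2 (Lc f) - α * n - 2 * Real.logb 2 l) / 2) with hsdef
  have hspos : 0 < s := by positivity
  have hs2 : 2 ^ (α * n) * (s ^ 2 * l ^ 2) = 2 ^ n * Lc f := by
    have e1 : s ^ 2 = 2 ^ (n + Real.logb 2 (Lc f) - α * n - 2 * Real.logb 2 l) := by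
      rw [hsdef, ← Real.rpow_natCast, ← Real.rpow_mul (by norm_num)]
      congr 1
      push_cast
      ring
    have e2 : l ^ 2 = 2 ^ (2 * Real.logb 2 l) := by
      rw [mul_comm, Real.rpow_mul (by norm_num), Real.rpow_logb (by norm_num) (by norm_num)
        (by linarith)]
      norm_num
    rw [e1, e2, ← Real.rpow_add (by norm_num), ← Real.rpow_add (by norm_num)]
    rw [show α * n + (n + Real.logb 2 (Lc f) - α * n - 2 * Real.logb 2 l + 2 * Real.logb 2 l)
      = n + Real.logb 2 (Lc f) by ring, Real.rpow_add (by norm_num),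
      Real.rpow_logb (by norm_num) (by norm_num) hL', Real.rpow_natCast]
  have hmu : 2 ^ n * Lc f ≤ ∑ i, mu (h i) := by
    have h1 : ∀ x : Fin n → Bool, Lc f ≤ ∑ i, Lc (h i x) := by
      intro x
      refine (Lc_shift f (g x)).trans (le_trans (le_of_eq ?_) (Lc_forall (fun i => h i x) univ))
      congr 1
      funext y
      rw [Bool.eq_iff_iff, hfg]
      simp
    calc 2 ^ n * Lc f = ∑ x : Fin n → Bool, Lc f := by simp
      _ ≤ ∑ x : Fin n → Bool, ∑ i, Lc (h i x) := Finset.sum_le_sum fun x _ => h1 x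
      _ = _ := by rw [Finset.sum_comm]; rfl
  have hmu' : (2 : ℝ) ^ n * Lc f ≤ ∑ i, (mu (h i) : ℝ) := by exact_mod_cast hmu
  obtain ⟨i, hi⟩ : ∃ i, s ^ 2 * l ^ 2 ≤ mu (h i) := by
    by_contra! hlt
    have hkpos : Nonempty (Fin k) := by
      by_contra hne
      rw [not_nonempty_iff] at hne
      have : (0 : ℝ) < 2 ^ n * Lc f := by positivity
      simp at hmu'
      linarith
    have h1 : ∑ i, (mu (h i) : ℝ) < ∑ i : Fin k, s ^ 2 * l ^ 2 :=
      Finset.sum_lt_sum_of_nonempty univ_nonempty fun i _ => hlt i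
    simp only [sum_const, card_univ, Fintype.card_fin, nsmul_eq_mul] at h1
    have h2 : (k : ℝ) * (s ^ 2 * l ^ 2) ≤ 2 ^ (α * n) * (s ^ 2 * l ^ 2) := by gcongr
    linarith
  have hmupos : (0 : ℝ) < mu (h i) := lt_of_lt_of_le (by positivity) hi
  -- a minimal formula for `h i`
  have hnc : ¬ ∃ c, ∀ z : (Fin n ⊕ Fin n) → Bool, h i (z ∘ Sum.inl) (z ∘ Sum.inr) = c := by
    intro hc
    have h0 : Lc2 (h i) = 0 := Lc_const hc
    have : mu (h i) = 0 := Finset.sum_eq_zero fun x _ => by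
      have := Lc_row (h i) x
      change Lc (h i x) = 0
      omega
    rw [this] at hmupos
    simp at hmupos
  obtain ⟨φ, hφ1, hφ2⟩ := exists_formula hnc
  have hsz : φ.size = Lc2 (h i) := hφ1
  have hev : ∀ x y, φ.eval (Sum.elim x y) = h i x y := fun x y => by
    rw [hφ2]; simp
  have hcov : Covers f g φ := fun x y hxy => by
    rw [hev]; exact (hfg x y).1 hxy i
  have hrows := hg φ hcov
  have hmule : mu (h i) ≤ rows φ * φ.size := by
    have h1 : ∀ x : Fin n → Bool, Lc (h i x) ≤
        if ∃ y : Fin n → Bool, φ.eval (Sum.elim x y) = false then φ.size else 0 := by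
      intro x
      split_ifs with hx
      · rw [hsz]; exact Lc_row _ _
      · refine le_of_eq (Lc_const ⟨true, fun y => ?_⟩)
        push Not at hx
        rw [← hev]
        simpa using hx y
    refine (Finset.sum_le_sum fun x _ => h1 x).trans (le_of_eq ?_)
    rw [Finset.sum_ite]
    simp [rows]
  have hmule' : (mu (h i) : ℝ) ≤ rows φ * φ.size := by exact_mod_cast hmule
  have hszs : (φ.size : ℝ) ≤ s := by rw [hsz]; exact hs i
  have hszpos : (0 : ℝ) < φ.size := by exact_mod_cast size_pos φ
  have h1 : (rows φ : ℝ) * φ.size < l ^ 2 * φ.size * φ.size := by gcongr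
  have h2 : l ^ 2 * φ.size * φ.size ≤ l ^ 2 * s * s := by gcongr
  nlinarith

end XC

/-- Theorem 3.3: for all large `n` and every non-constant
`f` with `|f⁻¹(1)| ≥ 2^n/4` there is `g` such that for every
`0 < α < 1 + (log₂ L(f) - 2 log₂ log₂ n)/n`, the XOR composition `f ⊞ g`
is not the pointwise AND of at most `2^{αn}` functions each of formula
complexity at most `2^{(n + log₂ L(f) - αn - 2 log₂ log₂ n)/2}`. -/
theorem xor_composition_theorem :
    ∃ n₀ : ℕ, ∀ n ≥ n₀, ∀ f : (Fin n → Bool) → Bool,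
      (¬ ∃ c, ∀ x, f x = c) →
      ((2 : ℝ) ^ n / 4 ≤ ((Finset.univ.filter fun x : Fin n → Bool => f x = true).card : ℝ)) →
      ∃ g : (Fin n → Bool) → (Fin n → Bool),
        ∀ α : ℝ, 0 < α →
          α < 1 + (Real.logb 2 (Lc f) - 2 * Real.logb 2 (Real.logb 2 n)) / n →
          ¬ ∃ (k : ℕ) (h : Fin k → (Fin n → Bool) → (Fin n → Bool) → Bool),
              (k : ℝ) ≤ 2 ^ (α * n) ∧
              (∀ i, (Lc2 (h i) : ℝ) ≤
                2 ^ ((n + Real.logb 2 (Lc f) - α * n - 2 * Real.logb 2 (Real.logb 2 n)) / 2)) ∧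
              (∀ x y : Fin n → Bool,
                (f (fun j => xor (g x j) (y j)) = true ↔ ∀ i, h i x y = true)) := by
  refine ⟨1024, fun n hn f hf hcard => ?_⟩
  obtain ⟨g, hg⟩ := XC.exists_g n hn f hcard
  refine ⟨g, fun α _ _ => ?_⟩
  rintro ⟨k, h, hk, hs, hfg⟩
  exact XC.final n hn f hf g hg α k h hk hs hfg
end

section
/- For all real constants α and ε with 0 < α < 2 and ε > 0, for all sufficiently large n there exist functions f : {0,1}^n → {0,1} and g : {0,1}^n → {0,1}^n such that there do NOT exist k ≤ 2^{α·n} Boolean functions h_1, …, h_k : {0,1}^n × {0,1}^n → {0,1}, each with L(h_i) ≤ 2^{(1 − α/2 − ε)·n}, whose pointwise AND equals f⊞g. -/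
open Finset in
/-- Union bound: few constraints, each of which restricts at least `m` coordinates to at most
half of the values, are simultaneously avoided by some function. -/
theorem avoid_constraints {Y V J : Type} [Fintype Y] [DecidableEq Y] [Fintype V] [DecidableEq V]
    [Nonempty V] (m : ℕ) (I : Finset J) (S : J → Finset Y) (P : J → Y → Finset V)
    (hS : ∀ j ∈ I, m ≤ (S j).card)
    (hP : ∀ j ∈ I, ∀ y ∈ S j, 2 * (P j y).card ≤ Fintype.card V)
    (hI : I.card < 2 ^ m) :
    ∃ u : Y → V, ∀ j ∈ I, ∃ y ∈ S j, u y ∉ P j y := by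
  classical
  set B : J → Finset (Y → V) := fun j =>
    Fintype.piFinset (fun y => if y ∈ S j then P j y else univ) with hB
  have hBc : ∀ j ∈ I, 2 ^ m * (B j).card ≤ Fintype.card (Y → V) := by
    intro j hj
    have h1 : (B j).card = ∏ y, (if y ∈ S j then P j y else univ).card := by
      simp [hB, Fintype.card_piFinset]
    have h2 : (2 : ℕ) ^ (S j).card = ∏ y, (if y ∈ S j then 2 else 1) := by
      rw [Finset.prod_ite]; simp
    calc 2 ^ m * (B j).card ≤ 2 ^ (S j).card * (B j).card :=
          Nat.mul_le_mul_right _ (Nat.pow_le_pow_right (by norm_num) (hS j hj))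
      _ = ∏ y, ((if y ∈ S j then 2 else 1) * (if y ∈ S j then P j y else univ).card) := by
          rw [h1, h2, Finset.prod_mul_distrib]
      _ ≤ ∏ _y : Y, Fintype.card V := by
          apply Finset.prod_le_prod'
          intro y _
          by_cases hy : y ∈ S j
          · simpa [hy] using hP j hj y hy
          · simp [hy]
      _ = Fintype.card (Y → V) := by simp
  have hpos : 0 < Fintype.card (Y → V) := Fintype.card_pos
  have hU : (I.biUnion B).card < Fintype.card (Y → V) := by
    have h3 : 2 ^ m * (I.biUnion B).card ≤ I.card * Fintype.card (Y → V) := by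
      calc 2 ^ m * (I.biUnion B).card ≤ 2 ^ m * ∑ j ∈ I, (B j).card :=
            Nat.mul_le_mul_left _ card_biUnion_le
        _ = ∑ j ∈ I, 2 ^ m * (B j).card := by rw [Finset.mul_sum]
        _ ≤ ∑ _j ∈ I, Fintype.card (Y → V) := Finset.sum_le_sum hBc
        _ = _ := by simp
    by_contra hcon
    push Not at hcon
    have h4 : 2 ^ m * Fintype.card (Y → V) ≤ I.card * Fintype.card (Y → V) :=
      (Nat.mul_le_mul_left _ hcon).trans h3
    have := Nat.le_of_mul_le_mul_right h4 hpos
    omega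
  obtain ⟨u, hu⟩ : ∃ u, u ∉ I.biUnion B := by
    by_contra hcon
    push Not at hcon
    have : I.biUnion B = univ := by ext u; simp [hcon u]
    rw [this, Finset.card_univ] at hU
    omega
  refine ⟨u, fun j hj => ?_⟩
  by_contra hcon
  push Not at hcon
  apply hu
  rw [Finset.mem_biUnion]
  refine ⟨j, hj, ?_⟩
  simp only [hB, Fintype.mem_piFinset]
  intro y
  by_cases hy : y ∈ S j
  · simpa [hy] using hcon y hy
  · simp [hy]

/-- A Boolean function negated by an involution is balanced. -/
theorem balanced_of_flip {X : Type} [Fintype X] (p : X → Bool) (σ : X → X)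
    (hσ : ∀ v, σ (σ v) = v) (hp : ∀ v, p (σ v) = !p v) :
    2 * (Finset.univ.filter (fun v => p v = false)).card = Fintype.card X := by
  classical
  have h1 : (Finset.univ.filter (fun v => p v = false)).card
      = (Finset.univ.filter (fun v => ¬ p v = false)).card := by
    apply Finset.card_bij' (fun v _ => σ v) (fun v _ => σ v)
    · intro v hv; simp at hv ⊢; simp [hp, hv]
    · intro v hv; simp at hv ⊢; simp [hp, hv]
    · intro v _; exact hσ v
    · intro v _; exact hσ v
  have h2 := Finset.card_filter_add_card_filter_not
    (s := (Finset.univ : Finset X)) (fun v => p v = false)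
  rw [Finset.card_univ] at h2
  omega

/-- Flip the first bit. -/
def flipZero {n : ℕ} (v : Fin (n + 1) → Bool) : Fin (n + 1) → Bool :=
  Function.update v 0 (!v 0)

theorem flipZero_flipZero {n : ℕ} (v : Fin (n + 1) → Bool) : flipZero (flipZero v) = v := by
  simp [flipZero]

/-- Bitwise xor. -/
def bxor {n : ℕ} (v w : Fin n → Bool) : Fin n → Bool := fun j => xor (v j) (w j)

theorem bxor_flipZero_left {n : ℕ} (v w : Fin (n + 1) → Bool) :
    bxor (flipZero v) w = flipZero (bxor v w) := by
  funext j
  by_cases hj : j = 0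
  · subst hj; simp [bxor, flipZero]
  · simp [bxor, flipZero, hj]

theorem bxor_comm {n : ℕ} (v w : Fin n → Bool) : bxor v w = bxor w v := by
  funext j; simp [bxor, Bool.xor_comm]

theorem bxor_inj {n : ℕ} (c : Fin n → Bool) : Function.Injective (bxor c) := by
  intro v w h
  funext j
  have := congrFun h j
  simpa [bxor] using this

/-- An antisymmetric `f` which is not identically false on any member of a small family of large
sets. -/
theorem exists_good_f {n : ℕ} (m : ℕ) (I : Finset (Finset (Fin (n + 1) → Bool)))
    (hc : ∀ T ∈ I, 2 * m ≤ T.card) (hI : I.card < 2 ^ m) :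
    ∃ f : (Fin (n + 1) → Bool) → Bool, (∀ v, f (flipZero v) = !f v) ∧
      ∀ T ∈ I, ∃ z ∈ T, f z = true := by
  classical
  let π : (Fin (n + 1) → Bool) → (Fin (n + 1) → Bool) := fun z => Function.update z 0 false
  let P : Finset (Fin (n + 1) → Bool) → (Fin (n + 1) → Bool) → Finset Bool := fun T y =>
    if h : ∃ z ∈ T, π z = y then {h.choose 0} else ∅
  obtain ⟨u, hu⟩ := avoid_constraints m I (fun T => T.image π) P
    (by
      intro T hT
      have : T.card ≤ 2 * (T.image π).card := by
        apply Finset.card_le_mul_card_image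
        intro y _
        have hsub : (T.filter fun z => π z = y) ⊆
            {Function.update y 0 false, Function.update y 0 true} := by
          intro z hz
          simp only [Finset.mem_filter] at hz
          have hz2 := hz.2
          subst hz2
          simp only [Finset.mem_insert, Finset.mem_singleton, π, Function.update_idem]
          cases h0 : z 0
          · left; rw [← h0]; simp
          · right; rw [← h0]; simp
        exact (Finset.card_le_card hsub).trans Finset.card_le_two
      have := hc T hT
      omega)
    (by
      intro T _ y _
      simp only [P]
      split_ifs <;> simp)
    hI
  refine ⟨fun z => xor (u (π z)) (z 0), ?_, ?_⟩
  · intro v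
    simp [π, flipZero]
  · intro T hT
    obtain ⟨y, hy, hy2⟩ := hu T hT
    have hex : ∃ z ∈ T, π z = y := by simpa using hy
    have hP : P T y = {hex.choose 0} := by simp only [P]; rw [dif_pos hex]
    rw [hP, Finset.mem_singleton] at hy2
    refine ⟨hex.choose, hex.choose_spec.1, ?_⟩
    simp only [hex.choose_spec.2]
    revert hy2
    cases u y <;> cases (hex.choose 0) <;> simp

open Finset in
theorem exists_good_fg {n : ℕ} (m : ℕ)
    (H : Finset ((Fin (n + 1) → Bool) → (Fin (n + 1) → Bool) → Bool))
    (hH : H.card * (2 ^ (n + 1) * 2 ^ (n + 1)) < 2 ^ m) :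
    ∃ (f : (Fin (n + 1) → Bool) → Bool) (g : (Fin (n + 1) → Bool) → (Fin (n + 1) → Bool)),
      (∀ v, f (flipZero v) = !f v) ∧
      ∀ h ∈ H, (∀ x y, h x y = false → f (bxor (g x) y) = false) →
        (univ.filter (fun p : (Fin (n + 1) → Bool) × (Fin (n + 1) → Bool) =>
          h p.1 p.2 = false)).card ≤ m * (2 * m) := by
  classical
  let X := Fin (n + 1) → Bool
  have hX : Fintype.card X = 2 ^ (n + 1) := by simp [X]
  let sl : (X → X → Bool) → X → Finset X := fun h x => univ.filter (fun y => h x y = false)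
  let I : Finset (Finset X) :=
    ((H ×ˢ ((univ : Finset X) ×ˢ (univ : Finset X))).image
      (fun q => (sl q.1 q.2.1).image (bxor q.2.2))).filter (fun T => 2 * m ≤ T.card)
  have hIc : I.card < 2 ^ m := by
    refine lt_of_le_of_lt ((card_filter_le _ _).trans card_image_le) ?_
    rw [card_product, card_product, card_univ, hX]
    exact hH
  obtain ⟨f, hf, hfI⟩ := exists_good_f m I (fun T hT => (mem_filter.1 hT).2) hIc
  -- now choose g
  let supp : (X → X → Bool) → Finset X := fun h => univ.filter (fun x => (sl h x).Nonempty)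
  let P : (X → X → Bool) → X → Finset X := fun h x =>
    if hx : (sl h x).Nonempty then univ.filter (fun v => f (bxor v hx.choose) = false) else ∅
  have hHc : (H.filter (fun h => m ≤ (supp h).card)).card < 2 ^ m := by
    refine lt_of_le_of_lt (card_filter_le _ _) (lt_of_le_of_lt ?_ hH)
    exact Nat.le_mul_of_pos_right _ (by positivity)
  obtain ⟨g, hg⟩ := avoid_constraints m (H.filter (fun h => m ≤ (supp h).card)) supp P
    (fun h hh => (mem_filter.1 hh).2)
    (by
      intro h _ x hx
      have hx' : (sl h x).Nonempty := (mem_filter.1 hx).2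
      simp only [P]
      rw [dif_pos hx']
      refine (balanced_of_flip (fun v => f (bxor v hx'.choose)) flipZero flipZero_flipZero ?_).le
      intro v
      simp only [bxor_flipZero_left, hf])
    hHc
  refine ⟨f, g, hf, fun h hh hsub => ?_⟩
  have hsupp : (supp h).card < m := by
    by_contra hcon
    push Not at hcon
    obtain ⟨x, hx, hx2⟩ := hg h (mem_filter.2 ⟨hh, hcon⟩)
    have hx' : (sl h x).Nonempty := (mem_filter.1 hx).2
    apply hx2
    simp only [P]
    rw [dif_pos hx']
    simp only [mem_filter, mem_univ, true_and]
    exact hsub _ _ (mem_filter.1 hx'.choose_spec).2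
  have hsl : ∀ x, (sl h x).card < 2 * m := by
    intro x
    by_contra hcon
    push Not at hcon
    have hmem : (sl h x).image (bxor (g x)) ∈ I := by
      refine mem_filter.2 ⟨mem_image.2 ⟨(h, x, g x), ?_, rfl⟩, ?_⟩
      · simp [hh]
      · rwa [card_image_of_injective _ (bxor_inj _)]
    obtain ⟨z, hz, hz2⟩ := hfI _ hmem
    obtain ⟨y, hy, rfl⟩ := mem_image.1 hz
    have := hsub x y (mem_filter.1 hy).2
    rw [this] at hz2
    exact absurd hz2 (by simp)
  have hle : (univ.filter (fun p : X × X => h p.1 p.2 = false)) ⊆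
      (supp h).biUnion (fun x => (sl h x).image (fun y => (x, y))) := by
    intro p hp
    have hp' : h p.1 p.2 = false := (mem_filter.1 hp).2
    have hm : p.2 ∈ sl h p.1 := mem_filter.2 ⟨mem_univ _, hp'⟩
    refine mem_biUnion.2 ⟨p.1, mem_filter.2 ⟨mem_univ _, p.2, hm⟩, mem_image.2 ⟨p.2, hm, rfl⟩⟩
  refine (card_le_card hle).trans ?_
  refine (card_biUnion_le_card_mul _ _ (2 * m) ?_).trans
    (Nat.mul_le_mul_right _ hsupp.le)
  intro x _
  exact card_image_le.trans (hsl x).le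

open Finset in
theorem combinatorial_core {n : ℕ} (m : ℕ)
    (H : Finset ((Fin (n + 1) → Bool) → (Fin (n + 1) → Bool) → Bool))
    (hH : H.card * (2 ^ (n + 1) * 2 ^ (n + 1)) < 2 ^ m) :
    ∃ (f : (Fin (n + 1) → Bool) → Bool) (g : (Fin (n + 1) → Bool) → (Fin (n + 1) → Bool)),
      ∀ (k : ℕ) (h : Fin k → (Fin (n + 1) → Bool) → (Fin (n + 1) → Bool) → Bool),
        (∀ i, h i ∈ H) →
        (∀ x y, (f (bxor (g x) y) = true ↔ ∀ i, h i x y = true)) →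
        2 ^ (n + 1) * 2 ^ (n + 1) ≤ 4 * (k * m ^ 2) := by
  classical
  obtain ⟨f, g, hf, hfg⟩ := exists_good_fg m H hH
  refine ⟨f, g, fun k h hh heq => ?_⟩
  let X := Fin (n + 1) → Bool
  have hbal := balanced_of_flip (fun p : X × X => f (bxor (g p.1) p.2))
    (fun p => (p.1, flipZero p.2)) (fun p => by simp [flipZero_flipZero])
    (fun p => by
      simp only
      rw [bxor_comm, bxor_flipZero_left, hf, bxor_comm])
  have hsub : (univ.filter (fun p : X × X => f (bxor (g p.1) p.2) = false)) ⊆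
      (univ : Finset (Fin k)).biUnion
        (fun i => univ.filter (fun p : X × X => h i p.1 p.2 = false)) := by
    intro p hp
    have hp' : f (bxor (g p.1) p.2) = false := (mem_filter.1 hp).2
    have : ¬ ∀ i, h i p.1 p.2 = true := by
      rw [← heq, hp']; simp
    push Not at this
    obtain ⟨i, hi⟩ := this
    refine mem_biUnion.2 ⟨i, mem_univ _, mem_filter.2 ⟨mem_univ _, by simpa using hi⟩⟩
  have hcard := (card_le_card hsub).trans (card_biUnion_le_card_mul _ _ (m * (2 * m)) (by
    intro i _
    refine hfg (h i) (hh i) ?_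
    intro x y hxy
    by_contra hcon
    have h1 : f (bxor (g x) y) = true := by simpa using hcon
    have h2 := (heq x y).1 h1 i
    rw [hxy] at h2
    exact absurd h2 (by simp)))
  have hXX : Fintype.card (X × X) = 2 ^ (n + 1) * 2 ^ (n + 1) := by simp [X]
  rw [hXX] at hbal
  simp only [card_univ, Fintype.card_fin] at hcard
  nlinarith

/-- Symbols of the postfix code: gates (`true` is AND), constants, no-op, literals. -/
abbrev Sy (ι : Type) : Type := (Bool ⊕ Bool) ⊕ (Unit ⊕ (ι × Bool))

/-- One step of the stack machine. -/
def stepSy {ι : Type} (st : List ((ι → Bool) → Bool)) : Sy ι → List ((ι → Bool) → Bool)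
  | Sum.inl (Sum.inl b) =>
    match st with
    | p :: q :: r => (fun x => if b then q x && p x else q x || p x) :: r
    | l => l
  | Sum.inl (Sum.inr b) => (fun _ => b) :: st
  | Sum.inr (Sum.inl _) => st
  | Sum.inr (Sum.inr (i, b)) => (fun x => if b then x i else !(x i)) :: st

theorem exists_code {ι : Type} (φ : DMF ι) :
    ∃ w : List (Sy ι), w.length + 1 = 2 * φ.size ∧
      ∀ st, w.foldl stepSy st = φ.eval :: st := by
  induction φ with
  | leaf i b => exact ⟨[Sum.inr (Sum.inr (i, b))], rfl, fun st => rfl⟩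
  | and φ ψ h1 h2 =>
    obtain ⟨w1, l1, e1⟩ := h1
    obtain ⟨w2, l2, e2⟩ := h2
    refine ⟨w1 ++ w2 ++ [Sum.inl (Sum.inl true)], ?_, fun st => ?_⟩
    · simp only [List.length_append, List.length_singleton, DMF.size]; omega
    · simp only [List.foldl_append, e1, e2, List.foldl_cons, List.foldl_nil, stepSy]
      rfl
  | or φ ψ h1 h2 =>
    obtain ⟨w1, l1, e1⟩ := h1
    obtain ⟨w2, l2, e2⟩ := h2
    refine ⟨w1 ++ w2 ++ [Sum.inl (Sum.inl false)], ?_, fun st => ?_⟩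
    · simp only [List.length_append, List.length_singleton, DMF.size]; omega
    · simp only [List.foldl_append, e1, e2, List.foldl_cons, List.foldl_nil, stepSy]
      rfl

theorem foldl_nop {ι : Type} (j : ℕ) (st : List ((ι → Bool) → Bool)) :
    (List.replicate j (Sum.inr (Sum.inl ()) : Sy ι)).foldl stepSy st = st := by
  induction j with
  | zero => rfl
  | succ j ih => simpa [List.replicate_succ, stepSy] using ih

/-- The function computed by a word. -/
def decodeWord {ι : Type} {W : ℕ} (w : Fin W → Sy ι) : (ι → Bool) → Bool :=
  ((List.ofFn w).foldl stepSy []).headD (fun _ => false)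

theorem decode_of_list {ι : Type} {W : ℕ} (w : List (Sy ι)) (hw : w.length ≤ W)
    (h : (ι → Bool) → Bool) (e : w.foldl stepSy [] = [h]) :
    ∃ v : Fin W → Sy ι, decodeWord v = h := by
  have key : ∀ l : List (Sy ι), l.length = W → l.foldl stepSy [] = [h] →
      ∃ v : Fin W → Sy ι, decodeWord v = h := by
    intro l hlen hl
    subst hlen
    refine ⟨fun i => l.get i, ?_⟩
    unfold decodeWord
    rw [List.ofFn_get, hl]
    rfl
  refine key (w ++ List.replicate (W - w.length) (Sum.inr (Sum.inl ()) : Sy ι)) ?_ ?_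
  · simp only [List.length_append, List.length_replicate]; omega
  · rw [List.foldl_append, e, foldl_nop]

/-- Every function on finitely many (at least one) variables has a formula. -/
theorem exists_formula {ι : Type} [Fintype ι] [Nonempty ι] (h : (ι → Bool) → Bool) :
    ∃ φ : DMF ι, ∀ x, φ.eval x = h x := by
  classical
  obtain ⟨i0⟩ := ‹Nonempty ι›
  have hand : ∀ (s : Finset ι) (a : ι → Bool),
      ∃ φ : DMF ι, ∀ x, φ.eval x = true ↔ ∀ i ∈ s, x i = a i := by
    intro s a
    induction s using Finset.induction_on with
    | empty =>
      refine ⟨DMF.or (DMF.leaf i0 true) (DMF.leaf i0 false), fun x => ?_⟩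
      simp [DMF.eval]
    | insert i s _ ih =>
      obtain ⟨φ, hφ⟩ := ih
      refine ⟨DMF.and (DMF.leaf i (a i)) φ, fun x => ?_⟩
      simp only [DMF.eval, Bool.and_eq_true, hφ, Finset.forall_mem_insert]
      cases a i <;> simp
  have hor : ∀ s : Finset (ι → Bool),
      ∃ φ : DMF ι, ∀ x, φ.eval x = true ↔ x ∈ s := by
    intro s
    induction s using Finset.induction_on with
    | empty =>
      refine ⟨DMF.and (DMF.leaf i0 true) (DMF.leaf i0 false), fun x => ?_⟩
      simp [DMF.eval]
    | insert a s _ ih =>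
      obtain ⟨φ, hφ⟩ := ih
      obtain ⟨ψ, hψ⟩ := hand Finset.univ a
      refine ⟨DMF.or ψ φ, fun x => ?_⟩
      simp only [DMF.eval, Bool.or_eq_true, hφ, hψ, Finset.mem_insert, Finset.mem_univ,
        true_imp_iff, funext_iff]
  obtain ⟨φ, hφ⟩ := hor (Finset.univ.filter (fun x => h x = true))
  refine ⟨φ, fun x => ?_⟩
  have := hφ x
  rw [Bool.eq_iff_iff, this]
  simp

theorem decode_of_Lc {ι : Type} [Fintype ι] [Nonempty ι] (h : (ι → Bool) → Bool) (s : ℕ)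
    (hs : Lc h ≤ s) : ∃ v : Fin (2 * s + 1) → Sy ι, decodeWord v = h := by
  classical
  by_cases hc : ∃ c, ∀ x, h x = c
  · obtain ⟨c, hc⟩ := hc
    refine decode_of_list [Sum.inl (Sum.inr c)] (by simp) h ?_
    simp only [List.foldl_cons, List.foldl_nil, stepSy]
    congr 1
    funext x
    exact (hc x).symm
  · unfold Lc at hs
    rw [if_neg hc] at hs
    obtain ⟨φ0, hφ0⟩ := exists_formula h
    have hne : {s | ∃ φ : DMF ι, φ.size = s ∧ ∀ x, φ.eval x = h x}.Nonempty :=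
      ⟨_, φ0, rfl, hφ0⟩
    obtain ⟨φ, hsz, hev⟩ := Nat.sInf_mem hne
    obtain ⟨w, hw, hst⟩ := exists_code φ
    refine decode_of_list w (by omega) h ?_
    rw [hst, funext hev]

theorem numeric (β ε : ℝ) (hβ : 0 < β) (hε : 0 < ε) :
    ∃ n₀ : ℕ, ∀ n ≥ n₀,
      (n + 5) * (2 * ⌊(2 : ℝ) ^ ((β - ε) * n)⌋₊ + 1) + 2 * n < ⌊(2 : ℝ) ^ (β * n) / 4⌋₊ := by
  set δ := min ε β with hδ
  have hδ0 : 0 < δ := lt_min hε hβ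
  have hr : (1 : ℝ) < 2 ^ δ := Real.one_lt_rpow (by norm_num) hδ0
  have ht := tendsto_pow_const_div_const_pow_of_one_lt 1 hr
  have hev := (ht.eventually (gt_mem_nhds (show (0 : ℝ) < 1 / 100 by norm_num)))
  obtain ⟨n₀, hn₀⟩ := Filter.eventually_atTop.1 hev
  refine ⟨max n₀ 1, fun n hn => ?_⟩
  have h1 := hn₀ n (le_trans (le_max_left _ _) hn)
  have hn1 : (1 : ℝ) ≤ n := by exact_mod_cast le_trans (le_max_right _ _) hn
  have hrn : (0 : ℝ) < (2 ^ δ) ^ n := by positivity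
  rw [pow_one, div_lt_iff₀ hrn] at h1
  have hrn' : ((2 : ℝ) ^ δ) ^ n = 2 ^ (δ * n) := by
    rw [Real.rpow_mul (by norm_num), Real.rpow_natCast]
  rw [hrn'] at h1
  set D : ℝ := 2 ^ ((β - δ) * n) with hD
  have hD1 : 1 ≤ D := by
    apply Real.one_le_rpow (by norm_num)
    apply mul_nonneg _ (by positivity)
    linarith [min_le_right ε β]
  have hmul : (2 : ℝ) ^ (β * n) = D * 2 ^ (δ * n) := by
    rw [hD, ← Real.rpow_add (by norm_num)]; congr 1; ring
  have hfl : (⌊(2 : ℝ) ^ ((β - ε) * n)⌋₊ : ℝ) ≤ D := by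
    refine (Nat.floor_le (by positivity)).trans ?_
    apply Real.rpow_le_rpow_of_exponent_le (by norm_num)
    apply mul_le_mul_of_nonneg_right _ (by positivity)
    linarith [min_le_left ε β]
  have hm := Nat.lt_floor_add_one ((2 : ℝ) ^ (β * n) / 4)
  set F := ⌊(2 : ℝ) ^ ((β - ε) * n)⌋₊
  set M := ⌊(2 : ℝ) ^ (β * n) / 4⌋₊
  have key : (((n + 5) * (2 * F + 1) + 2 * n : ℕ) : ℝ) < (M : ℝ) := by
    push_cast
    rw [hmul] at hm
    have a1 : ((n : ℝ) + 5) * (2 * F + 1) ≤ (6 * n) * (3 * D) := by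
      apply mul_le_mul <;> linarith
    have a2 : (n : ℝ) ≤ n * D := by nlinarith
    have a3 : D * (100 * n) ≤ D * 2 ^ (δ * n) :=
      mul_le_mul_of_nonneg_left (by linarith) (by linarith)
    nlinarith
  exact_mod_cast key

/-- Theorem 1.6, concrete form: for constants `0 < α < 2` and
`ε > 0`, for all large `n` there are `f, g` such that `f ⊞ g` is not the
pointwise AND of at most `2^{αn}` functions each of formula complexity at most
`2^{(1 - α/2 - ε)n}`. -/
theorem xor_composition_concrete (α ε : ℝ) (hα0 : 0 < α) (hα2 : α < 2) (hε : 0 < ε) :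
    ∃ n₀ : ℕ, ∀ n ≥ n₀,
      ∃ (f : (Fin n → Bool) → Bool) (g : (Fin n → Bool) → (Fin n → Bool)),
        ¬ ∃ (k : ℕ) (h : Fin k → (Fin n → Bool) → (Fin n → Bool) → Bool),
            (k : ℝ) ≤ 2 ^ (α * n) ∧
            (∀ i, (Lc2 (h i) : ℝ) ≤ 2 ^ ((1 - α / 2 - ε) * n)) ∧
            (∀ x y : Fin n → Bool,
              (f (fun j => xor (g x j) (y j)) = true ↔ ∀ i, h i x y = true)) := by
  classical
  obtain ⟨n₀, hn₀⟩ := numeric (1 - α / 2) ε (by linarith) hε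
  refine ⟨max n₀ 1, fun n hn => ?_⟩
  have hnum := hn₀ n (le_trans (le_max_left _ _) hn)
  obtain ⟨n, rfl⟩ : ∃ n', n = n' + 1 := ⟨n - 1, by
    have := le_trans (le_max_right _ _) hn; omega⟩
  set s := ⌊(2 : ℝ) ^ ((1 - α / 2 - ε) * ((n + 1 : ℕ) : ℝ))⌋₊ with hs
  set m := ⌊(2 : ℝ) ^ ((1 - α / 2) * ((n + 1 : ℕ) : ℝ)) / 4⌋₊ with hm
  let H : Finset ((Fin (n + 1) → Bool) → (Fin (n + 1) → Bool) → Bool) :=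
    Finset.univ.image (fun v : Fin (2 * s + 1) → Sy (Fin (n + 1) ⊕ Fin (n + 1)) =>
      fun x y => decodeWord v (Sum.elim x y))
  have hcardSy : Fintype.card (Sy (Fin (n + 1) ⊕ Fin (n + 1))) ≤ 2 ^ (n + 1 + 5) := by
    have : n < 2 ^ n := Nat.lt_two_pow_self
    simp only [Fintype.card_sum, Fintype.card_prod, Fintype.card_bool, Fintype.card_unit,
      Fintype.card_fin, pow_add]
    omega
  have hHc : H.card ≤ 2 ^ ((n + 1 + 5) * (2 * s + 1)) := by
    refine Finset.card_image_le.trans ?_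
    rw [Finset.card_univ, Fintype.card_fun, Fintype.card_fin, pow_mul]
    exact Nat.pow_le_pow_left hcardSy _
  have hH : H.card * (2 ^ (n + 1) * 2 ^ (n + 1)) < 2 ^ m := by
    calc H.card * (2 ^ (n + 1) * 2 ^ (n + 1))
        ≤ 2 ^ ((n + 1 + 5) * (2 * s + 1)) * (2 ^ (n + 1) * 2 ^ (n + 1)) :=
          Nat.mul_le_mul_right _ hHc
      _ = 2 ^ ((n + 1 + 5) * (2 * s + 1) + 2 * (n + 1)) := by
          rw [pow_add 2 _ (2 * (n + 1)), two_mul (n + 1), pow_add 2 (n + 1) (n + 1)]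
      _ < 2 ^ m := Nat.pow_lt_pow_right (by norm_num) hnum
  obtain ⟨f, g, hfg⟩ := combinatorial_core m H hH
  refine ⟨f, g, ?_⟩
  rintro ⟨k, h, hk, hL, heq⟩
  have hmem : ∀ i, h i ∈ H := by
    intro i
    obtain ⟨v, hv⟩ := decode_of_Lc _ s (Nat.le_floor (hL i))
    refine Finset.mem_image.2 ⟨v, Finset.mem_univ _, ?_⟩
    funext x y
    rw [hv]
    rfl
  have hfin := hfg k h hmem heq
  have hfinR : (2 : ℝ) ^ (n + 1) * 2 ^ (n + 1) ≤ 4 * (k * (m : ℝ) ^ 2) := by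
    exact_mod_cast hfin
  have hmle : (m : ℝ) ≤ 2 ^ ((1 - α / 2) * ((n + 1 : ℕ) : ℝ)) / 4 := Nat.floor_le (by positivity)
  set B : ℝ := 2 ^ ((1 - α / 2) * ((n + 1 : ℕ) : ℝ)) with hB
  set A : ℝ := 2 ^ (α * ((n + 1 : ℕ) : ℝ)) with hA
  have hAB : A * (B * B) = (2 : ℝ) ^ (n + 1) * 2 ^ (n + 1) := by
    rw [hA, hB, ← Real.rpow_add (by norm_num), ← Real.rpow_add (by norm_num),
      ← Real.rpow_natCast, ← Real.rpow_add (by norm_num)]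
    congr 1; ring
  have hApos : 0 < A := by positivity
  have hBpos : 0 < B := by positivity
  have h1 : (m : ℝ) ^ 2 ≤ (B / 4) ^ 2 := pow_le_pow_left₀ (by positivity) hmle 2
  have h2 : (k : ℝ) * (m : ℝ) ^ 2 ≤ A * (B / 4) ^ 2 :=
    mul_le_mul hk h1 (by positivity) hApos.le
  have h3 : 0 < A * (B * B) := by positivity
  nlinarith
end

section
/- For all real constants α and β with 0 < α < 2 and β < 3 − α/2, for all sufficiently large m, setting n = 2^m, there do NOT exist k ≤ n^α Boolean functions h_1, …, h_k on the input domain of Andr', each with L(h_i) ≤ n^β, whose pointwise AND equals the modified Andreev function Andr'. -/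
/-- The index type for the inputs of the modified Andreev function with
parameter `m` (and `n = 2^m`): `n` bits of the truth table of
`f : {0,1}^m → {0,1}`, `n·m` bits of the truth table of
`g : {0,1}^m → {0,1}^m`, and `2m` blocks of `n` bits `x_1, …, x_{2m}`. -/
abbrev AndrIdx (m : ℕ) : Type :=
  Fin (2 ^ m) ⊕ ((Fin (2 ^ m) × Fin m) ⊕ (Fin (m + m) × Fin (2 ^ m)))

/-- The position in a truth table (of length `2^m`) of a point `u ∈ {0,1}^m`. -/
def tabIdx {m : ℕ} (u : Fin m → Bool) : Fin (2 ^ m) :=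
  finFunctionFinEquiv (fun i => finTwoEquiv.symm (u i))

/-- The parity (XOR) of the bits of a Boolean string. -/
def parity {n : ℕ} (x : Fin n → Bool) : Bool :=
  decide ((Finset.univ.filter fun j : Fin n => x j = true).card % 2 = 1)

/-- The modified Andreev function `Andr'` (Definition 4.1): the first block is
the truth table of `f : {0,1}^m → {0,1}`, the second the truth table of
`g : {0,1}^m → {0,1}^m`, and on inputs `x_1, …, x_{2m} ∈ {0,1}^n` it outputs
`f(g(u) ⊕ v)` where `u = (⊕x_1, …, ⊕x_m)` and `v = (⊕x_{m+1}, …, ⊕x_{2m})`. -/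
def Andr (m : ℕ) (z : AndrIdx m → Bool) : Bool :=
  let f : (Fin m → Bool) → Bool := fun u => z (Sum.inl (tabIdx u))
  let g : (Fin m → Bool) → (Fin m → Bool) := fun u j => z (Sum.inr (Sum.inl (tabIdx u, j)))
  let x : Fin (m + m) → (Fin (2 ^ m) → Bool) := fun i j => z (Sum.inr (Sum.inr (i, j)))
  let u : Fin m → Bool := fun i => parity (x (Fin.castAdd m i))
  let v : Fin m → Bool := fun i => parity (x (Fin.natAdd m i))
  f (fun j => xor (g u j) (v j))

set_option linter.unusedSectionVars false

namespace AndrPf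

section Alg

variable {A : Type*} [NormedRing A] [StarRing A] [CStarRing A]

/-- The inner derivation. -/
def dd (N x : A) : A := N * x - x * N

theorem dd_mul (N x y : A) : dd N (x * y) = dd N x * y + x * dd N y := by
  unfold dd; noncomm_ring

theorem dd_add (N x y : A) : dd N (x + y) = dd N x + dd N y := by
  unfold dd; noncomm_ring

theorem dd_neg (N x : A) : dd N (-x) = - dd N x := by
  unfold dd; noncomm_ring

theorem dd_zero (N : A) : dd N 0 = 0 := by
  unfold dd; noncomm_ring

theorem dd_one (N : A) : dd N 1 = 0 := by
  unfold dd; noncomm_ring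

/-- `dd` as an additive map. -/
def ddHom (N : A) : A →+ A where
  toFun := dd N
  map_zero' := dd_zero N
  map_add' := dd_add N

theorem dd_sum {κ : Type*} (N : A) (s : Finset κ) (f : κ → A) :
    dd N (∑ i ∈ s, f i) = ∑ i ∈ s, dd N (f i) :=
  map_sum (ddHom N) f s

theorem dd_nsmul (N x : A) (c : ℕ) : dd N (c • x) = c • dd N x :=
  map_nsmul (ddHom N) c x

theorem leib (N a b : A) (n : ℕ) :
    (dd N)^[n] (a * b) = ∑ ij ∈ Finset.HasAntidiagonal.antidiagonal n,
      n.choose ij.1 • ((dd N)^[ij.1] a * (dd N)^[ij.2] b) := by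
  induction n with
  | zero => simp
  | succ n ih =>
    rw [Finset.sum_antidiagonal_choose_succ_nsmul
      (fun i j => (dd N)^[i] a * (dd N)^[j] b) n]
    simp only [Function.iterate_succ_apply', ih, dd_sum, dd_nsmul, dd_mul, smul_add,
      Finset.sum_add_distrib]
    rw [add_comm]
    congr 1
    refine Finset.sum_congr rfl fun ⟨i, j⟩ hij ↦ ?_
    rw [n.choose_symm_of_eq_add (Finset.HasAntidiagonal.mem_antidiagonal.1 hij).symm]

theorem sum_choose_anti (k : ℕ) :
    ∑ ij ∈ Finset.HasAntidiagonal.antidiagonal k, (k.choose ij.1 : ℝ) = 2 ^ k := by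
  rw [Finset.Nat.sum_antidiagonal_eq_sum_range_succ_mk]
  exact_mod_cast Nat.sum_range_choose k

theorem norm_nsmul_le' (c : ℕ) (x : A) : ‖c • x‖ ≤ (c : ℝ) * ‖x‖ := norm_nsmul_le

theorem mid_bound (k : ℕ) (t : ℕ → ℕ → A) (w : ℝ) (S : Finset (ℕ × ℕ))
    (hS : S ⊆ Finset.HasAntidiagonal.antidiagonal k)
    (hw : 0 ≤ w) (h : ∀ p ∈ S, ‖t p.1 p.2‖ ≤ w) :
    ‖∑ ij ∈ S, k.choose ij.1 • t ij.1 ij.2‖ ≤ 2 ^ k * w := by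
  calc ‖∑ ij ∈ S, k.choose ij.1 • t ij.1 ij.2‖
      ≤ ∑ ij ∈ S, ‖k.choose ij.1 • t ij.1 ij.2‖ := norm_sum_le _ _
    _ ≤ ∑ ij ∈ S, (k.choose ij.1 : ℝ) * w := by
        refine Finset.sum_le_sum fun p hp => (norm_nsmul_le' _ _).trans ?_
        exact mul_le_mul_of_nonneg_left (h p hp) (by positivity)
    _ ≤ ∑ ij ∈ Finset.HasAntidiagonal.antidiagonal k, (k.choose ij.1 : ℝ) * w := by
        refine Finset.sum_le_sum_of_subset_of_nonneg hS fun _ _ _ => by positivity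
    _ = 2 ^ k * w := by rw [← Finset.sum_mul, sum_choose_anti]

/-- self-adjoint projections -/
structure Prj (P : A) : Prop where
  sa : star P = P
  idem : P * P = P

theorem Prj.norm_le {P : A} (h : Prj P) : ‖P‖ ≤ 1 := by
  have h1 := CStarRing.norm_star_mul_self (x := P)
  rw [h.sa, h.idem] at h1
  by_contra hc
  push Not at hc
  nlinarith

theorem Prj.compl {P : A} (h : Prj P) : Prj (1 - P) := by
  refine ⟨by simp [h.sa], ?_⟩
  have := h.idem
  calc (1 - P) * (1 - P) = 1 - P - P + P * P := by noncomm_ring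
    _ = 1 - P := by rw [this]; noncomm_ring

theorem Prj.mul {P Q : A} (h : Prj P) (h' : Prj Q) (hc : P * Q = Q * P) : Prj (P * Q) := by
  refine ⟨by rw [star_mul, h.sa, h'.sa, hc], ?_⟩
  calc P * Q * (P * Q) = P * (Q * P) * Q := by noncomm_ring
    _ = (P * P) * (Q * Q) := by rw [← hc]; noncomm_ring
    _ = P * Q := by rw [h.idem, h'.idem]

theorem pyth {P : A} (h : Prj P) (z : A) : ‖z‖ ^ 2 ≤ ‖P * z‖ ^ 2 + ‖(1 - P) * z‖ ^ 2 := by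
  have e : star z * z = star (P * z) * (P * z) + star ((1 - P) * z) * ((1 - P) * z) := by
    rw [star_mul, star_mul, h.sa, h.compl.sa]
    calc star z * z = star z * (P + (1 - P)) * z := by noncomm_ring
      _ = star z * (P * P + (1 - P) * (1 - P)) * z := by rw [h.idem, h.compl.idem]
      _ = _ := by noncomm_ring
  calc ‖z‖ ^ 2 = ‖star z * z‖ := by rw [CStarRing.norm_star_mul_self, sq]
    _ ≤ ‖star (P * z) * (P * z)‖ + ‖star ((1 - P) * z) * ((1 - P) * z)‖ := by
        rw [e]; exact norm_add_le _ _
    _ = _ := by rw [CStarRing.norm_star_mul_self, CStarRing.norm_star_mul_self, sq, sq]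

theorem norm_mul_prj {P : A} (h : Prj P) (x : A) : ‖x * P‖ ≤ ‖x‖ :=
  (norm_mul_le _ _).trans (mul_le_of_le_one_right (norm_nonneg _) h.norm_le)

theorem norm_prj_mul {P : A} (h : Prj P) (x : A) : ‖P * x‖ ≤ ‖x‖ :=
  (norm_mul_le _ _).trans (mul_le_of_le_one_left (norm_nonneg _) h.norm_le)

/-- The off-diagonal block norm. -/
def offd (N : A) (k : ℕ) (P : A) : ℝ := ‖(1 - P) * (dd N)^[k] P * P‖

theorem iter_one_sub (N P : A) (k : ℕ) (hk : 0 < k) :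
    (dd N)^[k] (1 - P) = - (dd N)^[k] P := by
  obtain ⟨k, rfl⟩ : ∃ j, k = j + 1 := ⟨k - 1, by omega⟩
  clear hk
  induction k with
  | zero => simp [dd]; noncomm_ring
  | succ k ih =>
    rw [Function.iterate_succ_apply', ih, dd_neg, Function.iterate_succ_apply' _ (k + 1)]

theorem star_iter (N P : A) (hN : star N = N) (hP : star P = P) (k : ℕ) :
    star ((dd N)^[k] P) = (-1) ^ k * (dd N)^[k] P := by
  induction k with
  | zero => simp [hP]
  | succ k ih =>
    rw [Function.iterate_succ_apply']
    have : ∀ x : A, star (dd N x) = - dd N (star x) := by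
      intro x; simp only [dd, star_sub, star_mul, hN]; noncomm_ring
    rw [this, ih, pow_succ]
    rcases neg_one_pow_eq_or A k with h | h <;> rw [h] <;> simp [dd_neg]

theorem offd_compl (N P : A) (hN : star N = N) (hP : Prj P) (k : ℕ) (hk : 0 < k) :
    offd N k (1 - P) = offd N k P := by
  unfold offd
  rw [iter_one_sub N P k hk]
  have e : star ((1 - P) * (dd N)^[k] P * P) = P * ((-1) ^ k * (dd N)^[k] P) * (1 - P) := by
    rw [star_mul, star_mul, star_iter N P hN hP.sa, hP.sa, hP.compl.sa]; noncomm_ring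
  rw [← norm_star ((1 - P) * (dd N)^[k] P * P), e]
  rcases neg_one_pow_eq_or A k with h | h <;> rw [h] <;> simp

theorem norm_le_offd (N P : A) (hN : star N = N) (hP : Prj P) (k : ℕ) (hk : 0 < k) (w : ℝ)
    (hw : 0 ≤ w)
    (h : ∀ i j, i + j = k → 0 < i → 0 < j → ‖(dd N)^[i] P‖ * ‖(dd N)^[j] P‖ ≤ w) :
    ‖(dd N)^[k] P‖ ≤ 2 * offd N k P + 2 * (2 ^ k * w) := by
  set Z := (dd N)^[k] P with hZ
  set S := (Finset.HasAntidiagonal.antidiagonal k).filter fun p => 0 < p.1 ∧ 0 < p.2 with hS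
  set R := ∑ ij ∈ S, k.choose ij.1 • ((dd N)^[ij.1] P * (dd N)^[ij.2] P) with hR
  have hRn : ‖R‖ ≤ 2 ^ k * w := by
    refine mid_bound k (fun i j => (dd N)^[i] P * (dd N)^[j] P) w S (Finset.filter_subset _ _) hw ?_
    intro p hp
    simp only [hS, Finset.mem_filter, Finset.HasAntidiagonal.mem_antidiagonal] at hp
    exact (norm_mul_le _ _).trans (h _ _ hp.1 hp.2.1 hp.2.2)
  have hdec : Z = Z * P + P * Z + R := by
    have h1 := leib N P P k
    rw [hP.idem, ← hZ, ← Finset.sum_filter_add_sum_filter_not _ (fun p : ℕ × ℕ => 0 < p.1 ∧ 0 < p.2)]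
      at h1
    have h2 : (Finset.HasAntidiagonal.antidiagonal k).filter (fun p : ℕ × ℕ => ¬ (0 < p.1 ∧ 0 < p.2))
        = {(0, k), (k, 0)} := by
      ext ⟨a, b⟩
      simp only [Finset.mem_filter, Finset.HasAntidiagonal.mem_antidiagonal, Finset.mem_insert,
        Finset.mem_singleton, Prod.mk.injEq]
      omega
    rw [h2, Finset.sum_pair (by simp; omega)] at h1
    simp only [Function.iterate_zero, id_eq, Nat.choose_zero_right, one_smul,
      Nat.choose_self] at h1
    rw [← hZ] at h1
    refine h1.trans ?_
    rw [add_comm, add_comm (P * Z)]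
  have hPP : P * Z * P = - (P * R * P) := by
    have : P * Z * P = P * (Z * P + P * Z + R) * P := by rw [← hdec]
    have e2 : P * (Z * P + P * Z + R) * P = P * Z * (P * P) + (P * P) * Z * P + P * R * P := by
      noncomm_ring
    rw [e2, hP.idem] at this
    have h3 : P * Z * P + P * R * P = 0 := by
      have := sub_eq_zero.2 this.symm
      rw [← this]; abel
    exact eq_neg_of_add_eq_zero_left h3
  have hQQ : (1 - P) * Z * (1 - P) = (1 - P) * R * (1 - P) := by
    have e0 : P * (1 - P) = 0 := by rw [mul_sub, hP.idem]; simp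
    have e1 : (1 - P) * P = 0 := by rw [sub_mul, hP.idem]; simp
    calc (1 - P) * Z * (1 - P) = (1 - P) * (Z * P + P * Z + R) * (1 - P) := by rw [← hdec]
      _ = (1 - P) * Z * (P * (1 - P)) + ((1 - P) * P) * Z * (1 - P) + (1 - P) * R * (1 - P) := by
        noncomm_ring
      _ = _ := by rw [e0, e1]; simp
  have hsplit : Z = P * Z * P + (1 - P) * Z * (1 - P) + (1 - P) * Z * P + P * Z * (1 - P) := by
    noncomm_ring
  have hc : ‖P * Z * (1 - P)‖ = offd N k P := by
    have := offd_compl N P hN hP k hk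
    rw [← this]; unfold offd
    rw [iter_one_sub N P k hk, ← hZ]; simp
  have b1 : ‖P * Z * P‖ ≤ 2 ^ k * w := by
    rw [hPP, norm_neg]
    exact (norm_mul_prj hP _).trans ((norm_prj_mul hP _).trans hRn)
  have b2 : ‖(1 - P) * Z * (1 - P)‖ ≤ 2 ^ k * w := by
    rw [hQQ]
    exact (norm_mul_prj hP.compl _).trans ((norm_prj_mul hP.compl _).trans hRn)
  have b3 : ‖(1 - P) * Z * P‖ = offd N k P := rfl
  calc ‖Z‖ = ‖P * Z * P + (1 - P) * Z * (1 - P) + (1 - P) * Z * P + P * Z * (1 - P)‖ := by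
        rw [← hsplit]
    _ ≤ ‖P * Z * P‖ + ‖(1 - P) * Z * (1 - P)‖ + ‖(1 - P) * Z * P‖ + ‖P * Z * (1 - P)‖ := by
        refine (norm_add_le _ _).trans (add_le_add_left ?_ _)
        refine (norm_add_le _ _).trans (add_le_add_left ?_ _)
        exact norm_add_le _ _
    _ ≤ _ := by rw [hc, b3]; linarith

theorem half_offd (N P Q : A) (hP : Prj P) (hQ : Prj Q) (hc : P * Q = Q * P)
    (k : ℕ) (hk : 0 < k) (w : ℝ) (hw : 0 ≤ w)
    (h : ∀ i j, i + j = k → 0 < i → 0 < j → ‖(dd N)^[i] P‖ * ‖(dd N)^[j] Q‖ ≤ w) :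
    ‖(1 - P) * (dd N)^[k] (P * Q) * (P * Q)‖ ≤ offd N k P + 2 ^ k * w := by
  have e1 : (1 - P) * P = 0 := by rw [sub_mul, hP.idem]; simp
  set t : ℕ → ℕ → A := fun i j => (1 - P) * (dd N)^[i] P * (dd N)^[j] Q * (P * Q) with ht
  have e2 : (1 - P) * (dd N)^[k] (P * Q) * (P * Q) =
      ∑ ij ∈ Finset.HasAntidiagonal.antidiagonal k, k.choose ij.1 • t ij.1 ij.2 := by
    rw [leib, Finset.mul_sum, Finset.sum_mul]
    refine Finset.sum_congr rfl fun p _ => ?_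
    simp only [ht, mul_smul_comm, smul_mul_assoc, mul_assoc]
  rw [e2, ← Finset.add_sum_erase _ _ (show (k, 0) ∈ Finset.HasAntidiagonal.antidiagonal k by simp)]
  refine (norm_add_le _ _).trans (add_le_add ?_ ?_)
  · have : t k 0 = (1 - P) * (dd N)^[k] P * P * Q := by
      simp only [ht, Function.iterate_zero, id_eq]
      calc (1 - P) * (dd N)^[k] P * Q * (P * Q) = (1 - P) * (dd N)^[k] P * ((Q * P) * Q) := by
            noncomm_ring
        _ = (1 - P) * (dd N)^[k] P * (P * (Q * Q)) := by rw [← hc]; noncomm_ring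
        _ = _ := by rw [hQ.idem]; noncomm_ring
    simp only [Nat.choose_self, one_smul, this]
    exact norm_mul_prj hQ _
  · refine mid_bound k t w _ (Finset.erase_subset _ _) hw ?_
    rintro ⟨i, j⟩ hp
    simp only [Finset.mem_erase, Finset.HasAntidiagonal.mem_antidiagonal, ne_eq, Prod.mk.injEq] at hp
    rcases Nat.eq_zero_or_pos i with hi | hi
    · subst hi
      simp only [ht, Function.iterate_zero, id_eq, e1, zero_mul, norm_zero]
      exact hw
    · have hj : 0 < j := by omega
      simp only [ht]
      refine (norm_mul_prj (hP.mul hQ hc) _).trans ?_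
      rw [mul_assoc]
      refine (norm_prj_mul hP.compl _).trans ((norm_mul_le _ _).trans (h i j hp.2 hi hj))

theorem offd_mul (N P Q : A) (hP : Prj P) (hQ : Prj Q) (hc : P * Q = Q * P)
    (k : ℕ) (hk : 0 < k) (w : ℝ) (hw : 0 ≤ w)
    (h : ∀ i j, i + j = k → 0 < i → 0 < j → ‖(dd N)^[i] P‖ * ‖(dd N)^[j] Q‖ ≤ w) :
    offd N k (P * Q) ^ 2 ≤ (offd N k P + 2 ^ k * w) ^ 2 + (offd N k Q + 2 ^ k * w) ^ 2 := by
  have h1 := half_offd N P Q hP hQ hc k hk w hw h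
  have h2 := half_offd N Q P hQ hP hc.symm k hk w hw
    (fun i j hij hi hj => by rw [mul_comm]; exact h j i (by omega) hj hi)
  have hp := pyth hP ((1 - P * Q) * (dd N)^[k] (P * Q) * (P * Q))
  have e1 : (1 - P) * ((1 - P * Q) * (dd N)^[k] (P * Q) * (P * Q)) =
      (1 - P) * (dd N)^[k] (P * Q) * (P * Q) := by
    have : (1 - P) * (1 - P * Q) = 1 - P := by
      calc (1 - P) * (1 - P * Q) = 1 - P - P * Q + P * P * Q := by noncomm_ring
        _ = _ := by rw [hP.idem]; noncomm_ring
    calc _ = ((1 - P) * (1 - P * Q)) * (dd N)^[k] (P * Q) * (P * Q) := by noncomm_ring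
      _ = _ := by rw [this]
  have e2 : P * ((1 - P * Q) * (dd N)^[k] (P * Q) * (P * Q)) =
      P * ((1 - Q) * (dd N)^[k] (Q * P) * (Q * P)) := by
    have : P * (1 - P * Q) = P * (1 - Q) := by
      calc P * (1 - P * Q) = P - P * P * Q := by noncomm_ring
        _ = _ := by rw [hP.idem]; noncomm_ring
    calc _ = (P * (1 - P * Q)) * (dd N)^[k] (P * Q) * (P * Q) := by noncomm_ring
      _ = _ := by rw [this, hc]; noncomm_ring
  rw [e1, e2] at hp
  have h3 := (norm_prj_mul hP ((1 - Q) * (dd N)^[k] (Q * P) * (Q * P))).trans h2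
  have g1 := pow_le_pow_left₀ (norm_nonneg _) h3 2
  have g2 := pow_le_pow_left₀ (norm_nonneg _) h1 2
  unfold offd at *
  linarith

end Alg

end AndrPf

namespace AndrPf

/-- Formulas with constants (constants have size 0). -/
inductive CF (ι : Type) : Type
  | cst (b : Bool) : CF ι
  | leaf (i : ι) (b : Bool) : CF ι
  | and (φ ψ : CF ι) : CF ι
  | or (φ ψ : CF ι) : CF ι

namespace CF

/-- evaluation -/
def eval {ι : Type} : CF ι → (ι → Bool) → Bool
  | cst b, _ => b
  | leaf i b, x => if b then x i else !(x i)
  | and φ ψ, x => φ.eval x && ψ.eval x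
  | or φ ψ, x => φ.eval x || ψ.eval x

/-- number of leaves -/
def size {ι : Type} : CF ι → ℕ
  | cst _ => 0
  | leaf _ _ => 1
  | and φ ψ => φ.size + ψ.size
  | or φ ψ => φ.size + ψ.size

/-- depth -/
def depth {ι : Type} : CF ι → ℕ
  | cst _ => 0
  | leaf _ _ => 0
  | and φ ψ => max φ.depth ψ.depth + 1
  | or φ ψ => max φ.depth ψ.depth + 1

end CF

/-- flip coordinate `j` -/
def fl {ι : Type} [DecidableEq ι] (j : ι) (x : ι → Bool) : ι → Bool :=
  Function.update x j (!x j)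

theorem fl_fl {ι : Type} [DecidableEq ι] (j : ι) (x : ι → Bool) : fl j (fl j x) = x := by
  funext i; by_cases h : i = j
  · subst h; simp [fl]
  · simp [fl, h]

theorem fl_comm {ι : Type} [DecidableEq ι] (j k : ι) (x : ι → Bool) :
    fl j (fl k x) = fl k (fl j x) := by
  by_cases hjk : j = k
  · subst hjk; rfl
  funext i
  by_cases h : i = j
  · subst h; simp [fl, hjk]
  · by_cases h' : i = k
    · subst h'; simp [fl, h]
    · simp [fl, h, h']

theorem fl_ne {ι : Type} [DecidableEq ι] {i j : ι} (h : i ≠ j) (x : ι → Bool) :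
    fl j x i = x i := by simp [fl, h]

theorem fl_same {ι : Type} [DecidableEq ι] (j : ι) (x : ι → Bool) :
    fl j x j = !x j := by simp [fl]

theorem fl_eq_iff {ι : Type} [DecidableEq ι] (j : ι) (x y : ι → Bool) :
    y = fl j x ↔ x = fl j y := by
  constructor <;> (rintro rfl; rw [fl_fl])

open scoped Matrix.Norms.L2Operator

section Mat

variable {ι : Type} [Fintype ι] [DecidableEq ι]

/-- flip matrix -/
noncomputable def Flm (j : ι) : Matrix (ι → Bool) (ι → Bool) ℝ :=
  Matrix.of fun x y => if y = fl j x then 1 else 0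

theorem Flm_mul (j : ι) (M : Matrix (ι → Bool) (ι → Bool) ℝ) (x y : ι → Bool) :
    (Flm j * M) x y = M (fl j x) y := by
  simp [Matrix.mul_apply, Flm]

theorem mul_Flm (j : ι) (M : Matrix (ι → Bool) (ι → Bool) ℝ) (x y : ι → Bool) :
    (M * Flm j) x y = M x (fl j y) := by
  simp [Matrix.mul_apply, Flm, fl_eq_iff j _ y]

theorem Flm_mulVec (j : ι) (h : (ι → Bool) → ℝ) (x : ι → Bool) :
    (Flm j).mulVec h x = h (fl j x) := by
  simp [Matrix.mulVec, dotProduct, Flm]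

theorem Flm_star (j : ι) : star (Flm j) = Flm j := by
  ext x y
  simp only [Matrix.star_apply, Flm, Matrix.of_apply, star_trivial]
  simp only [fl_eq_iff j x y]

theorem Flm_sq (j : ι) : Flm j * Flm j = 1 := by
  ext x y
  rw [Flm_mul]
  simp only [Flm, Matrix.of_apply, fl_fl, Matrix.one_apply, eq_comm]

theorem Flm_comm (i j : ι) : Flm i * Flm j = Flm j * Flm i := by
  ext x y
  rw [Flm_mul, Flm_mul]
  simp only [Flm, Matrix.of_apply, fl_comm i j]

/-- diagonal projection -/
noncomputable def dg (h : (ι → Bool) → Bool) : Matrix (ι → Bool) (ι → Bool) ℝ :=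
  Matrix.diagonal fun x => if h x then 1 else 0

theorem dg_prj (h : (ι → Bool) → Bool) : Prj (dg h) := by
  constructor
  · simp [dg, Matrix.star_eq_conjTranspose]
  · simp [dg, Matrix.diagonal_mul_diagonal]

theorem dg_comm (h h' : (ι → Bool) → Bool) : dg h * dg h' = dg h' * dg h := by
  simp [dg, Matrix.diagonal_mul_diagonal, mul_comm]

theorem dg_and (h h' : (ι → Bool) → Bool) : dg (fun x => h x && h' x) = dg h * dg h' := by
  rw [dg, dg, dg, Matrix.diagonal_mul_diagonal]
  congr 1; funext x
  cases h x <;> cases h' x <;> simp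

theorem dg_not (h : (ι → Bool) → Bool) : dg (fun x => !h x) = 1 - dg h := by
  rw [dg, dg, ← Matrix.diagonal_one, Matrix.diagonal_sub]
  congr 1; funext x
  cases h x <;> simp

theorem dg_const (b : Bool) : dg (fun _ : ι → Bool => b) = if b then 1 else 0 := by
  cases b <;> simp [dg]

theorem Flm_dg (j : ι) (h : (ι → Bool) → Bool) (hh : ∀ x, h (fl j x) = h x) :
    Flm j * dg h = dg h * Flm j := by
  ext x y
  rw [Flm_mul, mul_Flm]
  simp only [dg, Matrix.diagonal_apply, hh]
  congr 1
  rw [← fl_eq_iff j x y]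
  exact propext eq_comm

/-- the number operator -/
noncomputable def Nm (ι : Type) [Fintype ι] [DecidableEq ι] :
    Matrix (ι → Bool) (ι → Bool) ℝ := ∑ j : ι, (1 - Flm j)

theorem Nm_star : star (Nm ι) = Nm ι := by
  simp [Nm, star_sum, Flm_star]

theorem one_prj : Prj (1 : Matrix (ι → Bool) (ι → Bool) ℝ) := ⟨by simp, by simp⟩

theorem norm_Flm (j : ι) : ‖Flm j‖ ≤ 1 := by
  have h := CStarRing.norm_star_mul_self (x := Flm j)
  rw [Flm_star, Flm_sq] at h
  have h1 : ‖(1 : Matrix (ι → Bool) (ι → Bool) ℝ)‖ ≤ 1 := one_prj.norm_le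
  by_contra hc
  push Not at hc
  nlinarith

end Mat

theorem dd_split {A : Type*} [NormedRing A] (M R P : A) (h1 : Commute R M)
    (h2 : Commute R P) (k : ℕ) :
    (dd (M + R))^[k] P = (dd M)^[k] P ∧ Commute R ((dd M)^[k] P) := by
  induction k with
  | zero => exact ⟨rfl, h2⟩
  | succ k ih =>
    rw [Function.iterate_succ_apply', Function.iterate_succ_apply', ih.1]
    have hc := ih.2
    refine ⟨?_, ?_⟩
    · have := hc.eq
      change (M + R) * _ - _ * (M + R) = M * _ - _ * M
      rw [add_mul, mul_add, this]; abel
    · exact (h1.mul_right hc).sub_right (hc.mul_right h1)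

section Mat2

variable {ι : Type} [Fintype ι] [DecidableEq ι]

theorem leaf_bound (i : ι) (k : ℕ) :
    ‖(dd (Nm ι))^[k] (dg fun x => x i)‖ ≤ 4 ^ k := by
  set R := ∑ j ∈ Finset.univ.erase i, (1 - Flm (ι := ι) j) with hR
  have hN : Nm ι = (1 - Flm i) + R := by
    rw [Nm, hR, Finset.add_sum_erase _ (fun j => (1 - Flm (ι := ι) j)) (Finset.mem_univ i)]
  have c1 : Commute R (1 - Flm i) := by
    refine Commute.sum_left _ _ _ fun j _ => ?_
    exact ((Commute.one_left _).sub_left (((Commute.one_right _)).sub_right (Flm_comm j i)))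
  have c2 : Commute R (dg fun x => x i) := by
    refine Commute.sum_left _ _ _ fun j hj => ?_
    refine (Commute.one_left _).sub_left (Flm_dg j _ fun x => ?_)
    exact fl_ne (Finset.ne_of_mem_erase hj).symm x
  rw [hN, (dd_split _ _ _ c1 c2 k).1]
  induction k with
  | zero => simpa using (dg_prj (ι := ι) fun x => x i).norm_le
  | succ k ih =>
    rw [Function.iterate_succ_apply']
    set Z := (dd (1 - Flm i))^[k] (dg fun x => x i)
    have hM : ‖(1 - Flm i : Matrix (ι → Bool) (ι → Bool) ℝ)‖ ≤ 2 := by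
      refine (norm_sub_le _ _).trans ?_
      have := (one_prj (ι := ι)).norm_le
      have := norm_Flm i
      linarith
    have h1 := norm_mul_le (1 - Flm i) Z
    have h2 := norm_mul_le Z (1 - Flm i)
    have h3 := norm_sub_le ((1 - Flm i) * Z) (Z * (1 - Flm i))
    have h4 := norm_nonneg Z
    have h5 : ‖(1 - Flm i : Matrix (ι → Bool) (ι → Bool) ℝ)‖ * ‖Z‖ ≤ 2 * 4 ^ k :=
      mul_le_mul hM ih h4 (by norm_num)
    unfold dd
    rw [pow_succ]
    nlinarith

theorem iter_zero' {A : Type*} [NormedRing A] [StarRing A] [CStarRing A] (N : A) (k : ℕ) : (dd N)^[k] 0 = 0 := by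
  induction k with
  | zero => rfl
  | succ k ih => rw [Function.iterate_succ_apply', ih, dd_zero]

theorem iter_one' {A : Type*} [NormedRing A] [StarRing A] [CStarRing A] (N : A) (k : ℕ) (hk : 0 < k) :
    (dd N)^[k] 1 = 0 := by
  obtain ⟨k, rfl⟩ : ∃ j, k = j + 1 := ⟨k - 1, by omega⟩
  rw [Function.iterate_succ_apply, dd_one, iter_zero']

theorem dg_or (h h' : (ι → Bool) → Bool) :
    dg (fun x => h x || h' x) = 1 - (1 - dg h) * (1 - dg h') := by
  rw [← dg_not, ← dg_not, ← dg_and, ← dg_not]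
  congr 1; funext x; simp

end Mat2

theorem pow_super (a b : ℝ) (ha : 0 ≤ a) (hb : 0 ≤ b) (k : ℕ) (hk : 0 < k) :
    a ^ k + b ^ k ≤ (a + b) ^ k := by
  obtain ⟨k, rfl⟩ : ∃ j, k = j + 1 := ⟨k - 1, by omega⟩
  have h1 : a ^ k ≤ (a + b) ^ k := pow_le_pow_left₀ ha (by linarith) k
  have h2 : b ^ k ≤ (a + b) ^ k := pow_le_pow_left₀ hb (by linarith) k
  rw [pow_succ, pow_succ, pow_succ]
  nlinarith

theorem pow_mid (a b : ℝ) (ha : 0 ≤ a) (hb : 0 ≤ b) (i j : ℕ) (hi : 0 < i) (hj : 0 < j) :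
    a ^ i * b ^ j ≤ (a + b) ^ (i + j) - a ^ (i + j) - b ^ (i + j) := by
  have h1 := pow_super a b ha hb i hi
  have h2 := pow_super a b ha hb j hj
  have h3 := mul_le_mul h1 h2 (by positivity) (by positivity)
  rw [pow_add, pow_add, pow_add]
  have : 0 ≤ b ^ i * a ^ j := by positivity
  nlinarith

theorem amgm (x e D : ℝ) (hD : 1 ≤ D) :
    (x + e) ^ 2 ≤ (1 + 1 / D) * x ^ 2 + (1 + D) * e ^ 2 := by
  have hD0 : 0 < D := by linarith
  have : (1 + 1 / D) * x ^ 2 + (1 + D) * e ^ 2 - (x + e) ^ 2 = (x - D * e) ^ 2 / D := by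
    field_simp; ring
  have h2 : 0 ≤ (x - D * e) ^ 2 / D := by positivity
  linarith

/-- the inductive step, gate version -/
theorem gate_step {ι : Type} [Fintype ι] [DecidableEq ι] (k : ℕ) (hk : 0 < k) (W D : ℝ)
    (hW : 0 ≤ W) (hD : 1 ≤ D) (P Q : Matrix (ι → Bool) (ι → Bool) ℝ) (hP : Prj P) (hQ : Prj Q)
    (hc : P * Q = Q * P) (a b : ℝ) (ha : 0 ≤ a) (hb : 0 ≤ b)
    (h1 : ∀ j < k, 0 < j → ‖(dd (Nm ι))^[j] P‖ ≤ W * √a ^ j)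
    (h2 : ∀ j < k, 0 < j → ‖(dd (Nm ι))^[j] Q‖ ≤ W * √b ^ j)
    (M : ℝ) (hM : 2 * (1 + D) * (2 ^ k * W ^ 2) ^ 2 ≤ M) (da db : ℕ)
    (hYa : offd (Nm ι) k P ^ 2 ≤ (1 + 1 / D) ^ da * M * a ^ k)
    (hYb : offd (Nm ι) k Q ^ 2 ≤ (1 + 1 / D) ^ db * M * b ^ k) :
    offd (Nm ι) k (P * Q) ^ 2 ≤ (1 + 1 / D) ^ (max da db + 1) * M * (a + b) ^ k := by
  set G := (a + b) ^ k - a ^ k - b ^ k with hG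
  have hG0 : 0 ≤ G := by have := pow_super a b ha hb k hk; linarith
  have hM0 : 0 ≤ M := le_trans (by positivity) hM
  have key := offd_mul (Nm ι) P Q hP hQ hc k hk (W ^ 2 * √G) (by positivity) (by
    intro i j hij hi hj
    refine (mul_le_mul (h1 i (by omega) hi) (h2 j (by omega) hj) (norm_nonneg _) (by positivity)).trans ?_
    have : √a ^ i * √b ^ j ≤ √G := by
      apply Real.le_sqrt_of_sq_le
      have e : (√a ^ i * √b ^ j) ^ 2 = a ^ i * b ^ j := by
        rw [mul_pow, ← pow_mul, ← pow_mul, mul_comm i, mul_comm j, pow_mul, pow_mul,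
          Real.sq_sqrt ha, Real.sq_sqrt hb]
      rw [e, hG, ← hij]
      exact pow_mid a b ha hb i j hi hj
    calc W * √a ^ i * (W * √b ^ j) = W ^ 2 * (√a ^ i * √b ^ j) := by ring
      _ ≤ _ := by gcongr)
  have g1 := amgm (offd (Nm ι) k P) (2 ^ k * (W ^ 2 * √G)) D hD
  have g2 := amgm (offd (Nm ι) k Q) (2 ^ k * (W ^ 2 * √G)) D hD
  have e : (2 ^ k * (W ^ 2 * √G)) ^ 2 = (2 ^ k * W ^ 2) ^ 2 * G := by
    rw [← mul_assoc, mul_pow, Real.sq_sqrt hG0]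
  rw [e] at g1 g2
  set q := 1 + 1 / D with hq
  have hq1 : 1 ≤ q := by
    have : 0 ≤ 1 / D := by positivity
    linarith
  have qa : q * (q ^ da * M * a ^ k) ≤ q ^ (max da db + 1) * M * a ^ k := by
    have : q ^ (da + 1) ≤ q ^ (max da db + 1) := pow_le_pow_right₀ hq1 (by omega)
    calc q * (q ^ da * M * a ^ k) = q ^ (da + 1) * M * a ^ k := by rw [pow_succ]; ring
      _ ≤ _ := by gcongr
  have qb : q * (q ^ db * M * b ^ k) ≤ q ^ (max da db + 1) * M * b ^ k := by
    have : q ^ (db + 1) ≤ q ^ (max da db + 1) := pow_le_pow_right₀ hq1 (by omega)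
    calc q * (q ^ db * M * b ^ k) = q ^ (db + 1) * M * b ^ k := by rw [pow_succ]; ring
      _ ≤ _ := by gcongr
  have qG : 2 * (1 + D) * (2 ^ k * W ^ 2) ^ 2 * G ≤ q ^ (max da db + 1) * M * G := by
    have h1 : (1 : ℝ) ≤ q ^ (max da db + 1) := one_le_pow₀ hq1
    have h2 : M ≤ q ^ (max da db + 1) * M := le_mul_of_one_le_left hM0 h1
    exact mul_le_mul_of_nonneg_right (hM.trans h2) hG0
  have ma := mul_le_mul_of_nonneg_left hYa (by linarith : 0 ≤ q)
  have mb := mul_le_mul_of_nonneg_left hYb (by linarith : 0 ≤ q)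
  have eG : (a + b) ^ k = a ^ k + b ^ k + G := by rw [hG]; ring
  rw [eG]
  nlinarith

theorem size_and {ι : Type} (φ ψ : CF ι) : ((CF.and φ ψ).size : ℝ) = φ.size + ψ.size := by
  simp [CF.size]
theorem size_or {ι : Type} (φ ψ : CF ι) : ((CF.or φ ψ).size : ℝ) = φ.size + ψ.size := by
  simp [CF.size]

theorem offd_formula {ι : Type} [Fintype ι] [DecidableEq ι] (k : ℕ) (hk : 0 < k) (W : ℝ) (D : ℕ)
    (hW : 0 ≤ W) (hD : 1 ≤ D)
    (h1 : ∀ φ : CF ι, φ.depth ≤ D → ∀ j < k, ‖(dd (Nm ι))^[j] (dg φ.eval)‖ ≤ W * √φ.size ^ j)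
    (M : ℝ) (hM : 2 * (1 + (D : ℝ)) * (2 ^ k * W ^ 2) ^ 2 + 16 ^ k ≤ M) (φ : CF ι)
    (hφ : φ.depth ≤ D) :
    offd (Nm ι) k (dg φ.eval) ^ 2 ≤ (1 + 1 / (D : ℝ)) ^ φ.depth * M * (φ.size : ℝ) ^ k := by
  have hD' : (1 : ℝ) ≤ D := by exact_mod_cast hD
  have p16 : (0 : ℝ) < 16 ^ k := by positivity
  have pp : 0 ≤ 2 * (1 + (D : ℝ)) * (2 ^ k * W ^ 2) ^ 2 := by positivity
  induction φ with
  | cst b =>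
    have e : dg (CF.eval (CF.cst b : CF ι)) = if b then 1 else 0 := dg_const b
    have : offd (Nm ι) k (dg (CF.eval (CF.cst b : CF ι))) = 0 := by
      rw [e]; unfold offd
      cases b <;> simp
    rw [this]
    simp [CF.size, hk.ne']
  | leaf i b =>
    have hb : offd (Nm ι) k (dg fun x => x i) ≤ 4 ^ k := by
      unfold offd
      exact (norm_mul_prj (dg_prj _) _).trans
        ((norm_prj_mul (dg_prj _).compl _).trans (leaf_bound i k))
    have hb2 : offd (Nm ι) k (dg (CF.eval (CF.leaf i b))) ≤ 4 ^ k := by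
      cases b
      · have : dg (CF.eval (CF.leaf i false)) = 1 - dg fun x => x i := by
          rw [← dg_not]; congr 1
        rw [this, offd_compl _ _ Nm_star (dg_prj _) k hk]
        exact hb
      · have : CF.eval (CF.leaf i true) = fun x => x i := by funext x; simp [CF.eval]
        rw [this]; exact hb
    have h0 : 0 ≤ offd (Nm ι) k (dg (CF.eval (CF.leaf i b))) := norm_nonneg _
    have := pow_le_pow_left₀ h0 hb2 2
    simp only [CF.depth, CF.size, pow_zero, Nat.cast_one, one_pow, mul_one, one_mul]
    have e : ((4 : ℝ) ^ k) ^ 2 = 16 ^ k := by rw [← pow_mul, mul_comm, pow_mul]; norm_num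
    linarith
  | and φ ψ ih1 ih2 =>
    simp only [CF.depth] at hφ
    have d1 : φ.depth ≤ D := by omega
    have d2 : ψ.depth ≤ D := by omega
    have e : dg (CF.and φ ψ).eval = dg φ.eval * dg ψ.eval := dg_and _ _
    rw [e, size_and]
    exact gate_step k hk W D hW hD' _ _ (dg_prj _) (dg_prj _) (dg_comm _ _) _ _
      (by positivity) (by positivity) (fun j hj _ => h1 φ d1 j hj) (fun j hj _ => h1 ψ d2 j hj) M (by linarith) _ _ (ih1 d1) (ih2 d2)
  | or φ ψ ih1 ih2 =>
    simp only [CF.depth] at hφ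
    have d1 : φ.depth ≤ D := by omega
    have d2 : ψ.depth ≤ D := by omega
    have e : dg (CF.or φ ψ).eval = 1 - (1 - dg φ.eval) * (1 - dg ψ.eval) := dg_or _ _
    have c : (1 - dg φ.eval) * (1 - dg ψ.eval) = (1 - dg ψ.eval) * (1 - dg φ.eval) := by
      rw [← dg_not, ← dg_not]; exact dg_comm _ _
    rw [e, size_or, offd_compl _ _ Nm_star
      ((dg_prj _).compl.mul (dg_prj _).compl c) k hk]
    have aux : ∀ χ : CF ι, (∀ j < k, ‖(dd (Nm ι))^[j] (dg χ.eval)‖ ≤ W * √χ.size ^ j) →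
        ∀ j < k, 0 < j → ‖(dd (Nm ι))^[j] (1 - dg χ.eval)‖ ≤ W * √χ.size ^ j := by
      intro χ hχ j hj h
      rw [iter_one_sub _ _ _ h, norm_neg]; exact hχ j hj
    refine gate_step k hk W D hW hD' _ _ (dg_prj _).compl (dg_prj _).compl c _ _
      (by positivity) (by positivity) (aux φ (h1 φ d1)) (aux ψ (h1 ψ d2)) M (by linarith) _ _ ?_ ?_
    · rw [offd_compl _ _ Nm_star (dg_prj _) k hk]; exact ih1 d1
    · rw [offd_compl _ _ Nm_star (dg_prj _) k hk]; exact ih2 d2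

theorem one_add_pow_le (D : ℕ) (hD : 1 ≤ D) (d : ℕ) (hd : d ≤ D) :
    (1 + 1 / (D : ℝ)) ^ d ≤ 3 := by
  have hD' : (1 : ℝ) ≤ D := by exact_mod_cast hD
  have h1 : 1 + 1 / (D : ℝ) ≤ Real.exp (1 / D) := by
    have := Real.add_one_le_exp (1 / (D : ℝ)); linarith
  have h0 : (0 : ℝ) ≤ 1 + 1 / (D : ℝ) := by positivity
  calc (1 + 1 / (D : ℝ)) ^ d ≤ (Real.exp (1 / D)) ^ d := pow_le_pow_left₀ h0 h1 d
    _ = Real.exp (d * (1 / D)) := by rw [← Real.exp_nat_mul]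
    _ ≤ Real.exp 1 := by
        apply Real.exp_le_exp.2
        rw [mul_one_div, div_le_one (by linarith)]
        exact_mod_cast hd
    _ ≤ 3 := by have := Real.exp_one_lt_d9; linarith

theorem moment (q : ℕ) : ∃ C : ℕ, 1 ≤ C ∧ ∀ (ι : Type) [Fintype ι] [DecidableEq ι] (D : ℕ),
    1 ≤ D → ∀ φ : CF ι, φ.depth ≤ D → ∀ k ≤ q,
      ‖(dd (Nm ι))^[k] (dg φ.eval)‖ ≤ ((C : ℝ) * D) ^ C * √φ.size ^ k := by
  induction q with
  | zero =>
    refine ⟨1, le_refl _, ?_⟩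
    intro ι _ _ D hD φ _ k hk
    obtain rfl : k = 0 := by omega
    have hD' : (1 : ℝ) ≤ D := by exact_mod_cast hD
    have := (dg_prj φ.eval).norm_le
    simp only [Function.iterate_zero, id_eq, Nat.cast_one, one_mul, pow_one, pow_zero, mul_one]
    linarith
  | succ q ih =>
    obtain ⟨C, hC, ih⟩ := ih
    set k := q + 1 with hk
    refine ⟨32 * 16 ^ k * C + 4 * C + 1, by omega, ?_⟩
    set C' := 32 * 16 ^ k * C + 4 * C + 1 with hC'
    intro ι _ _ D hD φ hφ j hj
    have hD' : (1 : ℝ) ≤ D := by exact_mod_cast hD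
    have hC1 : (1 : ℝ) ≤ C := by exact_mod_cast hC
    have hCC : (C : ℝ) ≤ C' := by
      have : C ≤ C' := by omega
      exact_mod_cast this
    have hCD : (1 : ℝ) ≤ C * D := by nlinarith
    have hCD' : (C : ℝ) * D ≤ C' * D := by gcongr
    set W := ((C : ℝ) * D) ^ C with hW
    have hW1 : 1 ≤ W := one_le_pow₀ hCD
    rcases Nat.lt_or_ge j k with hjk | hjk
    · refine (ih ι D hD φ hφ j (by omega)).trans ?_
      gcongr ?_ * _
      calc ((C : ℝ) * D) ^ C ≤ (C' * D) ^ C := pow_le_pow_left₀ (by linarith) hCD' _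
        _ ≤ _ := pow_le_pow_right₀ (by linarith) (by omega)
    · obtain rfl : j = k := by omega
      have hk0 : 0 < k := by omega
      set M : ℝ := 2 * (1 + (D : ℝ)) * (2 ^ k * W ^ 2) ^ 2 + 16 ^ k with hM
      have hbd : ∀ φ : CF ι, φ.depth ≤ D → ∀ j < k,
          ‖(dd (Nm ι))^[j] (dg φ.eval)‖ ≤ W * √φ.size ^ j :=
        fun φ hφ j hj => ih ι D hD φ hφ j (by omega)
      have hoff := offd_formula k hk0 W D (by linarith) hD hbd M le_rfl φ hφ
      have hM1 : 1 ≤ M := by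
        have : (1 : ℝ) ≤ 16 ^ k := one_le_pow₀ (by norm_num)
        have : 0 ≤ 2 * (1 + (D : ℝ)) * (2 ^ k * W ^ 2) ^ 2 := by positivity
        linarith
      set r := √(φ.size : ℝ) with hr
      have hr0 : 0 ≤ r := Real.sqrt_nonneg _
      have hrk : (φ.size : ℝ) ^ k = (r ^ k) ^ 2 := by
        rw [← pow_mul, mul_comm, pow_mul, hr, Real.sq_sqrt (by positivity)]
      have hoff2 : offd (Nm ι) k (dg φ.eval) ≤ 3 * M * r ^ k := by
        apply le_of_sq_le_sq _ (by positivity)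
        calc offd (Nm ι) k (dg φ.eval) ^ 2 ≤ _ := hoff
          _ ≤ 3 * M * (r ^ k) ^ 2 := by
              rw [hrk]
              gcongr
              exact one_add_pow_le D hD _ hφ
          _ ≤ (3 * M) ^ 2 * (r ^ k) ^ 2 := by
              gcongr
              nlinarith
          _ = _ := by ring
      have hfin := norm_le_offd (Nm ι) (dg φ.eval) Nm_star (dg_prj _) k hk0 (W ^ 2 * r ^ k)
        (by positivity) (by
          intro i j hij hi hj
          refine (mul_le_mul (hbd φ hφ i (by omega)) (hbd φ hφ j (by omega)) (norm_nonneg _)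
            (by positivity)).trans (le_of_eq ?_)
          rw [← hij, pow_add]; ring)
      have hsum : ‖(dd (Nm ι))^[k] (dg φ.eval)‖ ≤ (6 * M + 2 * 2 ^ k * W ^ 2) * r ^ k := by
        nlinarith
      refine hsum.trans ?_
      gcongr ?_ * _
      have w24 : W ^ 2 ≤ W ^ 4 := pow_le_pow_right₀ hW1 (by norm_num)
      have w4 : 1 ≤ W ^ 4 := one_le_pow₀ hW1
      have p4 : (4 : ℝ) ^ k ≤ 16 ^ k := pow_le_pow_left₀ (by norm_num) (by norm_num) k
      have p2 : (2 : ℝ) ^ k ≤ 16 ^ k := pow_le_pow_left₀ (by norm_num) (by norm_num) k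
      have p16 : (0 : ℝ) < 16 ^ k := by positivity
      have p22 : ((2 : ℝ) ^ k) ^ 2 = 4 ^ k := by rw [← pow_mul, mul_comm, pow_mul]; norm_num
      have m1 : M ≤ 5 * (16 ^ k * D * W ^ 4) := by
        have e : M = 2 * (1 + (D : ℝ)) * (4 ^ k * W ^ 4) + 16 ^ k := by
          rw [hM, mul_pow, p22]; ring
        rw [e]
        have a1 : 2 * (1 + (D : ℝ)) * (4 ^ k * W ^ 4) ≤ 2 * (D + D) * (16 ^ k * W ^ 4) := by
          gcongr
        have a2 : (16 : ℝ) ^ k * 1 ≤ 16 ^ k * (D * W ^ 4) := by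
          gcongr; nlinarith
        nlinarith
      have m2 : 2 * 2 ^ k * W ^ 2 ≤ 2 * (16 ^ k * D * W ^ 4) := by
        have a3 : (2 : ℝ) ^ k * W ^ 2 ≤ 16 ^ k * W ^ 4 := by gcongr
        have a4 : (16 : ℝ) ^ k * W ^ 4 * 1 ≤ 16 ^ k * W ^ 4 * D := by gcongr
        nlinarith
      have hW4 : W ^ 4 = ((C : ℝ) * D) ^ (4 * C) := by rw [hW, ← pow_mul, mul_comm C 4]
      have c1 : (32 : ℝ) * 16 ^ k ≤ C' := by
        have : 32 * 16 ^ k ≤ C' := by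
          have : 32 * 16 ^ k * 1 ≤ 32 * 16 ^ k * C := Nat.mul_le_mul_left _ hC
          omega
        exact_mod_cast this
      calc 6 * M + 2 * 2 ^ k * W ^ 2 ≤ (32 * 16 ^ k) * D * W ^ 4 := by
            have e32 : 32 * 16 ^ k * (D : ℝ) * W ^ 4 = 32 * (16 ^ k * D * W ^ 4) := by ring
            rw [e32]
            clear_value M W
            linarith only [m1, m2]
        _ ≤ ((C' : ℝ) * D) * ((C' : ℝ) * D) ^ (4 * C) := by
            rw [hW4]
            exact mul_le_mul (mul_le_mul_of_nonneg_right c1 (by linarith))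
              (pow_le_pow_left₀ (by linarith) hCD' _) (pow_nonneg (by linarith) _)
              (le_trans (by linarith) hCD')
        _ = ((C' : ℝ) * D) ^ (4 * C + 1) := by rw [pow_succ]; ring
        _ ≤ _ := pow_le_pow_right₀ (by linarith) (by omega)

end AndrPf

namespace AndrPf

section Fun
open scoped Matrix.Norms.L2Operator
variable {ι : Type} [DecidableEq ι]

/-- discrete derivative -/
def pd (j : ι) (h : (ι → Bool) → ℝ) : (ι → Bool) → ℝ := fun x => h x - h (fl j x)

/-- iterated discrete derivative -/
def dl : List ι → ((ι → Bool) → ℝ) → (ι → Bool) → ℝ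
  | [], h => h
  | j :: l, h => pd j (dl l h)

/-- real version of a Boolean function -/
def rl (h : (ι → Bool) → Bool) : (ι → Bool) → ℝ := fun x => if h x then 1 else 0

theorem pd_comm (i j : ι) (h : (ι → Bool) → ℝ) : pd i (pd j h) = pd j (pd i h) := by
  funext x; simp only [pd, fl_comm i j]; ring

theorem pd_pd (j : ι) (h : (ι → Bool) → ℝ) : pd j (pd j h) = fun x => 2 * pd j h x := by
  funext x; simp only [pd, fl_fl]; ring

theorem pd_smul (j : ι) (c : ℝ) (h : (ι → Bool) → ℝ) :
    pd j (fun x => c * h x) = fun x => c * pd j h x := by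
  funext x; simp only [pd]; ring

theorem dl_pd (j : ι) (l : List ι) (h : (ι → Bool) → ℝ) : dl l (pd j h) = pd j (dl l h) := by
  induction l with
  | nil => rfl
  | cons i l ih => simp only [dl, ih, pd_comm i j]

theorem dl_dl (l : List ι) (h : (ι → Bool) → ℝ) :
    dl l (dl l h) = fun x => 2 ^ l.length * dl l h x := by
  induction l with
  | nil => simp [dl]
  | cons i l ih =>
    simp only [dl, dl_pd, ih, pd_smul, pd_pd, List.length_cons]
    funext x; ring

variable [Fintype ι]

theorem sum_fl (j : ι) (f : (ι → Bool) → ℝ) : ∑ x, f (fl j x) = ∑ x, f x :=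
  Equiv.sum_comp (Function.Involutive.toPerm (fl j) (fl_fl j)) f

theorem pd_adj (j : ι) (f g : (ι → Bool) → ℝ) : ∑ x, f x * pd j g x = ∑ x, pd j f x * g x := by
  have := sum_fl j (fun x => f x * g (fl j x))
  simp only [fl_fl] at this
  simp only [pd, mul_sub, sub_mul, Finset.sum_sub_distrib, this]

theorem dl_adj (l : List ι) (f g : (ι → Bool) → ℝ) : ∑ x, f x * dl l g x = ∑ x, dl l f x * g x := by
  induction l generalizing f g with
  | nil => rfl
  | cons i l ih =>
    simp only [dl]
    rw [pd_adj, ih, dl_pd]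

theorem dl_sq (l : List ι) (h : (ι → Bool) → ℝ) :
    ∑ x, (dl l h x) ^ 2 = 2 ^ l.length * ∑ x, h x * dl l h x := by
  have h1 : ∑ x, (dl l h x) ^ 2 = ∑ x, dl l h x * dl l h x := by simp only [sq]
  rw [h1, ← dl_adj, dl_dl, Finset.mul_sum]
  refine Finset.sum_congr rfl fun x _ => by ring

/-- number operator on functions -/
def Nop (h : (ι → Bool) → ℝ) : (ι → Bool) → ℝ := fun x => ∑ j, pd j h x

theorem Nop_adj (f g : (ι → Bool) → ℝ) : ∑ x, f x * Nop g x = ∑ x, Nop f x * g x := by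
  simp only [Nop, Finset.mul_sum, Finset.sum_mul]
  rw [Finset.sum_comm, Finset.sum_comm (s := Finset.univ (α := ι → Bool))]
  exact Finset.sum_congr rfl fun j _ => pd_adj j f g

theorem Nop_iter_adj (k : ℕ) (f g : (ι → Bool) → ℝ) :
    ∑ x, f x * Nop^[k] g x = ∑ x, Nop^[k] f x * g x := by
  induction k generalizing f g with
  | zero => rfl
  | succ k ih =>
    rw [Function.iterate_succ', Function.comp_apply, Nop_adj, ih, ← Function.iterate_succ_apply, Function.iterate_succ']

theorem pd_sum {κ : Type*} (s : Finset κ) (j : ι) (f : κ → (ι → Bool) → ℝ) (x : ι → Bool) :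
    pd j (fun x => ∑ a ∈ s, f a x) x = ∑ a ∈ s, pd j (f a) x := by
  simp only [pd, Finset.sum_sub_distrib]

theorem sum_dl (p : ℕ) (h : (ι → Bool) → ℝ) :
    (fun x => ∑ v : Fin p → ι, dl (List.ofFn v) h x) = Nop^[p] h := by
  induction p with
  | zero => funext x; simp [dl]
  | succ p ih =>
    rw [Function.iterate_succ', Function.comp_apply, ← ih]
    funext x
    rw [← (Fin.consEquiv (fun _ : Fin (p+1) => ι)).sum_comp, Fintype.sum_prod_type]
    simp only [Nop]
    refine Finset.sum_congr rfl fun j _ => ?_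
    rw [pd_sum]
    refine Finset.sum_congr rfl fun v _ => ?_
    simp [Fin.consEquiv, dl]

theorem Nm_mulVec (h : (ι → Bool) → ℝ) : (Nm ι).mulVec h = Nop h := by
  funext x
  simp only [Nm, Matrix.sum_mulVec, Finset.sum_apply, Matrix.sub_mulVec, Matrix.one_mulVec,
    Pi.sub_apply, Flm_mulVec, Nop, pd]

theorem dd_mulVec (k : ℕ) (M : Matrix (ι → Bool) (ι → Bool) ℝ) :
    ((dd (Nm ι))^[k] M).mulVec (fun _ => 1) = Nop^[k] (M.mulVec fun _ => 1) := by
  induction k with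
  | zero => rfl
  | succ k ih =>
    rw [Function.iterate_succ', Function.comp_apply, Function.iterate_succ', Function.comp_apply, ← ih]
    have h0 : Nop (fun _ : ι → Bool => (1 : ℝ)) = 0 := by funext x; simp [Nop, pd]
    change (Nm ι * (dd (Nm ι))^[k] M - (dd (Nm ι))^[k] M * Nm ι).mulVec _ = _
    rw [Matrix.sub_mulVec, ← Matrix.mulVec_mulVec, ← Matrix.mulVec_mulVec, Nm_mulVec, Nm_mulVec, h0]
    simp

theorem dg_mulVec (h : (ι → Bool) → Bool) : (dg h).mulVec (fun _ => 1) = rl h := by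
  funext x; simp [dg, rl, Matrix.mulVec_diagonal]

theorem mulVec_one_sq (M : Matrix (ι → Bool) (ι → Bool) ℝ) :
    ∑ x, (M.mulVec (fun _ => 1) x) ^ 2 ≤ ‖M‖ ^ 2 * 2 ^ Fintype.card ι := by
  have := Matrix.l2_opNorm_mulVec M (WithLp.toLp 2 (fun _ => (1 : ℝ)))
  have h2 := pow_le_pow_left₀ (norm_nonneg _) this 2
  rw [mul_pow, EuclideanSpace.norm_sq_eq, EuclideanSpace.norm_sq_eq] at h2
  simpa using h2

theorem energy (q : ℕ) (h : (ι → Bool) → Bool) :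
    ∑ v : Fin (2 * q) → ι, ∑ x, (dl (List.ofFn v) (rl h) x) ^ 2 ≤
      4 ^ q * ‖(dd (Nm ι))^[q] (dg h)‖ ^ 2 * 2 ^ Fintype.card ι := by
  simp only [dl_sq, List.length_ofFn]
  rw [← Finset.mul_sum, Finset.sum_comm]
  simp only [← Finset.mul_sum]
  have e := fun x => congrFun (sum_dl (2 * q) (rl h)) x
  simp only [e]
  rw [two_mul, Function.iterate_add, pow_add, ← mul_pow]
  simp only [Function.comp_apply]
  rw [Nop_iter_adj, ← dg_mulVec, ← dd_mulVec]
  have := mulVec_one_sq ((dd (Nm ι))^[q] (dg h))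
  simp only [sq] at this ⊢
  norm_num
  rw [mul_assoc]
  gcongr

end Fun
end AndrPf

namespace AndrPf

section Bal
variable {ι : Type}

/-- children are small -/
def smallCh (τ : ℝ) : CF ι → Prop
  | .cst _ => False
  | .leaf _ _ => True
  | .and a b => (a.size : ℝ) < τ ∧ (b.size : ℝ) < τ
  | .or a b => (a.size : ℝ) < τ ∧ (b.size : ℝ) < τ

theorem spira (τ : ℝ) (hτ : 0 < τ) (φ : CF ι) (h : τ ≤ φ.size) :
    ∃ χ φ1 φ0 : CF ι, φ1.size + χ.size ≤ φ.size ∧ φ0.size + χ.size ≤ φ.size ∧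
      τ ≤ χ.size ∧ smallCh τ χ ∧
      ∀ x, φ.eval x = ((φ1.eval x && χ.eval x) || φ0.eval x) := by
  induction φ with
  | cst b => simp [CF.size] at h; linarith
  | leaf i b => exact ⟨.leaf i b, .cst true, .cst false, by simp [CF.size], by simp [CF.size], h,
      trivial, by simp [CF.eval]⟩
  | and a b iha ihb =>
    by_cases ha : τ ≤ a.size
    · obtain ⟨χ, f1, f0, h1, h2, h3, h4, h5⟩ := iha ha
      refine ⟨χ, .and f1 b, .and f0 b, by simp only [CF.size]; omega, by simp only [CF.size]; omega,
        h3, h4, ?_⟩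
      intro x; simp only [CF.eval, h5]
      cases f1.eval x <;> cases f0.eval x <;> cases χ.eval x <;> cases b.eval x <;> rfl
    by_cases hb : τ ≤ b.size
    · obtain ⟨χ, f1, f0, h1, h2, h3, h4, h5⟩ := ihb hb
      refine ⟨χ, .and a f1, .and a f0, by simp only [CF.size]; omega, by simp only [CF.size]; omega,
        h3, h4, ?_⟩
      intro x; simp only [CF.eval, h5]
      cases f1.eval x <;> cases f0.eval x <;> cases χ.eval x <;> cases a.eval x <;> rfl
    push Not at ha hb
    exact ⟨.and a b, .cst true, .cst false, by simp [CF.size], by simp [CF.size], h,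
      ⟨ha, hb⟩, by simp [CF.eval]⟩
  | or a b iha ihb =>
    by_cases ha : τ ≤ a.size
    · obtain ⟨χ, f1, f0, h1, h2, h3, h4, h5⟩ := iha ha
      refine ⟨χ, .or f1 b, .or f0 b, by simp only [CF.size]; omega, by simp only [CF.size]; omega,
        h3, h4, ?_⟩
      intro x; simp only [CF.eval, h5]
      cases f1.eval x <;> cases f0.eval x <;> cases χ.eval x <;> cases b.eval x <;> rfl
    by_cases hb : τ ≤ b.size
    · obtain ⟨χ, f1, f0, h1, h2, h3, h4, h5⟩ := ihb hb
      refine ⟨χ, .or a f1, .or a f0, by simp only [CF.size]; omega, by simp only [CF.size]; omega,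
        h3, h4, ?_⟩
      intro x; simp only [CF.eval, h5]
      cases f1.eval x <;> cases f0.eval x <;> cases χ.eval x <;> cases a.eval x <;> rfl
    push Not at ha hb
    exact ⟨.or a b, .cst true, .cst false, by simp [CF.size], by simp [CF.size], h,
      ⟨ha, hb⟩, by simp [CF.eval]⟩

theorem size_zero (φ : CF ι) (h : φ.size = 0) : ∃ b, ∀ x, φ.eval x = b := by
  induction φ with
  | cst b => exact ⟨b, fun _ => rfl⟩
  | leaf i b => simp [CF.size] at h
  | and a b iha ihb =>
    simp only [CF.size] at h
    obtain ⟨u, hu⟩ := iha (by omega)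
    obtain ⟨v, hv⟩ := ihb (by omega)
    exact ⟨u && v, fun x => by simp [CF.eval, hu, hv]⟩
  | or a b iha ihb =>
    simp only [CF.size] at h
    obtain ⟨u, hu⟩ := iha (by omega)
    obtain ⟨v, hv⟩ := ihb (by omega)
    exact ⟨u || v, fun x => by simp [CF.eval, hu, hv]⟩

/-- depth bound function -/
noncomputable def Dp (l : ℝ) (s : ℕ) : ℝ := if s = 0 then 0 else 3 + 3 * (Real.log s / l)

theorem Dp_step (κ : ℝ) (h0 : 0 < κ) (h1 : κ ≤ 1/2) (s c : ℕ) (hs : 1 ≤ s)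
    (hc : (c : ℝ) ≤ (1 - κ) * s) : Dp (-Real.log (1 - κ)) c + 3 ≤ Dp (-Real.log (1 - κ)) s := by
  have hl : 0 < -Real.log (1 - κ) := by
    have := Real.log_neg (by linarith : 0 < 1 - κ) (by linarith)
    linarith
  have hs' : (1 : ℝ) ≤ s := by exact_mod_cast hs
  set l := -Real.log (1 - κ) with hl'
  unfold Dp
  rw [if_neg (by omega : s ≠ 0)]
  split_ifs with h
  · have : 0 ≤ Real.log s / l := div_nonneg (Real.log_nonneg hs') hl.le
    linarith
  · have hc1 : (1 : ℝ) ≤ c := by exact_mod_cast Nat.one_le_iff_ne_zero.2 h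
    have := Real.log_le_log (by linarith) hc
    rw [Real.log_mul (by linarith) (by linarith)] at this
    have h2 : Real.log c / l ≤ (Real.log s - l) / l := by gcongr; linarith
    rw [sub_div, div_self hl.ne'] at h2
    linarith

theorem bal_size (δ κ : ℝ) (hδ : 0 < δ) (h0 : 0 < κ) (hκ : κ ^ δ ≤ 1/2)
    (s r1 r0 s1 s2 : ℕ) (hs : 1 ≤ s) (hr1 : (r1 : ℝ) ≤ κ * s) (hr0 : (r0 : ℝ) ≤ κ * s)
    (e1 : r1 + (s1 + s2) ≤ s) (e0 : r0 + (s1 + s2) ≤ s) :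
    (r1 : ℝ) ^ (1 + δ) + (r0 : ℝ) ^ (1 + δ) + (s1 : ℝ) ^ (1 + δ) + (s2 : ℝ) ^ (1 + δ)
      ≤ (s : ℝ) ^ (1 + δ) := by
  have e1' : (r1 : ℝ) + (s1 + s2) ≤ s := by exact_mod_cast e1
  have e0' : (r0 : ℝ) + (s1 + s2) ≤ s := by exact_mod_cast e0
  have p : ∀ c : ℕ, (c : ℝ) ^ (1 + δ) = c * (c : ℝ) ^ δ := fun c =>
    Real.rpow_one_add' (by positivity) (by linarith)
  rw [p, p, p, p, p]
  have hS : (0 : ℝ) ≤ (s : ℝ) ^ δ := by positivity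
  have hr : ∀ r : ℕ, (r : ℝ) ≤ κ * s → (r : ℝ) * (r : ℝ) ^ δ ≤ r * ((s : ℝ) ^ δ / 2) := by
    intro r hr
    have : (r : ℝ) ^ δ ≤ (κ * s) ^ δ := Real.rpow_le_rpow (by positivity) hr hδ.le
    rw [Real.mul_rpow h0.le (by positivity)] at this
    gcongr
    nlinarith
  have hs' : ∀ r : ℕ, r ≤ s → (r : ℝ) * (r : ℝ) ^ δ ≤ r * (s : ℝ) ^ δ := by
    intro r hr
    have : (r : ℝ) ^ δ ≤ (s : ℝ) ^ δ := Real.rpow_le_rpow (by positivity) (by exact_mod_cast hr) hδ.le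
    gcongr
  have := hr r1 hr1
  have := hr r0 hr0
  have := hs' s1 (by omega)
  have := hs' s2 (by omega)
  nlinarith

theorem bal_aux (δ κ : ℝ) (hδ : 0 < δ) (h0 : 0 < κ) (h1 : κ ≤ 1/2) (hκ : κ ^ δ ≤ 1/2) (n : ℕ) :
    ∀ φ : CF ι, φ.size = n → ∃ φ' : CF ι, (∀ x, φ'.eval x = φ.eval x) ∧
      (φ'.size : ℝ) ≤ (n : ℝ) ^ (1 + δ) ∧ (φ'.depth : ℝ) ≤ Dp (-Real.log (1 - κ)) n := by
  induction n using Nat.strong_induction_on with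
  | _ n ih =>
  intro φ hφ
  rcases Nat.eq_zero_or_pos n with hn | hn
  · obtain ⟨b, hb⟩ := size_zero φ (by omega)
    refine ⟨.cst b, fun x => (hb x).symm, ?_, ?_⟩
    · simp only [CF.size, Nat.cast_zero]; positivity
    · simp [CF.depth, Dp, hn]
  have hn1 : (1 : ℝ) ≤ n := by exact_mod_cast hn
  obtain ⟨χ, f1, f0, g1, g2, g3, g4, g5⟩ := spira ((1 - κ) * n) (by nlinarith) φ (by
    rw [hφ]; nlinarith)
  have g1' : (f1.size : ℝ) + χ.size ≤ n := by rw [← hφ]; exact_mod_cast g1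
  have g2' : (f0.size : ℝ) + χ.size ≤ n := by rw [← hφ]; exact_mod_cast g2
  have hχ : 0 < χ.size := by
    have : (0 : ℝ) < χ.size := by nlinarith
    exact_mod_cast this
  have r1 : (f1.size : ℝ) ≤ κ * n := by nlinarith
  have r0 : (f0.size : ℝ) ≤ κ * n := by nlinarith
  have kk : κ * n ≤ (1 - κ) * n := by nlinarith
  obtain ⟨F1, a1, b1, c1⟩ := ih f1.size (by omega) f1 rfl
  obtain ⟨F0, a0, b0, c0⟩ := ih f0.size (by omega) f0 rfl
  have d1 := Dp_step κ h0 h1 n f1.size hn (r1.trans kk)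
  have d0 := Dp_step κ h0 h1 n f0.size hn (r0.trans kk)
  set l := -Real.log (1 - κ) with hl
  -- combine
  have fin : ∀ (X : CF ι) (s1 s2 : ℕ), s1 + s2 = χ.size → (∀ x, X.eval x = χ.eval x) →
      (X.size : ℝ) ≤ (s1 : ℝ) ^ (1 + δ) + (s2 : ℝ) ^ (1 + δ) → (X.depth : ℝ) + 2 ≤ Dp l n →
      ∃ φ' : CF ι, (∀ x, φ'.eval x = φ.eval x) ∧
      (φ'.size : ℝ) ≤ (n : ℝ) ^ (1 + δ) ∧ (φ'.depth : ℝ) ≤ Dp l n := by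
    intro X s1 s2 hs hX hsz hdp
    refine ⟨.or (.and F1 X) F0, ?_, ?_, ?_⟩
    · intro x; simp only [CF.eval, a1, a0, hX, g5]
    · have := bal_size δ κ hδ h0 hκ n f1.size f0.size s1 s2 hn r1 r0 (by omega) (by omega)
      simp only [CF.size, Nat.cast_add]
      linarith
    · simp only [CF.depth, Nat.cast_add, Nat.cast_max, Nat.cast_one]
      have : max (F1.depth : ℝ) X.depth ≤ Dp l n - 2 := max_le (by linarith) (by linarith)
      have : max (max (F1.depth : ℝ) X.depth + 1) F0.depth ≤ Dp l n - 1 :=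
        max_le (by linarith) (by linarith)
      linarith
  have hD3 : 3 ≤ Dp l n := by
    have : 0 ≤ Dp l f1.size := le_trans (by positivity) c1
    linarith
  have gate : ∀ (a b : CF ι) (op : CF ι → CF ι → CF ι) (bo : Bool → Bool → Bool),
      (∀ u v x, (op u v).eval x = bo (u.eval x) (v.eval x)) →
      (∀ u v, (op u v).size = u.size + v.size) → (∀ u v, (op u v).depth = max u.depth v.depth + 1) →
      χ = op a b → (a.size : ℝ) < (1 - κ) * n → (b.size : ℝ) < (1 - κ) * n →
      ∃ φ' : CF ι, (∀ x, φ'.eval x = φ.eval x) ∧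
      (φ'.size : ℝ) ≤ (n : ℝ) ^ (1 + δ) ∧ (φ'.depth : ℝ) ≤ Dp l n := by
    intro a b op bo o1 o2 o3 hχ' ha hb
    have lt : ∀ c : ℕ, (c : ℝ) < (1 - κ) * n → c < n := fun c hc => by
      have : (c : ℝ) < n := by nlinarith
      exact_mod_cast this
    obtain ⟨A, aA, bA, cA⟩ := ih a.size (lt _ ha) a rfl
    obtain ⟨B, aB, bB, cB⟩ := ih b.size (lt _ hb) b rfl
    have dA := Dp_step κ h0 h1 n a.size hn ha.le
    have dB := Dp_step κ h0 h1 n b.size hn hb.le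
    refine fin (op A B) a.size b.size (by rw [hχ', o2]) (fun x => by rw [hχ', o1, o1, aA, aB]) ?_ ?_
    · rw [o2]; push_cast; linarith
    · rw [o3]; push_cast
      have : max (A.depth : ℝ) B.depth ≤ Dp l n - 3 := max_le (by linarith) (by linarith)
      linarith
  cases χ with
  | cst b => exact absurd g4 (by simp [smallCh])
  | leaf i b =>
    refine fin (.leaf i b) 1 0 rfl (fun _ => rfl) ?_ ?_
    · simp [CF.size]; positivity
    · simp only [CF.depth, Nat.cast_zero]; linarith
  | and a b => exact gate a b CF.and and (fun _ _ _ => rfl) (fun _ _ => rfl) (fun _ _ => rfl) rfl g4.1 g4.2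
  | or a b => exact gate a b CF.or or (fun _ _ _ => rfl) (fun _ _ => rfl) (fun _ _ => rfl) rfl g4.1 g4.2

theorem balance (δ : ℝ) (hδ : 0 < δ) : ∃ C : ℝ, 0 < C ∧ ∀ (ι : Type) (φ : CF ι),
    ∃ φ' : CF ι, (∀ x, φ'.eval x = φ.eval x) ∧
      (φ'.size : ℝ) ≤ (φ.size : ℝ) ^ (1 + δ) ∧ (φ'.depth : ℝ) ≤ C * (1 + Real.log φ.size) := by
  set κ : ℝ := min (1/2) ((1/2) ^ (1 / δ)) with hκ
  have h0 : 0 < κ := by rw [hκ]; positivity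
  have h1 : κ ≤ 1/2 := min_le_left _ _
  have h2 : κ ^ δ ≤ 1/2 := by
    have : κ ^ δ ≤ ((1/2 : ℝ) ^ (1 / δ)) ^ δ := Real.rpow_le_rpow h0.le (min_le_right _ _) hδ.le
    rwa [← Real.rpow_mul (by norm_num), one_div_mul_cancel hδ.ne', Real.rpow_one] at this
  have hl : 0 < -Real.log (1 - κ) := by
    have := Real.log_neg (by linarith : 0 < 1 - κ) (by linarith)
    linarith
  refine ⟨3 + 3 / -Real.log (1 - κ), by positivity, fun ι φ => ?_⟩
  obtain ⟨φ', a, b, c⟩ := bal_aux δ κ hδ h0 h1 h2 φ.size φ rfl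
  refine ⟨φ', a, b, c.trans ?_⟩
  set l := -Real.log (1 - κ)
  unfold Dp
  have hlog : 0 ≤ Real.log φ.size := Real.log_natCast_nonneg _
  have h3 : 0 ≤ 3 / l := by positivity
  split_ifs
  · positivity
  · have : 3 * (Real.log φ.size / l) = 3 / l * Real.log φ.size := by ring
    rw [this]; nlinarith
end Bal
end AndrPf

namespace AndrPf

section Tok
variable {ι κ : Type}

open Classical in
/-- stack-order decomposition into pieces of size at most `t` -/
noncomputable def toks (t : ℝ) : CF ι → List (Bool ⊕ CF ι)
  | .cst b => [Sum.inr (.cst b)]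
  | .leaf i b => [Sum.inr (.leaf i b)]
  | .and a b => if ((CF.and a b).size : ℝ) ≤ t then [Sum.inr (.and a b)]
      else toks t a ++ toks t b ++ [Sum.inl true]
  | .or a b => if ((CF.or a b).size : ℝ) ≤ t then [Sum.inr (.or a b)]
      else toks t a ++ toks t b ++ [Sum.inl false]

theorem toks_mem (t : ℝ) (ht : 1 ≤ t) (φ : CF ι) : ∀ χ, Sum.inr χ ∈ toks t φ →
    (χ.size : ℝ) ≤ t ∧ χ.depth ≤ φ.depth := by
  induction φ with
  | cst b => intro χ h; simp [toks] at h; subst h; simp [CF.size]; linarith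
  | leaf i b => intro χ h; simp [toks] at h; subst h; simp [CF.size]; linarith
  | and a b iha ihb =>
    intro χ h
    unfold toks at h
    split_ifs at h with h1
    · simp at h; subst h; exact ⟨h1, le_refl _⟩
    · simp only [List.append_assoc, List.mem_append, List.mem_singleton, reduceCtorEq, or_false] at h
      simp only [CF.depth]
      rcases h with h | h
      · have := iha χ h; exact ⟨this.1, by omega⟩
      · have := ihb χ h; exact ⟨this.1, by omega⟩
  | or a b iha ihb =>
    intro χ h
    unfold toks at h
    split_ifs at h with h1
    · simp at h; subst h; exact ⟨h1, le_refl _⟩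
    · simp only [List.append_assoc, List.mem_append, List.mem_singleton, reduceCtorEq, or_false] at h
      simp only [CF.depth]
      rcases h with h | h
      · have := iha χ h; exact ⟨this.1, by omega⟩
      · have := ihb χ h; exact ⟨this.1, by omega⟩

theorem len_step (t la lb da db sa sb : ℝ) (ht : 1 ≤ t) (hsa : 0 ≤ sa) (hsb : 0 ≤ sb)
    (h : t < sa + sb)
    (ha : la ≤ 1 + 4 * da * (sa / t)) (hb : lb ≤ 1 + 4 * db * (sb / t)) :
    la + lb + 1 ≤ 1 + 4 * (max da db + 1) * ((sa + sb) / t) := by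
  have h1 : 1 < (sa + sb) / t := by rw [one_lt_div (by linarith)]; exact h
  have h2 : da * (sa / t) ≤ max da db * (sa / t) := by gcongr; exact le_max_left _ _
  have h3 : db * (sb / t) ≤ max da db * (sb / t) := by gcongr; exact le_max_right _ _
  have e : 4 * (max da db + 1) * ((sa + sb) / t) =
      4 * (max da db * (sa / t)) + 4 * (max da db * (sb / t)) + 4 * ((sa + sb) / t) := by ring
  rw [e]
  linarith

theorem toks_len (t : ℝ) (ht : 1 ≤ t) (φ : CF ι) :
    ((toks t φ).length : ℝ) ≤ 1 + 4 * φ.depth * (φ.size / t) := by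
  induction φ with
  | cst b => simp [toks, CF.depth]
  | leaf i b => simp [toks, CF.depth]
  | and a b iha ihb =>
    unfold toks
    split_ifs with h1
    · simp only [List.length_singleton, Nat.cast_one]
      have : 0 ≤ 4 * ((CF.and a b).depth : ℝ) * ((CF.and a b).size / t) := by positivity
      linarith
    · push Not at h1
      rw [size_and] at h1 ⊢
      have := len_step t _ _ _ _ _ _ ht (by positivity) (by positivity) h1 iha ihb
      simp only [List.length_append, List.length_singleton, CF.depth]
      push_cast
      exact this
  | or a b iha ihb =>
    unfold toks
    split_ifs with h1
    · simp only [List.length_singleton, Nat.cast_one]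
      have : 0 ≤ 4 * ((CF.or a b).depth : ℝ) * ((CF.or a b).size / t) := by positivity
      linarith
    · push Not at h1
      rw [size_or] at h1 ⊢
      have := len_step t _ _ _ _ _ _ ht (by positivity) (by positivity) h1 iha ihb
      simp only [List.length_append, List.length_singleton, CF.depth]
      push_cast
      exact this

/-- one gate step of the stack machine -/
def gst (b : Bool) : List ((κ → Bool) → Bool) → List ((κ → Bool) → Bool)
  | y :: x :: st => (fun z => if b then (x z && y z) else (x z || y z)) :: st
  | st => st

/-- stack machine -/
def run : List (Bool ⊕ ((κ → Bool) → Bool)) → List ((κ → Bool) → Bool) → List ((κ → Bool) → Bool)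
  | [], st => st
  | Sum.inr p :: l, st => run l (p :: st)
  | Sum.inl b :: l, st => run l (gst b st)

/-- restriction of tokens -/
def rtok (s : (κ → Bool) → (ι → Bool)) : Bool ⊕ CF ι → Bool ⊕ ((κ → Bool) → Bool) :=
  Sum.map id (fun χ y => χ.eval (s y))

theorem toks_exec (t : ℝ) (s : (κ → Bool) → (ι → Bool)) (φ : CF ι) :
    ∀ rest st, run ((toks t φ).map (rtok s) ++ rest) st = run rest ((fun y => φ.eval (s y)) :: st) := by
  induction φ with
  | cst b => intro rest st; rfl
  | leaf i b => intro rest st; rfl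
  | and a b iha ihb =>
    intro rest st
    unfold toks
    split_ifs with h1
    · rfl
    · simp only [List.map_append, List.append_assoc, iha, ihb]
      rfl
  | or a b iha ihb =>
    intro rest st
    unfold toks
    split_ifs with h1
    · rfl
    · simp only [List.map_append, List.append_assoc, iha, ihb]
      rfl

theorem pad_exec (k : ℕ) (x : (κ → Bool) → Bool) :
    run (List.replicate k (Sum.inl true)) [x] = [x] := by
  induction k with
  | zero => rfl
  | succ k ih => rw [List.replicate_succ]; exact ih

/-- the class of functions computed by token strings of length `l` over `P` -/
def Cls (P : Set ((κ → Bool) → Bool)) (l : ℕ) : Set ((κ → Bool) → Bool) :=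
  {C | ∃ w : Fin l → Bool ⊕ P, run ((List.ofFn w).map (Sum.map id Subtype.val)) [] = [C]}

theorem mem_Cls (P : Set ((κ → Bool) → Bool)) (l : ℕ) (t : ℝ) (s : (κ → Bool) → (ι → Bool)) (φ : CF ι)
    (hl : (toks t φ).length ≤ l)
    (hP : ∀ χ, Sum.inr χ ∈ toks t φ → (fun y => χ.eval (s y)) ∈ P) :
    (fun y => φ.eval (s y)) ∈ Cls P l := by
  have key : ∀ L : List (Bool ⊕ ((κ → Bool) → Bool)), (∀ p, Sum.inr p ∈ L → p ∈ P) →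
      ∃ L' : List (Bool ⊕ P), L'.map (Sum.map id Subtype.val) = L := by
    intro L hL
    induction L with
    | nil => exact ⟨[], rfl⟩
    | cons a L ih =>
      obtain ⟨L', h'⟩ := ih (fun p hp => hL p (List.mem_cons_of_mem _ hp))
      cases a with
      | inl b => exact ⟨Sum.inl b :: L', by simp [h']⟩
      | inr p => exact ⟨Sum.inr ⟨p, hL p (by simp)⟩ :: L', by simp [h']⟩
  set L := (toks t φ).map (rtok s) ++ List.replicate (l - (toks t φ).length) (Sum.inl true) with hL
  have hlen : L.length = l := by simp [hL]; omega
  obtain ⟨L', h'⟩ := key L (by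
    intro p hp
    simp only [hL, List.mem_append, List.mem_map, List.mem_replicate, reduceCtorEq, and_false, or_false] at hp
    obtain ⟨a, ha, hap⟩ := hp
    cases a with
    | inl b => simp [rtok] at hap
    | inr χ =>
      simp only [rtok, Sum.map_inr, Sum.inr.injEq] at hap
      rw [← hap]; exact hP χ ha)
  have hl' : L'.length = l := by rw [← hlen, ← h', List.length_map]
  subst hl'
  refine ⟨L'.get, ?_⟩
  rw [List.ofFn_get, h', hL, toks_exec, pad_exec]

theorem card_Cls [Fintype κ] [DecidableEq κ] (P : Set ((κ → Bool) → Bool)) (l : ℕ) :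
    Nat.card (Cls P l) ≤ (Nat.card P + 2) ^ l := by
  have e : Nat.card (Fin l → Bool ⊕ P) = (Nat.card P + 2) ^ l := by
    rw [Nat.card_fun, Nat.card_sum]; simp [add_comm]
  rw [← e]
  refine Nat.card_le_card_of_injective (fun C : Cls P l => C.2.choose) ?_
  intro C C' h
  have h1 := C.2.choose_spec
  have h2 := C'.2.choose_spec
  simp only at h
  rw [h, h2] at h1
  apply Subtype.ext
  simpa using h1.symm

end Tok

section Low
variable {κ : Type} [Fintype κ] [DecidableEq κ]

/-- low degree -/
def lowd (d : ℕ) (P : (κ → Bool) → Bool) : Prop :=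
  ∀ R : Fin d → κ, Function.Injective R → ∀ y, dl (List.ofFn R) (rl P) y = 0

theorem dl_sub (l : List κ) (f g : (κ → Bool) → ℝ) :
    dl l (fun x => f x - g x) = fun x => dl l f x - dl l g x := by
  induction l with
  | nil => rfl
  | cons j l ih => simp only [dl, ih]; funext x; simp only [pd]; ring

theorem fl_le (j : κ) (y : κ → Bool) (h : y j = true) : fl j y ≤ y := by
  intro i
  by_cases hi : i = j
  · subst hi; rw [h]; exact Bool.le_true _
  · rw [fl_ne hi]

theorem fl_lt (j : κ) (y : κ → Bool) (h : y j = true) : fl j y < y := by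
  refine lt_of_le_of_ne (fl_le j y h) ?_
  intro e
  have := congrFun e j
  rw [fl_same] at this
  simp at this

theorem lowA (g : (κ → Bool) → ℝ) (l : List κ) : ∀ y : κ → Bool, (∀ j ∈ l, y j = true) → l.Nodup →
    (∀ z ≤ y, g z = 0) → dl l g y = 0 := by
  induction l with
  | nil => intro y _ _ h; exact h y le_rfl
  | cons j l ih =>
    intro y hy hn h
    rw [List.nodup_cons] at hn
    simp only [dl, pd]
    rw [ih y (fun i hi => hy i (by simp [hi])) hn.2 h, ih (fl j y) ?_ hn.2, sub_zero]
    · intro z hz; exact h z (hz.trans (fl_le j y (hy j (by simp))))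
    · intro i hi
      rw [fl_ne (by rintro rfl; exact hn.1 hi)]
      exact hy i (by simp [hi])

theorem lowB (g : (κ → Bool) → ℝ) (l : List κ) (y : κ → Bool) (hy : ∀ j ∈ l, y j = true) (hn : l.Nodup)
    (h : ∀ z < y, g z = 0) : dl l g y = g y := by
  induction l with
  | nil => rfl
  | cons j l ih =>
    rw [List.nodup_cons] at hn
    simp only [dl, pd]
    rw [ih (fun i hi => hy i (by simp [hi])) hn.2, lowA g l (fl j y) ?_ hn.2, sub_zero]
    · intro z hz; exact h z (hz.trans_lt (fl_lt j y (hy j (by simp))))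
    · intro i hi
      rw [fl_ne (by rintro rfl; exact hn.1 hi)]
      exact hy i (by simp [hi])

/-- low weight point -/
def ptw {d : ℕ} (τ : Fin d → Option κ) : κ → Bool := fun r => decide (∃ i, τ i = some r)

theorem low_ext (d : ℕ) (P P' : (κ → Bool) → Bool) (h : lowd d P) (h' : lowd d P')
    (e : ∀ τ : Fin d → Option κ, P (ptw τ) = P' (ptw τ)) : P = P' := by
  have key : ∀ y, rl P y - rl P' y = 0 := by
    intro y
    induction y using (inferInstance : WellFoundedLT (κ → Bool)).wf.induction with
    | _ y ih =>
    set S := Finset.univ.filter fun r => y r = true with hS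
    rcases le_or_gt d S.card with hd | hd
    · obtain ⟨f⟩ := Function.Embedding.nonempty_of_card_le (α := Fin d) (β := S) (by simpa using hd)
      have hinj : Function.Injective (fun i => (f i : κ)) :=
        fun i j hij => f.injective (Subtype.ext hij)
      have hy : ∀ j ∈ List.ofFn (fun i => (f i : κ)), y j = true := by
        intro j hj
        rw [List.mem_ofFn] at hj
        obtain ⟨i, rfl⟩ := hj
        exact (Finset.mem_filter.1 (f i).2).2
      have := lowB (fun x => rl P x - rl P' x) _ y hy (List.nodup_ofFn.2 hinj) ih
      rw [dl_sub] at this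
      simp only [h _ hinj, h' _ hinj] at this
      linarith
    · obtain ⟨f⟩ := Function.Embedding.nonempty_of_card_le (α := S) (β := Fin d) (by simpa using hd.le)
      have : y = ptw (fun i : Fin d => open Classical in if h : ∃ s : S, f s = i then some (h.choose : κ) else none) := by
        funext r
        simp only [ptw]
        rw [eq_comm, Bool.eq_iff_iff, decide_eq_true_iff]
        constructor
        · rintro ⟨i, hi⟩
          split_ifs at hi with hc
          simp only [Option.some.injEq] at hi
          have := (Finset.mem_filter.1 hc.choose.2).2
          rwa [hi] at this
        · intro hr
          have hrS : r ∈ S := by simp [hS, hr]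
          refine ⟨f ⟨r, hrS⟩, ?_⟩
          have hc : ∃ s : S, f s = f ⟨r, hrS⟩ := ⟨_, rfl⟩
          rw [dif_pos hc]
          have := f.injective hc.choose_spec
          rw [this]
      rw [this]
      simp [rl, e]
  funext y
  have := key y
  simp only [rl] at this
  cases h1 : P y <;> cases h2 : P' y <;> simp [h1, h2] at this ⊢

theorem card_low (d : ℕ) : Nat.card {P : (κ → Bool) → Bool | lowd d P} ≤ 2 ^ ((Fintype.card κ + 1) ^ d) := by
  have e : Nat.card ((Fin d → Option κ) → Bool) = 2 ^ ((Fintype.card κ + 1) ^ d) := by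
    rw [Nat.card_fun, Nat.card_fun]; simp
  rw [← e]
  refine Nat.card_le_card_of_injective
    (fun (P : {P : (κ → Bool) → Bool | lowd d P}) (τ : Fin d → Option κ) => P.1 (ptw τ)) ?_
  intro P P' h
  exact Subtype.ext (low_ext d _ _ P.2 P'.2 fun τ => congrFun h τ)

end Low
end AndrPf

namespace AndrPf

section Restr
open scoped Matrix.Norms.L2Operator
variable {κ γ : Type} [Fintype κ] [DecidableEq κ] [Fintype γ] [DecidableEq γ]

/-- the restriction: one live variable in each row -/
def sh (J : κ → γ) (x : κ × γ → Bool) (y : κ → Bool) : κ × γ → Bool :=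
  fun p => xor (x p) (decide (p.2 = J p.1) && y p.1)

theorem sh_fl (J : κ → γ) (x : κ × γ → Bool) (y : κ → Bool) (r : κ) :
    fl (r, J r) (sh J x y) = sh J x (fl r y) := by
  funext p
  by_cases h : p = (r, J r)
  · subst h
    rw [fl_same]
    simp only [sh, fl_same, decide_true, Bool.true_and]
    cases x (r, J r) <;> cases y r <;> rfl
  · rw [fl_ne h]
    simp only [sh]
    by_cases hr : p.1 = r
    · have : p.2 ≠ J p.1 := by
        intro h2; apply h; rw [← hr]; exact Prod.ext rfl h2
      simp [this]
    · rw [fl_ne hr]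

theorem dl_sh (J : κ → γ) (x : κ × γ → Bool) (g : (κ × γ → Bool) → ℝ) (l : List κ) (y : κ → Bool) :
    dl l (fun y => g (sh J x y)) y = dl (l.map fun r => (r, J r)) g (sh J x y) := by
  induction l generalizing y with
  | nil => rfl
  | cons r l ih => simp only [dl, List.map_cons, pd, ih, sh_fl]

theorem dl_int (l : List κ) (P : (κ → Bool) → Bool) : ∀ y, ∃ z : ℤ, dl l (rl P) y = z := by
  induction l with
  | nil => intro y; exact ⟨if P y then 1 else 0, by simp [dl, rl]⟩
  | cons r l ih =>
    intro y
    obtain ⟨a, ha⟩ := ih y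
    obtain ⟨b, hb⟩ := ih (fl r y)
    exact ⟨a - b, by simp [dl, pd, ha, hb]⟩

theorem sum_sh (J : κ → γ) (y : κ → Bool) (F : (κ × γ → Bool) → ℝ) :
    ∑ x, F (sh J x y) = ∑ x, F x := by
  have inv : Function.Involutive (fun x => sh J x y) := by
    intro x; funext p; simp only [sh]
    cases x p <;> cases (decide (p.2 = J p.1) && y p.1) <;> rfl
  exact Equiv.sum_comp inv.toPerm F

theorem sum_swap {d : ℕ} (R : Fin d → κ) (hR : Function.Injective R) (G : (Fin d → γ) → ℝ) :
    (Fintype.card γ : ℝ) ^ d * ∑ J : κ → γ, G (fun i => J (R i)) =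
      (Fintype.card γ : ℝ) ^ Fintype.card κ * ∑ c, G c := by
  set T : (κ → γ) × (Fin d → γ) → (κ → γ) × (Fin d → γ) :=
    fun p => (Function.extend R p.2 p.1, fun i => p.1 (R i)) with hT
  have inv : Function.Involutive T := by
    rintro ⟨J, c⟩
    simp only [hT]
    refine Prod.ext ?_ ?_
    · funext r
      by_cases hr : ∃ i, R i = r
      · obtain ⟨i, rfl⟩ := hr
        simp only [hR.extend_apply]
      · simp only [Function.extend_apply' _ _ _ hr]
    · funext i
      simp only [hR.extend_apply]
  have h := Equiv.sum_comp inv.toPerm (fun p => G p.2)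
  simp only [Function.Involutive.coe_toPerm, hT, Fintype.sum_prod_type] at h
  simp only [Finset.sum_const, Finset.card_univ, nsmul_eq_mul, Fintype.card_fun, Fintype.card_fin,
    Nat.cast_pow] at h
  rw [Finset.mul_sum]
  exact h

open Classical in
theorem bad_card (q : ℕ) (ψ : (κ × γ → Bool) → Bool) :
    (Fintype.card γ : ℝ) ^ (2 * q) *
      ((Finset.univ.filter fun p : (κ → γ) × (κ × γ → Bool) =>
        ¬ lowd (2 * q) (fun y => ψ (sh p.1 p.2 y))).card : ℝ) ≤
    2 ^ Fintype.card κ * 4 ^ q * ‖(dd (Nm (κ × γ)))^[q] (dg ψ)‖ ^ 2 *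
      ((Fintype.card γ : ℝ) ^ Fintype.card κ * 2 ^ (Fintype.card (κ × γ))) := by
  set F : (Fin (2 * q) → κ × γ) → ℝ := fun v => ∑ x, (dl (List.ofFn v) (rl ψ) x) ^ 2 with hF
  have hF0 : ∀ v, 0 ≤ F v := fun v => Finset.sum_nonneg fun x _ => sq_nonneg _
  set Rs := Finset.univ.filter fun R : Fin (2 * q) → κ => Function.Injective R with hRs
  have step1 : ((Finset.univ.filter fun p : (κ → γ) × (κ × γ → Bool) =>
        ¬ lowd (2 * q) (fun y => ψ (sh p.1 p.2 y))).card : ℝ) ≤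
      ∑ p : (κ → γ) × (κ × γ → Bool), ∑ R ∈ Rs, ∑ y : κ → Bool,
        (dl (List.ofFn R) (rl fun y => ψ (sh p.1 p.2 y)) y) ^ 2 := by
    rw [Finset.card_filter]
    push_cast
    refine Finset.sum_le_sum fun p _ => ?_
    split_ifs with h
    · exact Finset.sum_nonneg fun R _ => Finset.sum_nonneg fun y _ => sq_nonneg _
    · unfold lowd at h
      push Not at h
      obtain ⟨R, hR, y, hy⟩ := h
      have h1 : (1 : ℝ) ≤ (dl (List.ofFn R) (rl fun y => ψ (sh p.1 p.2 y)) y) ^ 2 := by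
        obtain ⟨z, hz⟩ := dl_int (List.ofFn R) (fun y => ψ (sh p.1 p.2 y)) y
        rw [hz] at hy ⊢
        have hz0 : z ≠ 0 := by rintro rfl; simp at hy
        have : 1 ≤ z ^ 2 := by have := sq_pos_of_ne_zero hz0; omega
        exact_mod_cast this
      refine h1.trans ?_
      refine (Finset.single_le_sum (f := fun y => (dl (List.ofFn R) (rl fun y => ψ (sh p.1 p.2 y)) y) ^ 2)
        (fun y _ => sq_nonneg _) (Finset.mem_univ y)).trans ?_
      exact Finset.single_le_sum (f := fun R => ∑ y, (dl (List.ofFn R) (rl fun y => ψ (sh p.1 p.2 y)) y) ^ 2)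
        (fun R _ => Finset.sum_nonneg fun y _ => sq_nonneg _) (by simp [hRs, hR])
  have step2 : ∑ p : (κ → γ) × (κ × γ → Bool), ∑ R ∈ Rs, ∑ y : κ → Bool,
        (dl (List.ofFn R) (rl fun y => ψ (sh p.1 p.2 y)) y) ^ 2 =
      2 ^ Fintype.card κ * ∑ R ∈ Rs, ∑ J : κ → γ, F (fun i => (R i, J (R i))) := by
    rw [Finset.sum_comm, Finset.mul_sum]
    refine Finset.sum_congr rfl fun R _ => ?_
    rw [Fintype.sum_prod_type, Finset.mul_sum]
    refine Finset.sum_congr rfl fun J _ => ?_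
    rw [Finset.sum_comm]
    have : ∀ y : κ → Bool, ∑ x, (dl (List.ofFn R) (rl fun y => ψ (sh J x y)) y) ^ 2 =
        F (fun i => (R i, J (R i))) := by
      intro y
      refine Eq.trans ?_ (sum_sh J y (fun x => (dl (List.ofFn fun i => (R i, J (R i))) (rl ψ) x) ^ 2))
      refine Finset.sum_congr rfl fun x _ => ?_
      have := dl_sh J x (rl ψ) (List.ofFn R) y
      rw [List.map_ofFn] at this
      exact congrArg (· ^ 2) this
    simp only [this]
    simp
  have step3 : (Fintype.card γ : ℝ) ^ (2 * q) * ∑ R ∈ Rs, ∑ J : κ → γ, F (fun i => (R i, J (R i))) ≤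
      (Fintype.card γ : ℝ) ^ Fintype.card κ * ∑ v, F v := by
    rw [Finset.mul_sum]
    have : ∑ v, F v = ∑ R : Fin (2 * q) → κ, ∑ c : Fin (2 * q) → γ, F (fun i => (R i, c i)) := by
      rw [← (Equiv.arrowProdEquivProdArrow (Fin (2*q)) (fun _ => κ) (fun _ => γ)).symm.sum_comp, Fintype.sum_prod_type]
      rfl
    rw [this, Finset.mul_sum]
    calc _ = ∑ R ∈ Rs, (Fintype.card γ : ℝ) ^ Fintype.card κ * ∑ c : Fin (2 * q) → γ, F (fun i => (R i, c i)) := by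
          refine Finset.sum_congr rfl fun R hR => ?_
          exact sum_swap R (by simpa [hRs] using hR) (fun c => F (fun i => (R i, c i)))
      _ ≤ _ := Finset.sum_le_sum_of_subset_of_nonneg (Finset.subset_univ _) fun R _ _ =>
          mul_nonneg (by positivity) (Finset.sum_nonneg fun c _ => hF0 _)
  have en := energy q ψ
  calc _ ≤ (Fintype.card γ : ℝ) ^ (2 * q) * (2 ^ Fintype.card κ *
            ∑ R ∈ Rs, ∑ J : κ → γ, F (fun i => (R i, J (R i)))) := by
          rw [← step2]; gcongr
    _ = 2 ^ Fintype.card κ * ((Fintype.card γ : ℝ) ^ (2 * q) *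
            ∑ R ∈ Rs, ∑ J : κ → γ, F (fun i => (R i, J (R i)))) := by ring
    _ ≤ 2 ^ Fintype.card κ * ((Fintype.card γ : ℝ) ^ Fintype.card κ *
          (4 ^ q * ‖(dd (Nm (κ × γ)))^[q] (dg ψ)‖ ^ 2 * 2 ^ Fintype.card (κ × γ))) := by
          refine mul_le_mul_of_nonneg_left (step3.trans ?_) (by positivity)
          exact mul_le_mul_of_nonneg_left en (by positivity)
    _ = _ := by ring

end Restr
end AndrPf

namespace AndrPf

section Count

open Classical in
theorem cnt {A B : Type} [Fintype A] [Fintype B] (S : Finset A) (Q : A → Finset B)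
    (h : ∀ a ∈ S, 2 * (Q a).card ≤ Fintype.card B) :
    2 ^ S.card * (Finset.univ.filter fun f : A → B => ∀ a ∈ S, f a ∈ Q a).card ≤
      Fintype.card B ^ Fintype.card A := by
  have e : (Finset.univ.filter fun f : A → B => ∀ a ∈ S, f a ∈ Q a) =
      Fintype.piFinset (fun a => if a ∈ S then Q a else Finset.univ) := by
    ext f
    simp only [Finset.mem_filter, Finset.mem_univ, true_and, Fintype.mem_piFinset]
    refine forall_congr' fun a => ?_
    split_ifs with ha <;> simp [ha]
  rw [e, Fintype.card_piFinset]
  have e2 : 2 ^ S.card = ∏ a : A, if a ∈ S then 2 else 1 := by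
    rw [Finset.prod_ite_mem]; simp
  rw [e2, ← Finset.prod_mul_distrib]
  have e3 : Fintype.card B ^ Fintype.card A = ∏ _a : A, Fintype.card B := by simp
  rw [e3]
  refine Finset.prod_le_prod' fun a _ => ?_
  split_ifs with ha
  · exact h a ha
  · simp

variable {m : ℕ}

/-- pointwise xor -/
def xr {κ : Type} (a b : κ → Bool) : κ → Bool := fun j => xor (a j) (b j)

theorem xr_xr {κ : Type} (a b : κ → Bool) : xr (xr a b) b = a := by
  funext j; simp [xr]
theorem xr_xr' {κ : Type} (a b : κ → Bool) : xr a (xr a b) = b := by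
  funext j; simp [xr]

/-- xor with fixed vector as equivalence -/
def xrE {κ : Type} (b : κ → Bool) : (κ → Bool) ≃ (κ → Bool) :=
  Function.Involutive.toPerm (fun a => xr a b) (fun a => xr_xr a b)
def xrE' {κ : Type} (a : κ → Bool) : (κ → Bool) ≃ (κ → Bool) :=
  Function.Involutive.toPerm (fun b => xr a b) (fun b => xr_xr' a b)

/-- balanced function -/
def fN (i0 : Fin m) (f : (Fin m → Bool) → Bool) (w : Fin m → Bool) : Bool :=
  xor (w i0) (f (Function.update w i0 false))

theorem fN_fl (i0 : Fin m) (f : (Fin m → Bool) → Bool) (w : Fin m → Bool) :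
    fN i0 f (fl i0 w) = !fN i0 f w := by
  simp only [fN, fl_same]
  have : Function.update (fl i0 w) i0 false = Function.update w i0 false := by
    simp [fl]
  rw [this]
  cases w i0 <;> simp

theorem fN_half (i0 : Fin m) (f : (Fin m → Bool) → Bool) :
    2 * (Finset.univ.filter fun w => fN i0 f w = false).card = 2 ^ m := by
  have h1 : (Finset.univ.filter fun w => fN i0 f w = false).card =
      (Finset.univ.filter fun w => ¬ fN i0 f w = false).card := by
    refine Finset.card_bij' (fun w _ => fl i0 w) (fun w _ => fl i0 w) ?_ ?_ ?_ ?_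
    · intro w hw; simp at hw ⊢; rw [fN_fl, hw]; rfl
    · intro w hw; simp at hw ⊢; rw [fN_fl, hw]; rfl
    · intro w _; exact fl_fl i0 w
    · intro w _; exact fl_fl i0 w
  have h2 := Finset.card_filter_add_card_filter_not (s := (Finset.univ : Finset (Fin m → Bool)))
    (fun w => fN i0 f w = false)
  rw [← h1] at h2
  simp only [Finset.card_univ, Fintype.card_fun, Fintype.card_bool, Fintype.card_fin] at h2
  omega

open Classical in
theorem fix_Z (i0 : Fin m) (θ : ℕ) (Z : Finset ((Fin m → Bool) × (Fin m → Bool))) (hZ : θ * θ ≤ Z.card) :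
    2 ^ θ * (Finset.univ.filter fun p : ((Fin m → Bool) → Bool) × ((Fin m → Bool) → (Fin m → Bool)) =>
      ∀ z ∈ Z, fN i0 p.1 (xr (p.2 z.1) z.2) = false).card ≤
    Fintype.card (((Fin m → Bool) → Bool) × ((Fin m → Bool) → (Fin m → Bool))) := by
  by_cases hu : ∃ u : Fin m → Bool, θ ≤ (Finset.univ.filter fun v : Fin m → Bool => (u, v) ∈ Z).card
  · obtain ⟨u, hu⟩ := hu
    set V := Finset.univ.filter fun v : Fin m → Bool => (u, v) ∈ Z with hV
    have key : ∀ g : (Fin m → Bool) → (Fin m → Bool), 2 ^ θ * (Finset.univ.filter fun f : (Fin m → Bool) → Bool =>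
        ∀ z ∈ Z, fN i0 f (xr (g z.1) z.2) = false).card ≤ Fintype.card ((Fin m → Bool) → Bool) := by
      intro g
      rcases (Finset.univ.filter fun f : (Fin m → Bool) → Bool =>
        ∀ z ∈ Z, fN i0 f (xr (g z.1) z.2) = false).eq_empty_or_nonempty with he | ⟨f0, hf0⟩
      · rw [he]; simp
      simp only [Finset.mem_filter, Finset.mem_univ, true_and] at hf0
      set P : (Fin m → Bool) → (Fin m → Bool) := fun v => Function.update (xr (g u) v) i0 false with hP
      have val : ∀ f : (Fin m → Bool) → Bool, (∀ z ∈ Z, fN i0 f (xr (g z.1) z.2) = false) →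
          ∀ v ∈ V, f (P v) = xr (g u) v i0 := by
        intro f hf v hv
        have := hf (u, v) (by simpa [hV] using hv)
        simp only [fN] at this
        simp only [hP]
        revert this
        cases f (Function.update (xr (g u) v) i0 false) <;> cases xr (g u) v i0 <;> simp
      have inj : Set.InjOn P V := by
        intro v hv v' hv' e
        have h1 := val f0 hf0 v hv
        have h2 := val f0 hf0 v' hv'
        rw [e, h2] at h1
        have : xr (g u) v = xr (g u) v' := by
          funext j
          by_cases hj : j = i0
          · subst hj; exact h1.symm
          · have := congrFun e j
            simpa [hP, hj] using this
        have h3 := congrArg (xr (g u)) this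
        rwa [xr_xr', xr_xr'] at h3
      have hc := cnt (V.image P) (fun a => {f0 a}) (by intro a _; simp)
      rw [Finset.card_image_of_injOn inj] at hc
      rw [Fintype.card_fun]
      refine le_trans (Nat.mul_le_mul (Nat.pow_le_pow_right (by norm_num) hu) (Finset.card_le_card ?_)) hc
      intro f hf
      simp only [Finset.mem_filter, Finset.mem_univ, true_and] at hf ⊢
      intro a ha
      obtain ⟨v, hv, rfl⟩ := Finset.mem_image.1 ha
      rw [Finset.mem_singleton, val f hf v hv, val f0 hf0 v hv]
    rw [Fintype.card_prod, Finset.card_filter, Fintype.sum_prod_type_right, Finset.mul_sum]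
    calc _ ≤ ∑ _g : (Fin m → Bool) → (Fin m → Bool), Fintype.card ((Fin m → Bool) → Bool) := Finset.sum_le_sum fun g _ => by
          have := key g; rwa [Finset.card_filter] at this
      _ = _ := by simp [mul_comm]
  · push Not at hu
    set U := Z.image Prod.fst with hU
    have hUc : θ ≤ U.card := by
      have h1 : Z.card ≤ θ * U.card := by
        refine Finset.card_le_mul_card_image (f := Prod.fst) Z θ ?_
        intro u _
        refine le_trans ?_ (hu u).le
        refine Finset.card_le_card_of_injOn Prod.snd ?_ ?_
        · intro z hz
          simp only [Finset.coe_filter, Set.mem_ofPred_eq] at hz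
          simp only [Finset.coe_filter, Finset.mem_univ, true_and, Set.mem_ofPred_eq]
          rw [← hz.2]; exact hz.1
        · intro z hz z' hz' e
          simp only [Finset.coe_filter, Set.mem_ofPred_eq] at hz hz'
          exact Prod.ext (hz.2.trans hz'.2.symm) e
      rcases Nat.eq_zero_or_pos θ with h0 | h0
      · omega
      · exact Nat.le_of_mul_le_mul_left (hZ.trans h1) h0
    have hv : ∀ u : Fin m → Bool, ∃ v, u ∈ U → (u, v) ∈ Z := by
      intro u
      by_cases h : u ∈ U
      · obtain ⟨z, hz, rfl⟩ := Finset.mem_image.1 h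
        exact ⟨z.2, fun _ => hz⟩
      · exact ⟨u, fun h' => absurd h' h⟩
    choose v hv using hv
    have key : ∀ f : (Fin m → Bool) → Bool, 2 ^ θ * (Finset.univ.filter fun g : (Fin m → Bool) → (Fin m → Bool) =>
        ∀ z ∈ Z, fN i0 f (xr (g z.1) z.2) = false).card ≤ Fintype.card ((Fin m → Bool) → (Fin m → Bool)) := by
      intro f
      have hc := cnt U (fun u => Finset.univ.filter fun a : Fin m → Bool => fN i0 f (xr a (v u)) = false) (by
        intro u _
        have e : (Finset.univ.filter fun a : Fin m → Bool => fN i0 f (xr a (v u)) = false).card =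
            (Finset.univ.filter fun w : Fin m → Bool => fN i0 f w = false).card := by
          refine Finset.card_equiv (xrE (v u)) ?_
          intro a; simp only [Finset.mem_filter, Finset.mem_univ, true_and]; exact Iff.rfl
        rw [e, fN_half]; simp)
      rw [Fintype.card_fun]
      refine le_trans (Nat.mul_le_mul (Nat.pow_le_pow_right (by norm_num) hUc) (Finset.card_le_card ?_)) hc
      intro g hg
      simp only [Finset.mem_filter, Finset.mem_univ, true_and] at hg ⊢
      intro u hu'
      exact hg _ (hv u hu')
    rw [Fintype.card_prod, Finset.card_filter, Fintype.sum_prod_type, Finset.mul_sum]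
    calc _ ≤ ∑ _f : (Fin m → Bool) → Bool, Fintype.card ((Fin m → Bool) → (Fin m → Bool)) := Finset.sum_le_sum fun f _ => by
          have := key f; rwa [Finset.card_filter] at this
      _ = _ := by simp

open Classical in
theorem zeros (i0 : Fin m) (f : (Fin m → Bool) → Bool) (g : (Fin m → Bool) → (Fin m → Bool)) :
    2 * (Finset.univ.filter fun z : (Fin m → Bool) × (Fin m → Bool) =>
      fN i0 f (xr (g z.1) z.2) = false).card = 2 ^ m * 2 ^ m := by
  have e : ∀ u, (Finset.univ.filter fun v : Fin m → Bool => fN i0 f (xr (g u) v) = false).card =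
      (Finset.univ.filter fun w : Fin m → Bool => fN i0 f w = false).card := by
    intro u
    refine Finset.card_equiv (xrE' (g u)) ?_
    intro a; simp only [Finset.mem_filter, Finset.mem_univ, true_and]; exact Iff.rfl
  rw [Finset.card_filter, Fintype.sum_prod_type]
  simp only [← Finset.card_filter, e]
  have := fN_half i0 f
  simp only [Finset.sum_const, Finset.card_univ, Fintype.card_fun, Fintype.card_bool, Fintype.card_fin, smul_eq_mul]
  rw [← this]
  ring

open Classical in
theorem count (i0 : Fin m) (θ k : ℕ) (hk : 2 * k * (θ * θ) ≤ 2 ^ m * 2 ^ m)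
    (Zf : Finset (Finset ((Fin m → Bool) × (Fin m → Bool))))
    (h : ∀ (f : (Fin m → Bool) → Bool) (g : (Fin m → Bool) → (Fin m → Bool)),
      ∃ Zs : Fin k → Finset ((Fin m → Bool) × (Fin m → Bool)), (∀ i, Zs i ∈ Zf) ∧
        ∀ u v, fN i0 f (xr (g u) v) = false ↔ ∃ i, (u, v) ∈ Zs i) :
    2 ^ θ ≤ Zf.card := by
  set Ω := ((Fin m → Bool) → Bool) × ((Fin m → Bool) → (Fin m → Bool))
  set E : Finset ((Fin m → Bool) × (Fin m → Bool)) → Finset Ω := fun Z =>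
    Finset.univ.filter fun p : Ω => ∀ z ∈ Z, fN i0 p.1 (xr (p.2 z.1) z.2) = false with hE
  have cover : (Finset.univ : Finset Ω) ⊆ (Zf.filter fun Z => θ * θ ≤ Z.card).biUnion E := by
    rintro ⟨f, g⟩ _
    obtain ⟨Zs, h1, h2⟩ := h f g
    have hz := zeros i0 f g
    have hsub : (Finset.univ.filter fun z : (Fin m → Bool) × (Fin m → Bool) =>
      fN i0 f (xr (g z.1) z.2) = false) ⊆ Finset.univ.biUnion Zs := by
      rintro ⟨u, v⟩ hz
      simp only [Finset.mem_filter, Finset.mem_univ, true_and] at hz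
      simpa using (h2 u v).1 hz
    have hle := (Finset.card_le_card hsub).trans Finset.card_biUnion_le
    have hpos : 0 < 2 ^ m * 2 ^ m := by positivity
    have : ∃ i, θ * θ ≤ (Zs i).card := by
      by_contra hcon
      push Not at hcon
      have hsum : ∑ i, ((Zs i).card + 1) ≤ ∑ _i : Fin k, θ * θ := Finset.sum_le_sum fun i _ => hcon i
      rw [Finset.sum_add_distrib] at hsum
      simp only [Finset.sum_const, Finset.card_univ, Fintype.card_fin, smul_eq_mul, mul_one] at hsum
      have : 2 * k * (θ * θ) = 2 * (k * (θ * θ)) := by ring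
      rcases Nat.eq_zero_or_pos k with h0 | h0
      · subst h0; rw [zero_mul] at hsum; omega
      · omega
    obtain ⟨i, hi⟩ := this
    refine Finset.mem_biUnion.2 ⟨Zs i, Finset.mem_filter.2 ⟨h1 i, hi⟩, ?_⟩
    simp only [hE, Finset.mem_filter, Finset.mem_univ, true_and]
    rintro ⟨u, v⟩ hz
    exact (h2 u v).2 ⟨i, hz⟩
  have hcard := (Finset.card_le_card cover).trans Finset.card_biUnion_le
  have hΩ : 0 < Fintype.card Ω := Fintype.card_pos
  have : 2 ^ θ * Fintype.card Ω ≤ Zf.card * Fintype.card Ω := by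
    calc 2 ^ θ * Fintype.card Ω ≤ 2 ^ θ * ∑ Z ∈ Zf.filter (fun Z => θ * θ ≤ Z.card), (E Z).card :=
          Nat.mul_le_mul_left _ hcard
      _ = ∑ Z ∈ Zf.filter (fun Z => θ * θ ≤ Z.card), 2 ^ θ * (E Z).card := Finset.mul_sum _ _ _
      _ ≤ ∑ Z ∈ Zf.filter (fun Z => θ * θ ≤ Z.card), Fintype.card Ω :=
          Finset.sum_le_sum fun Z hZ => fix_Z i0 θ Z (Finset.mem_filter.1 hZ).2
      _ = (Zf.filter (fun Z => θ * θ ≤ Z.card)).card * Fintype.card Ω := by simp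
      _ ≤ _ := Nat.mul_le_mul_right _ (Finset.card_filter_le _ _)
  exact Nat.le_of_mul_le_mul_right this hΩ

end Count
end AndrPf

namespace AndrPf

section Univ
variable {ι : Type} [DecidableEq ι]

theorem cf_univ (S : Finset ι) : ∀ h : (ι → Bool) → Bool,
    (∀ x y : ι → Bool, (∀ i ∈ S, x i = y i) → h x = h y) → ∃ φ : CF ι, ∀ x, φ.eval x = h x := by
  induction S using Finset.induction_on with
  | empty =>
    intro h hh
    exact ⟨.cst (h fun _ => false), fun x => hh _ _ (by simp)⟩
  | insert i S hi ih =>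
    intro h hh
    have dep : ∀ b : Bool, ∀ x y : ι → Bool, (∀ i ∈ S, x i = y i) →
        h (Function.update x i b) = h (Function.update y i b) := by
      intro b x y hxy
      apply hh
      intro j hj
      by_cases hji : j = i
      · subst hji; simp
      · simp only [Function.update_of_ne hji]
        exact hxy j ((Finset.mem_insert.1 hj).resolve_left hji)
    obtain ⟨a, ha⟩ := ih (fun x => h (Function.update x i true)) (dep true)
    obtain ⟨b, hb⟩ := ih (fun x => h (Function.update x i false)) (dep false)
    refine ⟨.or (.and (.leaf i true) a) (.and (.leaf i false) b), fun x => ?_⟩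
    simp only [CF.eval, ha, hb]
    cases hx : x i
    · have : Function.update x i false = x := by rw [← hx]; exact Function.update_eq_self i x
      simp [this]
    · have : Function.update x i true = x := by rw [← hx]; exact Function.update_eq_self i x
      simp [this]

theorem cf_dmf (φ : CF ι) : (∃ c, ∀ x, φ.eval x = c) ∨ ∃ ψ : DMF ι, ∀ x, ψ.eval x = φ.eval x := by
  induction φ with
  | cst b => exact Or.inl ⟨b, fun _ => rfl⟩
  | leaf i b => exact Or.inr ⟨.leaf i b, fun _ => rfl⟩
  | and a b iha ihb =>
    rcases iha with ⟨c, hc⟩ | ⟨a', ha⟩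
    · cases c
      · exact Or.inl ⟨false, fun x => by simp [CF.eval, hc]⟩
      · rcases ihb with ⟨c', hc'⟩ | ⟨b', hb⟩
        · exact Or.inl ⟨c', fun x => by simp [CF.eval, hc, hc']⟩
        · exact Or.inr ⟨b', fun x => by simp [CF.eval, hc, hb]⟩
    · rcases ihb with ⟨c', hc'⟩ | ⟨b', hb⟩
      · cases c'
        · exact Or.inl ⟨false, fun x => by simp [CF.eval, hc']⟩
        · exact Or.inr ⟨a', fun x => by simp [CF.eval, hc', ha]⟩
      · exact Or.inr ⟨.and a' b', fun x => by simp [CF.eval, DMF.eval, ha, hb]⟩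
  | or a b iha ihb =>
    rcases iha with ⟨c, hc⟩ | ⟨a', ha⟩
    · cases c
      · rcases ihb with ⟨c', hc'⟩ | ⟨b', hb⟩
        · exact Or.inl ⟨c', fun x => by simp [CF.eval, hc, hc']⟩
        · exact Or.inr ⟨b', fun x => by simp [CF.eval, hc, hb]⟩
      · exact Or.inl ⟨true, fun x => by simp [CF.eval, hc]⟩
    · rcases ihb with ⟨c', hc'⟩ | ⟨b', hb⟩
      · cases c'
        · exact Or.inr ⟨a', fun x => by simp [CF.eval, hc', ha]⟩
        · exact Or.inl ⟨true, fun x => by simp [CF.eval, hc']⟩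
      · exact Or.inr ⟨.or a' b', fun x => by simp [CF.eval, DMF.eval, ha, hb]⟩

/-- substitution of constants -/
def conv {ι' : Type} (σ : ι → ι' ⊕ Bool) : DMF ι → CF ι'
  | .leaf i b => match σ i with
    | Sum.inl j => .leaf j b
    | Sum.inr c => .cst (if b then c else !c)
  | .and a b => .and (conv σ a) (conv σ b)
  | .or a b => .or (conv σ a) (conv σ b)

theorem conv_eval {ι' : Type} (σ : ι → ι' ⊕ Bool) (φ : DMF ι) (x : ι' → Bool) :
    (conv σ φ).eval x = φ.eval (fun i => Sum.elim x id (σ i)) := by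
  induction φ with
  | leaf i b =>
    simp only [conv, DMF.eval]
    cases σ i <;> simp [CF.eval]
  | and a b iha ihb => simp only [conv, CF.eval, DMF.eval, iha, ihb]
  | or a b iha ihb => simp only [conv, CF.eval, DMF.eval, iha, ihb]

theorem conv_size {ι' : Type} (σ : ι → ι' ⊕ Bool) (φ : DMF ι) : (conv σ φ).size ≤ φ.size := by
  induction φ with
  | leaf i b =>
    simp only [conv, DMF.size]
    cases σ i <;> simp [CF.size]
  | and a b iha ihb => simp only [conv, CF.size, DMF.size]; omega
  | or a b iha ihb => simp only [conv, CF.size, DMF.size]; omega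

theorem Lc_formula [Fintype ι] {ι' : Type} (h : (ι → Bool) → Bool) (σ : ι → ι' ⊕ Bool) :
    ∃ Φ : CF ι', (∀ x, Φ.eval x = h (fun i => Sum.elim x id (σ i))) ∧ Φ.size ≤ Lc h := by
  by_cases hc : ∃ c, ∀ x, h x = c
  · obtain ⟨c, hc⟩ := hc
    exact ⟨.cst c, fun x => by rw [hc]; rfl, by simp [CF.size]⟩
  · have hL : Lc h = sInf {s | ∃ φ : DMF ι, φ.size = s ∧ ∀ x, φ.eval x = h x} := by
      unfold Lc; rw [if_neg hc]
    have hne : {s | ∃ φ : DMF ι, φ.size = s ∧ ∀ x, φ.eval x = h x}.Nonempty := by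
      obtain ⟨φ, hφ⟩ := cf_univ Finset.univ h (fun x y hxy => by
        rw [show x = y from funext fun i => hxy i (Finset.mem_univ i)])
      rcases cf_dmf φ with ⟨c, h'⟩ | ⟨ψ, hψ⟩
      · exact absurd ⟨c, fun x => by rw [← hφ, h']⟩ hc
      · exact ⟨ψ.size, ψ, rfl, fun x => by rw [hψ, hφ]⟩
    obtain ⟨φ, h1, h2⟩ := Nat.sInf_mem hne
    refine ⟨conv σ φ, fun x => by rw [conv_eval, h2], ?_⟩
    rw [hL, ← h1]; exact conv_size σ φ

end Univ

section Parity

theorem parity_fl {n : ℕ} (j : Fin n) (x : Fin n → Bool) : parity (fl j x) = !parity x := by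
  have h1 : ∀ x : Fin n → Bool, x j = true →
      (Finset.univ.filter fun i => x i = true).card = (Finset.univ.filter fun i => fl j x i = true).card + 1 := by
    intro x hx
    have : (Finset.univ.filter fun i => fl j x i = true) = (Finset.univ.filter fun i => x i = true).erase j := by
      ext i
      simp only [Finset.mem_filter, Finset.mem_univ, true_and, Finset.mem_erase]
      by_cases h : i = j
      · subst h; simp [fl_same, hx]
      · simp [fl_ne h, h]
    rw [this, Finset.card_erase_add_one]
    simp [hx]
  have h2 : ∀ a b : ℕ, a = b + 1 → decide (b % 2 = 1) = !decide (a % 2 = 1) := by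
    intro a b h
    rw [← decide_not]
    exact decide_eq_decide.2 (by omega)
  unfold parity
  cases hx : x j
  · have := h1 (fl j x) (by rw [fl_same, hx]; rfl)
    rw [fl_fl] at this
    rw [h2 _ _ this, Bool.not_not]
  · exact h2 _ _ (h1 x hx)

theorem parity_sh {κ : Type} [DecidableEq κ] {n : ℕ} (J : κ → Fin n) (x : κ × Fin n → Bool) (y : κ → Bool) (r : κ) :
    parity (fun j => sh J x y (r, j)) = xor (parity fun j => x (r, j)) (y r) := by
  cases hy : y r
  · simp [sh, hy]
  · have : (fun j => sh J x y (r, j)) = fl (J r) (fun j => x (r, j)) := by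
      funext j
      by_cases h : j = J r
      · subst h; simp [sh, hy, fl_same]
      · simp [sh, hy, h, fl_ne h]
    rw [this, parity_fl]; simp

end Parity

section Core
open scoped Matrix.Norms.L2Operator

open Classical in
theorem good_exists {κ γ : Type} [Fintype κ] [DecidableEq κ] [Fintype γ] [DecidableEq γ] [Nonempty γ]
    (q C : ℕ) (t : ℝ) (ht : 1 ≤ t) (D : ℕ)
    (hC : ∀ φ : CF (κ × γ), φ.depth ≤ D →
      ‖(dd (Nm (κ × γ)))^[q] (dg φ.eval)‖ ≤ ((C : ℝ) * D) ^ C * √φ.size ^ q)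
    (k l : ℕ) (Φ : Fin k → CF (κ × γ)) (hd : ∀ i, (Φ i).depth ≤ D) (hl : ∀ i, (toks t (Φ i)).length ≤ l)
    (hbig : (k : ℝ) * l * (2 ^ Fintype.card κ * 4 ^ q * (((C : ℝ) * D) ^ C * √t ^ q) ^ 2) <
      (Fintype.card γ : ℝ) ^ (2 * q)) :
    ∃ (J : κ → γ) (x : κ × γ → Bool), ∀ i,
      (fun y => (Φ i).eval (sh J x y)) ∈ Cls {P : (κ → Bool) → Bool | lowd (2 * q) P} l := by
  by_contra hcon
  push Not at hcon
  set bad : CF (κ × γ) → Finset ((κ → γ) × (κ × γ → Bool)) := fun χ =>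
    Finset.univ.filter fun p : (κ → γ) × (κ × γ → Bool) =>
        ¬ lowd (2 * q) (fun y => χ.eval (sh p.1 p.2 y)) with hbad
  set bd : Bool ⊕ CF (κ × γ) → Finset ((κ → γ) × (κ × γ → Bool)) := Sum.elim (fun _ => ∅) bad with hbd
  set Tot : ℝ := (Fintype.card γ : ℝ) ^ Fintype.card κ * 2 ^ (Fintype.card (κ × γ)) with hTot
  have hT0 : 0 < Tot := by
    have : (0 : ℝ) < Fintype.card γ := by exact_mod_cast Fintype.card_pos
    positivity
  have cover : (Finset.univ : Finset ((κ → γ) × (κ × γ → Bool))) ⊆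
      Finset.univ.biUnion fun i => (toks t (Φ i)).toFinset.biUnion bd := by
    rintro ⟨J, x⟩ _
    obtain ⟨i, hi⟩ := hcon J x
    have : ∃ χ, Sum.inr χ ∈ toks t (Φ i) ∧ ¬ lowd (2 * q) (fun y => χ.eval (sh J x y)) := by
      by_contra hc
      push Not at hc
      exact hi (mem_Cls _ l t (sh J x) (Φ i) (hl i) hc)
    obtain ⟨χ, h1, h2⟩ := this
    refine Finset.mem_biUnion.2 ⟨i, Finset.mem_univ _, Finset.mem_biUnion.2 ⟨Sum.inr χ, by simpa using h1, ?_⟩⟩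
    simpa [hbd, hbad] using h2
  set E := (2 ^ Fintype.card κ * 4 ^ q * (((C : ℝ) * D) ^ C * √t ^ q) ^ 2) with hE
  have hE0 : 0 ≤ E := by positivity
  set n2 : ℝ := (Fintype.card γ : ℝ) ^ (2 * q) with hn2
  have hn0 : 0 ≤ n2 := by positivity
  have each : ∀ i, ∀ e ∈ (toks t (Φ i)).toFinset, n2 * ((bd e).card : ℝ) ≤ E * Tot := by
    intro i e he
    rw [List.mem_toFinset] at he
    cases e with
    | inl b => simp [hbd]; positivity
    | inr χ =>
      have hm := toks_mem t ht (Φ i) χ he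
      have h1 := bad_card q χ.eval (κ := κ) (γ := γ)
      have h2 := hC χ (hm.2.trans (hd i))
      have h3 : ‖(dd (Nm (κ × γ)))^[q] (dg χ.eval)‖ ≤ ((C : ℝ) * D) ^ C * √t ^ q := by
        refine h2.trans ?_
        have := Real.sqrt_le_sqrt hm.1
        gcongr
      refine h1.trans ?_
      rw [hE]
      gcongr
  have hcard : (Fintype.card ((κ → γ) × (κ × γ → Bool)) : ℝ) = Tot := by
    rw [Fintype.card_prod, Fintype.card_fun, Fintype.card_fun]; push_cast; simp [hTot]
  have h1 := Finset.card_le_card cover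
  have h2 : (Fintype.card ((κ → γ) × (κ × γ → Bool)) : ℝ) ≤
      ∑ i, ∑ e ∈ (toks t (Φ i)).toFinset, ((bd e).card : ℝ) := by
    have : (Finset.univ : Finset ((κ → γ) × (κ × γ → Bool))).card ≤
      ∑ i, ∑ e ∈ (toks t (Φ i)).toFinset, (bd e).card :=
      h1.trans (Finset.card_biUnion_le.trans (Finset.sum_le_sum fun i _ => Finset.card_biUnion_le))
    exact_mod_cast this
  rw [hcard] at h2
  have h3 : n2 * Tot ≤ k * l * E * Tot := by
    calc n2 * Tot ≤ n2 * ∑ i, ∑ e ∈ (toks t (Φ i)).toFinset, ((bd e).card : ℝ) := by gcongr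
      _ = ∑ i, ∑ e ∈ (toks t (Φ i)).toFinset, n2 * ((bd e).card : ℝ) := by simp only [Finset.mul_sum]
      _ ≤ ∑ i : Fin k, (l : ℝ) * (E * Tot) := by
          refine Finset.sum_le_sum fun i _ => ?_
          refine (Finset.sum_le_sum (each i)).trans ?_
          rw [Finset.sum_const, nsmul_eq_mul]
          have : ((toks t (Φ i)).toFinset.card : ℝ) ≤ l := by
            exact_mod_cast (List.toFinset_card_le _).trans (hl i)
          gcongr
      _ = k * l * E * Tot := by simp; ring
  have := le_of_mul_le_mul_right h3 hT0
  linarith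

theorem tabIdx_inj {m : ℕ} : Function.Injective (tabIdx : (Fin m → Bool) → Fin (2 ^ m)) := by
  intro u v h
  unfold tabIdx at h
  have := finFunctionFinEquiv.injective h
  funext i
  exact finTwoEquiv.symm.injective (congrFun this i)

/-- substitution that fixes the tables -/
noncomputable def sgm {m : ℕ} (f : (Fin m → Bool) → Bool) (g : (Fin m → Bool) → (Fin m → Bool)) :
    AndrIdx m → (Fin (m + m) × Fin (2 ^ m)) ⊕ Bool :=
  Sum.elim (fun a => Sum.inr (f (Function.invFun tabIdx a)))
    (Sum.elim (fun p => Sum.inr (g (Function.invFun tabIdx p.1) p.2)) Sum.inl)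

theorem Andr_sgm {m : ℕ} (f : (Fin m → Bool) → Bool) (g : (Fin m → Bool) → (Fin m → Bool))
    (x : Fin (m + m) × Fin (2 ^ m) → Bool) (u v : Fin m → Bool)
    (hx : ∀ r, parity (fun j => x (r, j)) = Fin.append u v r) :
    Andr m (fun i => Sum.elim x id (sgm f g i)) = f (xr (g u) v) := by
  have inv : ∀ w : Fin m → Bool, Function.invFun tabIdx (tabIdx w) = w :=
    Function.leftInverse_invFun tabIdx_inj
  simp only [Andr, sgm, Sum.elim_inl, Sum.elim_inr, id, inv, hx, Fin.append_left, Fin.append_right]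
  rfl

open Classical in
/-- zero set of a shifted function -/
noncomputable def zz {m : ℕ} (C : (Fin (m + m) → Bool) → Bool) (w : Fin (m + m) → Bool) :
    Finset ((Fin m → Bool) × (Fin m → Bool)) :=
  Finset.univ.filter fun p => C (xr (Fin.append p.1 p.2) w) = false

theorem core (m : ℕ) (hm : 1 ≤ m) (q C : ℕ) (t : ℝ) (ht : 1 ≤ t) (D : ℕ)
    (hC : ∀ φ : CF (Fin (m + m) × Fin (2 ^ m)), φ.depth ≤ D →
      ‖(dd (Nm (Fin (m + m) × Fin (2 ^ m))))^[q] (dg φ.eval)‖ ≤ ((C : ℝ) * D) ^ C * √φ.size ^ q)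
    (k l θ : ℕ) (h : Fin k → (AndrIdx m → Bool) → Bool)
    (hA : ∀ z : AndrIdx m → Bool, (Andr m z = true ↔ ∀ i, h i z = true))
    (hform : ∀ f g i, ∃ Φ : CF (Fin (m + m) × Fin (2 ^ m)), (∀ x, Φ.eval x = h i (fun a => Sum.elim x id (sgm f g a))) ∧
      Φ.depth ≤ D ∧ (toks t Φ).length ≤ l)
    (hbig : (k : ℝ) * l * (2 ^ (m + m) * 4 ^ q * (((C : ℝ) * D) ^ C * √t ^ q) ^ 2) <
      ((2 : ℝ) ^ m) ^ (2 * q))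
    (hk : 2 * k * (θ * θ) ≤ 2 ^ m * 2 ^ m) :
    2 ^ θ ≤ (2 ^ ((m + m + 1) ^ (2 * q)) + 2) ^ l * 2 ^ (m + m) := by
  classical
  set P := {P : (Fin (m + m) → Bool) → Bool | lowd (2 * q) P} with hP
  set Cl := Cls P l with hCl
  set Zf : Finset (Finset ((Fin m → Bool) × (Fin m → Bool))) :=
    (Finset.univ : Finset (Cl × (Fin (m + m) → Bool))).image fun p => zz p.1.1 p.2 with hZf
  have hcard : Zf.card ≤ (2 ^ ((m + m + 1) ^ (2 * q)) + 2) ^ l * 2 ^ (m + m) := by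
    refine Finset.card_image_le.trans ?_
    rw [Finset.card_univ, Fintype.card_prod, ← Nat.card_eq_fintype_card]
    refine Nat.mul_le_mul ?_ (by simp)
    refine (card_Cls P l).trans (Nat.pow_le_pow_left (Nat.add_le_add_right ?_ 2) l)
    have := card_low (κ := Fin (m + m)) (2 * q)
    rwa [Fintype.card_fin] at this
  refine le_trans ?_ hcard
  refine count ⟨0, hm⟩ θ k hk Zf ?_
  intro f g
  choose Φ hΦ1 hΦ2 hΦ3 using hform (fN ⟨0, hm⟩ f) g
  obtain ⟨J, x, hJ⟩ := good_exists q C t ht D hC k l Φ hΦ2 hΦ3 (by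
    rw [Fintype.card_fin, Fintype.card_fin]; push_cast; exact hbig)
  set w : Fin (m + m) → Bool := fun r => parity fun j => x (r, j) with hw
  refine ⟨fun i => zz (fun y => (Φ i).eval (sh J x y)) w, ?_, ?_⟩
  · intro i
    exact Finset.mem_image.2 ⟨(⟨_, hJ i⟩, w), Finset.mem_univ _, rfl⟩
  · intro u v
    have hA' := hA (fun a => Sum.elim (sh J x (xr (Fin.append u v) w)) id (sgm (fN ⟨0, hm⟩ f) g a))
    rw [Andr_sgm _ _ _ u v (by
      intro r
      rw [parity_sh]
      simp only [xr, hw]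
      cases (parity fun j => x (r, j)) <;> cases Fin.append u v r <;> rfl)] at hA'
    simp only [← hΦ1] at hA'
    simp only [zz, Finset.mem_filter, Finset.mem_univ, true_and]
    rw [← Bool.not_eq_true, hA']
    push Not
    simp only [ne_eq, Bool.not_eq_true]

end Core
end AndrPf

namespace AndrPf
section Asym

theorem poly_lt_exp (K : ℝ) (p : ℕ) (ε : ℝ) (hε : 0 < ε) :
    ∃ m₀ : ℕ, ∀ m ≥ m₀, K * (m : ℝ) ^ p < ((2 : ℝ) ^ m) ^ ε := by
  have hr : (1 : ℝ) < 2 ^ ε := Real.one_lt_rpow (by norm_num) hε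
  have h := (tendsto_pow_const_div_const_pow_of_one_lt p hr).const_mul K
  rw [mul_zero] at h
  obtain ⟨m₀, h0⟩ := Filter.eventually_atTop.1 (h.eventually (gt_mem_nhds (zero_lt_one)))
  refine ⟨m₀, fun m hm => ?_⟩
  have h1 := h0 m hm
  have e : ((2 : ℝ) ^ m) ^ ε = (2 ^ ε) ^ m := by
    rw [← Real.rpow_natCast, ← Real.rpow_natCast, ← Real.rpow_mul (by norm_num),
      ← Real.rpow_mul (by norm_num), mul_comm]
  rw [e]
  have hp : (0 : ℝ) < (2 ^ ε) ^ m := by positivity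
  rw [← mul_div_assoc, div_lt_one hp] at h1
  exact h1

theorem main_big (m q C D0 k l : ℕ) (N α γ e : ℝ) (hN : 1 ≤ N)
    (hγ : 0 < γ) (hq : 5 ≤ q * (γ / 4)) (he : α + e ≤ 2)
    (hk : (k : ℝ) ≤ N ^ α) (hl : (l : ℝ) ≤ (1 + 4 * D0) * m * N ^ e)
    (hbig : ((1 + 4 * D0) * 4 ^ q * (C * D0) ^ (2 * C) : ℝ) * (m : ℝ) ^ (2 * C + 1) < N) :
    (k : ℝ) * l * (N * N * 4 ^ q * (((C : ℝ) * (D0 * m : ℕ)) ^ C * √(N ^ (2 - γ / 4)) ^ q) ^ 2) <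
      N ^ (2 * q) := by
  have hN0 : 0 < N := by linarith
  have ht : (√(N ^ (2 - γ / 4)) ^ q) ^ 2 ≤ N ^ (2 * (q : ℝ) - 5) := by
    rw [← pow_mul, mul_comm q 2, pow_mul, Real.sq_sqrt (by positivity), ← Real.rpow_natCast,
      ← Real.rpow_mul hN0.le]
    exact Real.rpow_le_rpow_of_exponent_le hN (by nlinarith)
  have hkl : (k : ℝ) * l ≤ (1 + 4 * D0) * m * (N * N) := by
    calc (k : ℝ) * l ≤ N ^ α * ((1 + 4 * D0) * m * N ^ e) := by gcongr
      _ = (1 + 4 * D0) * m * N ^ (α + e) := by rw [Real.rpow_add hN0]; ring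
      _ ≤ (1 + 4 * D0) * m * N ^ (2 : ℝ) := by
        gcongr
      _ = _ := by rw [Real.rpow_two]; ring
  have e1 : N ^ (2 * q) = N * N ^ (4 : ℕ) * N ^ (2 * (q : ℝ) - 5) := by
    have : N ^ (2 * (q : ℝ) - 5) = N ^ (2 * q) / N ^ 5 := by
      rw [Real.rpow_sub hN0]
      norm_cast
    rw [this]; field_simp
  calc (k : ℝ) * l * (N * N * 4 ^ q * (((C : ℝ) * (D0 * m : ℕ)) ^ C * √(N ^ (2 - γ / 4)) ^ q) ^ 2)
      ≤ ((1 + 4 * D0) * m * (N * N)) * (N * N * 4 ^ q * ((((C : ℝ) * (D0 * m : ℕ)) ^ C) ^ 2 * N ^ (2 * (q : ℝ) - 5))) := by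
        rw [mul_pow _ _ 2]
        gcongr
    _ = (((1 + 4 * D0) * 4 ^ q * (C * D0) ^ (2 * C) : ℝ) * (m : ℝ) ^ (2 * C + 1)) * N ^ (4 : ℕ) * N ^ (2 * (q : ℝ) - 5) := by
        push_cast
        rw [← mul_assoc (C : ℝ), mul_pow _ (m : ℝ) C]
        ring
    _ < N * N ^ (4 : ℕ) * N ^ (2 * (q : ℝ) - 5) := by gcongr
    _ = _ := e1.symm

theorem main_contra (m q D0 l θ : ℕ) (hm : 1 ≤ m) (N a γ : ℝ) (hN : 1 ≤ N) (he : 0 ≤ a - γ / 2)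
    (hl : (l : ℝ) ≤ (1 + 4 * D0) * m * N ^ (a - γ / 2))
    (hθ : N ^ a / 2 < θ + 1)
    (hbig : (2 * (3 * 3 ^ (2 * q) * (1 + 4 * D0) + 3) : ℝ) * (m : ℝ) ^ (2 * q + 1) < N ^ (γ / 2))
    (h : 2 ^ θ ≤ (2 ^ ((m + m + 1) ^ (2 * q)) + 2) ^ l * 2 ^ (m + m)) : False := by
  have hN0 : 0 < N := by linarith
  set A := (m + m + 1) ^ (2 * q) with hA
  have h1 : 2 ^ θ ≤ 2 ^ ((A + 2) * l + (m + m)) := by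
    refine h.trans ?_
    rw [pow_add 2 ((A + 2) * l), pow_mul 2 (A + 2)]
    refine Nat.mul_le_mul_right _ (Nat.pow_le_pow_left ?_ l)
    rw [pow_add]
    have := Nat.one_le_two_pow (n := A)
    omega
  have h2 : θ ≤ (A + 2) * l + (m + m) := (Nat.pow_le_pow_iff_right (by norm_num)).1 h1
  have hm' : (1 : ℝ) ≤ m := by exact_mod_cast hm
  have hA' : (A : ℝ) + 2 ≤ 3 * (3 ^ (2 * q) * (m : ℝ) ^ (2 * q)) := by
    have a1 : (A : ℝ) ≤ (3 * m) ^ (2 * q) := by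
      rw [hA]; push_cast
      gcongr
      linarith
    have a2 : (1 : ℝ) ≤ (3 * m) ^ (2 * q) := one_le_pow₀ (by linarith)
    rw [← mul_pow]; linarith
  have h3 : (θ : ℝ) ≤ (A + 2) * l + (m + m) := by exact_mod_cast h2
  set X := N ^ (a - γ / 2) with hX
  have hX1 : 1 ≤ X := Real.one_le_rpow hN he
  have e : N ^ a = X * N ^ (γ / 2) := by
    rw [hX, ← Real.rpow_add hN0]; congr 1; ring
  have hmp : (m : ℝ) ≤ (m : ℝ) ^ (2 * q + 1) := le_self_pow₀ hm' (by omega)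
  have h4 : (θ : ℝ) + 1 ≤ ((3 * 3 ^ (2 * q) * (1 + 4 * D0) + 3) * (m : ℝ) ^ (2 * q + 1)) * X := by
    calc (θ : ℝ) + 1 ≤ (3 * (3 ^ (2 * q) * (m : ℝ) ^ (2 * q))) * ((1 + 4 * D0) * m * X) + 3 * m := by
          have : ((A : ℝ) + 2) * l ≤ (3 * (3 ^ (2 * q) * (m : ℝ) ^ (2 * q))) * ((1 + 4 * D0) * m * X) := by
            gcongr
          linarith
      _ = 3 * 3 ^ (2 * q) * (1 + 4 * D0) * (m : ℝ) ^ (2 * q + 1) * X + 3 * (m * 1) := by ring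
      _ ≤ 3 * 3 ^ (2 * q) * (1 + 4 * D0) * (m : ℝ) ^ (2 * q + 1) * X + 3 * ((m : ℝ) ^ (2 * q + 1) * X) := by
          gcongr
      _ = _ := by ring
  have h5 : X * ((2 * (3 * 3 ^ (2 * q) * (1 + 4 * D0) + 3) : ℝ) * (m : ℝ) ^ (2 * q + 1)) < X * N ^ (γ / 2) :=
    mul_lt_mul_of_pos_left hbig (by linarith)
  rw [← e] at h5
  nlinarith

end Asym

set_option maxHeartbeats 1000000 in
open scoped Matrix.Norms.L2Operator in
theorem main_thm (α β : ℝ) (hα0 : 0 < α) (hα2 : α < 2)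
    (hβ : β < 3 - α / 2) :
    ∃ m₀ : ℕ, ∀ m ≥ m₀,
      ¬ ∃ (k : ℕ) (h : Fin k → (AndrIdx m → Bool) → Bool),
          (k : ℝ) ≤ ((2 : ℝ) ^ m) ^ α ∧
          (∀ i, (Lc (h i) : ℝ) ≤ ((2 : ℝ) ^ m) ^ β) ∧
          (∀ z : AndrIdx m → Bool, (Andr m z = true ↔ ∀ i, h i z = true)) := by
  obtain ⟨b, hb1, hb2, hb3⟩ : ∃ b : ℝ, β ≤ b ∧ 2 ≤ b ∧ b < 3 - α / 2 :=
    ⟨max β 2, le_max_left _ _, le_max_right _ _, max_lt hβ (by linarith)⟩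
  obtain ⟨γ, hγ⟩ : ∃ γ : ℝ, γ = 3 - α / 2 - b := ⟨_, rfl⟩
  have hγ0 : 0 < γ := by linarith
  obtain ⟨q, hq'⟩ := exists_nat_ge (20 / γ)
  have hq : 5 ≤ q * (γ / 4) := by
    rw [div_le_iff₀ hγ0] at hq'; linarith
  obtain ⟨B, hB0, hB⟩ := balance (γ / 16) (by linarith)
  obtain ⟨C, hC1, hC⟩ := moment q
  obtain ⟨D0, hD0⟩ := exists_nat_ge (B * (1 + b))
  have hD0' : 1 ≤ D0 := by
    rw [Nat.one_le_iff_ne_zero]; rintro rfl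
    have : 0 < B * (1 + b) := by positivity
    simp at hD0; linarith
  obtain ⟨m1, hm1⟩ := poly_lt_exp ((1 + 4 * D0) * 4 ^ q * (C * D0) ^ (2 * C) : ℝ) (2 * C + 1) 1 one_pos
  obtain ⟨m2, hm2⟩ := poly_lt_exp (2 * (3 * 3 ^ (2 * q) * (1 + 4 * D0) + 3) : ℝ) (2 * q + 1) (γ / 2) (by linarith)
  refine ⟨max 1 (max m1 m2), ?_⟩
  rintro m hm ⟨k, h, hk, hL, hA⟩
  have hm0 : 1 ≤ m := (le_max_left _ _).trans hm
  have H1 := hm1 m (((le_max_left _ _).trans (le_max_right _ _)).trans hm)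
  have H2 := hm2 m (((le_max_right _ _).trans (le_max_right _ _)).trans hm)
  rw [Real.rpow_one] at H1
  have hm' : (1 : ℝ) ≤ m := by exact_mod_cast hm0
  have eNN : ((2 : ℝ) ^ (m + m)) = 2 ^ m * 2 ^ m := pow_add _ _ _
  obtain ⟨N, hNdef⟩ : ∃ N : ℝ, N = 2 ^ m := ⟨_, rfl⟩
  have hlogN : Real.log N = m * Real.log 2 := by rw [hNdef, Real.log_pow]
  have hN : 1 ≤ N := by rw [hNdef]; exact one_le_pow₀ (by norm_num)
  have hN0 : 0 < N := by linarith
  obtain ⟨e, he⟩ : ∃ e : ℝ, e = (1 - α / 2) - γ / 2 := ⟨_, rfl⟩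
  have he0 : 0 ≤ e := by linarith
  have hXe : 1 ≤ N ^ e := Real.one_le_rpow hN he0
  have hlfl := Nat.floor_le (a := 1 + 4 * (D0 * m : ℝ) * N ^ e) (by positivity)
  have hl : ((⌊1 + 4 * (D0 * m : ℝ) * N ^ e⌋₊ : ℕ) : ℝ) ≤ (1 + 4 * D0) * m * N ^ ((1 - α / 2) - γ / 2) := by
    refine hlfl.trans ?_
    rw [← he]
    have : 1 * 1 ≤ (m : ℝ) * N ^ e := by gcongr
    nlinarith
  have ht : 1 ≤ N ^ (2 - γ / 4) := Real.one_le_rpow hN (by linarith)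
  have hfin := core m hm0 q C (N ^ (2 - γ / 4)) ht (D0 * m)
    (fun φ hφ => hC _ (D0 * m) (Nat.mul_pos hD0' hm0) φ hφ q le_rfl) k
    ⌊1 + 4 * (D0 * m : ℝ) * N ^ e⌋₊ ⌊N ^ (1 - α / 2) / 2⌋₊ h hA ?_ ?_ ?_
  · refine main_contra m q D0 _ _ hm0 N (1 - α / 2) γ hN (by linarith) hl (Nat.lt_floor_add_one _) ?_ hfin
    rw [hNdef]; exact H2
  · intro f g i
    obtain ⟨Φ, hΦ, hΦs⟩ := Lc_formula (h i) (sgm f g)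
    obtain ⟨Ψ, hΨ, hΨs, hΨd⟩ := hB _ Φ
    have s1 : (Φ.size : ℝ) ≤ N ^ b := by
      calc (Φ.size : ℝ) ≤ (Lc (h i) : ℝ) := by exact_mod_cast hΦs
        _ ≤ N ^ β := by rw [hNdef]; exact hL i
        _ ≤ N ^ b := Real.rpow_le_rpow_of_exponent_le hN hb1
    have s2 : Real.log Φ.size ≤ b * m := by
      rcases Nat.eq_zero_or_pos Φ.size with h0 | h0
      · rw [h0]; simp; positivity
      · refine (Real.log_le_log (by exact_mod_cast h0) s1).trans ?_
        rw [Real.log_rpow hN0, hlogN]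
        have : Real.log 2 ≤ 1 := by linarith [Real.log_two_lt_d9]
        have : (m : ℝ) * Real.log 2 ≤ m * 1 := by gcongr
        nlinarith
    have d1 : (Ψ.depth : ℝ) ≤ D0 * m := by
      calc (Ψ.depth : ℝ) ≤ B * (1 + Real.log Φ.size) := hΨd
        _ ≤ B * (m + b * m) := by gcongr
        _ = (B * (1 + b)) * m := by ring
        _ ≤ D0 * m := by gcongr
    refine ⟨Ψ, fun x => (hΨ x).trans (hΦ x), by exact_mod_cast d1, Nat.le_floor ?_⟩
    refine (toks_len _ ht Ψ).trans ?_
    have s3 : (Ψ.size : ℝ) / N ^ (2 - γ / 4) ≤ N ^ e := by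
      rw [div_le_iff₀ (by positivity), ← Real.rpow_add hN0]
      calc (Ψ.size : ℝ) ≤ (Φ.size : ℝ) ^ (1 + γ / 16) := hΨs
        _ ≤ (N ^ b) ^ (1 + γ / 16) := by gcongr
        _ = N ^ (b * (1 + γ / 16)) := by rw [← Real.rpow_mul hN0.le]
        _ ≤ _ := Real.rpow_le_rpow_of_exponent_le hN (by nlinarith)
    gcongr
  · rw [eNN, ← hNdef]
    refine main_big m q C D0 k _ N α γ _ hN hγ0 hq (by linarith) (by rw [hNdef]; exact hk) hl ?_
    rw [hNdef]; exact H1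
  · have t0 := Nat.floor_le (a := N ^ (1 - α / 2) / 2) (by positivity)
    set θ := ⌊N ^ (1 - α / 2) / 2⌋₊
    rw [← hNdef] at hk
    have : (2 : ℝ) * k * (θ * θ) ≤ N * N := by
      calc (2 : ℝ) * k * (θ * θ) ≤ 2 * N ^ α * ((N ^ (1 - α / 2) / 2) * (N ^ (1 - α / 2) / 2)) := by gcongr
        _ = (N ^ α * N ^ (1 - α / 2) * N ^ (1 - α / 2)) / 2 := by ring
        _ = (N * N) / 2 := by
          rw [← Real.rpow_add hN0, ← Real.rpow_add hN0]
          congr 1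
          rw [show α + (1 - α / 2) + (1 - α / 2) = 2 by ring, Real.rpow_two]; ring
        _ ≤ N * N := half_le_self (mul_pos hN0 hN0).le
    rw [hNdef] at this
    exact_mod_cast this

end AndrPf

/-- Theorem 4.2, first part: for constants `0 < α < 2` and
`β < 3 - α/2`, for all large `m` (with `n = 2^m`), the modified Andreev
function is not the pointwise AND of at most `n^α` functions each of formula
complexity at most `n^β`. -/
theorem andreev_not_and_of_formulas (α β : ℝ) (hα0 : 0 < α) (hα2 : α < 2)
    (hβ : β < 3 - α / 2) :
    ∃ m₀ : ℕ, ∀ m ≥ m₀,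
      ¬ ∃ (k : ℕ) (h : Fin k → (AndrIdx m → Bool) → Bool),
          (k : ℝ) ≤ ((2 : ℝ) ^ m) ^ α ∧
          (∀ i, (Lc (h i) : ℝ) ≤ ((2 : ℝ) ^ m) ^ β) ∧
          (∀ z : AndrIdx m → Bool, (Andr m z = true ↔ ∀ i, h i z = true)) := by
  exact AndrPf.main_thm α β hα0 hα2 hβ
end
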